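/- arXiv:1401.0780 — 2 statements merged into one kernel-verified Lean document; each statement's English description precedes it below -/
import Mathlib

section
/- Suppose {X_{j,k}} and {X'_{j,k}} are two centered stationary Gaussian processes, each satisfying the standing assumption, with spectral measures ν = f·Leb + ν_d and ν' = f·Leb + ν'_d respectively, having the same absolutely continuous density f (but possibly different discrete components ν_d, ν'_d). If μ and μ' are deterministic probability measures such that ESD(W_N/√N) → μ and ESD(W'_N/√N) → μ' weakly in probability, where W_N and W'_N are the symmetrized matrices built from the two processes, then μ = μ'. -/
open MeasureTheory ProbabilityTheory Filter Real

noncomputable section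

/-- The square `(-π, π]²` on which the spectral measure lives. -/
def specBox : Set (ℝ × ℝ) := Set.Ioc (-π) π ×ˢ Set.Ioc (-π) π

/-- `(1/N) ∑_j g(λ_j(A))`, the integral of `g` against the empirical spectral
distribution of a symmetric `N × N` real matrix `A` (junk value `0` if `A` is
not symmetric). -/
def esdEval {N : ℕ} (A : Matrix (Fin N) (Fin N) ℝ) (g : ℝ → ℝ) : ℝ :=
  if hA : A.IsHermitian then (N : ℝ)⁻¹ * ∑ j, g (hA.eigenvalues j) else 0

/-- The (random) empirical spectral distributions of `A N` converge weakly in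
probability to the probability measure `μ`: for every bounded continuous `g`,
`∫ g d(ESD(A N)) → ∫ g dμ` in probability. -/
def ESDTendstoInProb {Ω : Type*} [MeasurableSpace Ω] (P : Measure Ω)
    (A : (N : ℕ) → Ω → Matrix (Fin N) (Fin N) ℝ) (μ : Measure ℝ) : Prop :=
  ∀ g : ℝ → ℝ, Continuous g → (∃ C, ∀ x, |g x| ≤ C) →
    ∀ ε > 0, Tendsto (fun N => P {ω | ε ≤ |esdEval (A N ω) g - ∫ x, g x ∂μ|})
      atTop (nhds 0)

/-- The symmetric matrix `W_N/√N`, where `W_N(i,j) = X_{i,j} + X_{j,i}`,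
`1 ≤ i,j ≤ N`. -/
def scaledW {Ω : Type*} (X : ℤ → ℤ → Ω → ℝ) (N : ℕ) (ω : Ω) :
    Matrix (Fin N) (Fin N) ℝ :=
  fun i j => (Real.sqrt N)⁻¹ *
    (X ((i : ℕ) + 1) ((j : ℕ) + 1) ω + X ((j : ℕ) + 1) ((i : ℕ) + 1) ω)

/-- A centered stationary Gaussian process indexed by `ℤ²` with positive
variance: every finite real linear combination is a centered Gaussian random
variable, and second moments are shift invariant. -/
structure StatGauss {Ω : Type*} [MeasurableSpace Ω] (P : Measure Ω)
    (X : ℤ → ℤ → Ω → ℝ) : Prop where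
  meas : ∀ j k, Measurable (X j k)
  gauss : ∀ c : (ℤ × ℤ) →₀ ℝ, ∃ v : NNReal,
    P.map (fun ω => ∑ p ∈ c.support, c p * X p.1 p.2 ω) = gaussianReal 0 v
  var_pos : 0 < ∫ ω, (X 0 0 ω) ^ 2 ∂P
  stat : ∀ j k u v : ℤ,
    ∫ ω, X j k ω * X (j + u) (k + v) ω ∂P = ∫ ω, X 0 0 ω * X u v ω ∂P

/-- The spectral measure `ν` of the process `X` (from the Herglotz
representation), together with the standing assumption of the paper:
`ν = ν_ac + ν_d`, where `ν_ac` is absolutely continuous with respect to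
Lebesgue measure with density `f ≥ 0` and `ν_d = νd` is discrete (supported on
a countable set). -/
structure SpectralDecomp {Ω : Type*} [MeasurableSpace Ω] (P : Measure Ω)
    (X : ℤ → ℤ → Ω → ℝ) (ν νd : Measure (ℝ × ℝ)) (f : ℝ × ℝ → ℝ) : Prop where
  finite : IsFiniteMeasure ν
  support : ν specBoxᶜ = 0
  herglotz : ∀ u v : ℤ,
    (∫ q, Complex.exp (Complex.I * ((u * q.1 + v * q.2 : ℝ) : ℂ)) ∂ν)
      = ((∫ ω, X 0 0 ω * X u v ω ∂P : ℝ) : ℂ)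
  f_nonneg : ∀ q, 0 ≤ f q
  f_meas : Measurable f
  discrete : ∃ s : Set (ℝ × ℝ), s.Countable ∧ νd sᶜ = 0
  decomp : ν = (volume.restrict specBox).withDensity
      (fun q => ENNReal.ofReal (f q)) + νd


def fro {m n : Type*} [Fintype m] [Fintype n] (D : Matrix m n ℝ) : ℝ := ∑ i, ∑ j, D i j ^ 2

lemma fro_nonneg {m n : Type*} [Fintype m] [Fintype n] (D : Matrix m n ℝ) : 0 ≤ fro D := by
  unfold fro; positivity

lemma fro_transpose {m n : Type*} [Fintype m] [Fintype n] (D : Matrix m n ℝ) :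
    fro D.transpose = fro D := by
  unfold fro; rw [Finset.sum_comm]; rfl

lemma fro_eq_trace {m n : Type*} [Fintype m] [Fintype n] (D : Matrix m n ℝ) :
    fro D = (D.transpose * D).trace := by
  unfold fro; rw [Finset.sum_comm]
  simp [Matrix.trace, Matrix.mul_apply, sq]

lemma fro_add_le {m n : Type*} [Fintype m] [Fintype n] (D E : Matrix m n ℝ) :
    fro (D + E) ≤ 2 * fro D + 2 * fro E := by
  unfold fro
  simp only [Finset.mul_sum, ← Finset.sum_add_distrib]
  refine Finset.sum_le_sum fun i _ => Finset.sum_le_sum fun j _ => ?_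
  simp only [Matrix.add_apply]
  nlinarith [sq_nonneg (D i j - E i j)]

lemma fro_neg {m n : Type*} [Fintype m] [Fintype n] (D : Matrix m n ℝ) :
    fro (-D) = fro D := by
  unfold fro; simp

lemma rank_add_le' {m n : Type*} [Fintype m] [Fintype n] (D E : Matrix m n ℝ) :
    (D + E).rank ≤ D.rank + E.rank := by
  unfold Matrix.rank
  rw [Matrix.mulVecLin_add]
  exact (Submodule.finrank_mono (LinearMap.range_add_le _ _)).trans
    (Submodule.finrank_add_le_finrank_add_finrank _ _)

lemma rank_neg' {m n : Type*} [Fintype m] [Fintype n] (D : Matrix m n ℝ) :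
    (-D).rank = D.rank := by
  unfold Matrix.rank
  have : (-D).mulVecLin = - D.mulVecLin := by ext; simp
  rw [this, LinearMap.range_neg]

lemma cfc_symm {N : ℕ} (g : ℝ → ℝ) (A : Matrix (Fin N) (Fin N) ℝ) :
    (cfc g A).transpose = cfc g A := by
  have := (cfc_predicate g A : IsSelfAdjoint (cfc g A))
  have h2 := this.star_eq
  rwa [Matrix.star_eq_conjTranspose, Matrix.conjTranspose_eq_transpose_of_trivial] at h2

lemma fro_cfc_mul {N : ℕ} {g : ℝ → ℝ} (hg : Continuous g) {M : ℝ} (hM : ∀ x, |g x| ≤ M)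
    {A : Matrix (Fin N) (Fin N) ℝ} (hA : A.IsHermitian) (D : Matrix (Fin N) (Fin N) ℝ) :
    fro (cfc g A * D) ≤ M ^ 2 * fro D := by
  have hA' : IsSelfAdjoint A := hA
  set h : ℝ → ℝ := fun x => Real.sqrt (M ^ 2 - g x ^ 2) with hh
  have hc : Continuous h := by fun_prop
  have e1 : cfc h A * cfc h A + cfc g A * cfc g A = (M ^ 2) • (1 : Matrix (Fin N) (Fin N) ℝ) := by
    rw [← cfc_mul h h A hc.continuousOn hc.continuousOn,
      ← cfc_mul g g A hg.continuousOn hg.continuousOn,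
      ← cfc_add A (fun x => h x * h x) (fun x => g x * g x) (by fun_prop) (by fun_prop)]
    have : (fun x => h x * h x + g x * g x) = fun _ => M ^ 2 := by
      funext x
      have := hM x
      have h0 : 0 ≤ M ^ 2 - g x ^ 2 := by
        rw [sub_nonneg]; exact sq_le_sq' (by linarith [abs_le.1 this]) (abs_le.1 this).2
      rw [hh]; simp only [Real.mul_self_sqrt h0]; ring
    rw [this, cfc_const _ A, Algebra.algebraMap_eq_smul_one]
  have e2 : fro (cfc h A * D) + fro (cfc g A * D) = M ^ 2 * fro D := by
    simp only [fro_eq_trace, Matrix.transpose_mul, cfc_symm]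
    rw [← Matrix.trace_add]
    have : D.transpose * cfc h A * (cfc h A * D) + D.transpose * cfc g A * (cfc g A * D)
      = D.transpose * (cfc h A * cfc h A + cfc g A * cfc g A) * D := by noncomm_ring
    rw [this, e1]
    simp
  linarith [fro_nonneg (cfc h A * D)]

lemma fro_mul_cfc {N : ℕ} {g : ℝ → ℝ} (hg : Continuous g) {M : ℝ} (hM : ∀ x, |g x| ≤ M)
    {A : Matrix (Fin N) (Fin N) ℝ} (hA : A.IsHermitian) (D : Matrix (Fin N) (Fin N) ℝ) :
    fro (D * cfc g A) ≤ M ^ 2 * fro D := by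
  rw [← fro_transpose, Matrix.transpose_mul, cfc_symm, ← fro_transpose D]
  exact fro_cfc_mul hg hM hA _

structure GoodFun (g : ℝ → ℝ) : Prop where
  cont : Continuous g
  bdd : ∃ M, ∀ x, |g x| ≤ M
  good : ∃ C : ℝ, 0 ≤ C ∧ ∀ (N : ℕ) (A B : Matrix (Fin N) (Fin N) ℝ), A.IsHermitian → B.IsHermitian →
    ((cfc g A - cfc g B).rank : ℝ) ≤ C * (A - B).rank ∧ fro (cfc g A - cfc g B) ≤ C * fro (A - B)

lemma GoodFun.const (c : ℝ) : GoodFun (fun _ => c) where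
  cont := continuous_const
  bdd := ⟨|c|, fun _ => le_rfl⟩
  good := by
    refine ⟨0, le_rfl, fun N A B hA hB => ?_⟩
    have hA' : IsSelfAdjoint A := hA
    have hB' : IsSelfAdjoint B := hB
    have h1 : cfc (fun _ : ℝ => c) A = algebraMap ℝ _ c := cfc_const c A hA'
    have h2 : cfc (fun _ : ℝ => c) B = algebraMap ℝ _ c := cfc_const c B hB'
    rw [h1, h2]
    simp [fro]

lemma GoodFun.add {g h : ℝ → ℝ} (hg : GoodFun g) (hh : GoodFun h) : GoodFun (fun x => g x + h x) where
  cont := hg.cont.add hh.cont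
  bdd := by
    obtain ⟨M, hM⟩ := hg.bdd
    obtain ⟨M', hM'⟩ := hh.bdd
    exact ⟨M + M', fun x => (abs_add_le _ _).trans (add_le_add (hM x) (hM' x))⟩
  good := by
    obtain ⟨C, hC0, hC⟩ := hg.good
    obtain ⟨C', hC0', hC'⟩ := hh.good
    refine ⟨2 * C + 2 * C', by positivity, fun N A B hA hB => ?_⟩
    obtain ⟨r1, f1⟩ := hC N A B hA hB
    obtain ⟨r2, f2⟩ := hC' N A B hA hB
    rw [cfc_add A g h hg.cont.continuousOn hh.cont.continuousOn,
      cfc_add B g h hg.cont.continuousOn hh.cont.continuousOn, add_sub_add_comm]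
    constructor
    · have : ((cfc g A - cfc g B + (cfc h A - cfc h B)).rank : ℝ) ≤
        (cfc g A - cfc g B).rank + (cfc h A - cfc h B).rank := by exact_mod_cast rank_add_le' _ _
      have h0 : (0:ℝ) ≤ (A - B).rank := by positivity
      nlinarith
    · have := fro_add_le (cfc g A - cfc g B) (cfc h A - cfc h B)
      nlinarith

lemma GoodFun.mul {g h : ℝ → ℝ} (hg : GoodFun g) (hh : GoodFun h) : GoodFun (fun x => g x * h x) where
  cont := hg.cont.mul hh.cont
  bdd := by
    obtain ⟨M, hM⟩ := hg.bdd
    obtain ⟨M', hM'⟩ := hh.bdd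
    refine ⟨M * M', fun x => ?_⟩
    rw [abs_mul]
    exact mul_le_mul (hM x) (hM' x) (abs_nonneg _) ((abs_nonneg _).trans (hM x))
  good := by
    obtain ⟨C, hC0, hC⟩ := hg.good
    obtain ⟨C', hC0', hC'⟩ := hh.good
    obtain ⟨M, hM⟩ := hg.bdd
    obtain ⟨M', hM'⟩ := hh.bdd
    refine ⟨(C + C') + (2 * (M' ^ 2 * C) + 2 * (M ^ 2 * C')), by positivity, fun N A B hA hB => ?_⟩
    obtain ⟨r1, f1⟩ := hC N A B hA hB
    obtain ⟨r2, f2⟩ := hC' N A B hA hB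
    rw [cfc_mul g h A hg.cont.continuousOn hh.cont.continuousOn,
      cfc_mul g h B hg.cont.continuousOn hh.cont.continuousOn]
    have e : cfc g A * cfc h A - cfc g B * cfc h B =
      (cfc g A - cfc g B) * cfc h A + cfc g B * (cfc h A - cfc h B) := by noncomm_ring
    rw [e]
    have h0 : (0:ℝ) ≤ (A - B).rank := by positivity
    have hf0 := fro_nonneg (A - B)
    have p1 : 0 ≤ M' ^ 2 * C := by positivity
    have p2 : 0 ≤ M ^ 2 * C' := by positivity
    constructor
    · have k1 : (((cfc g A - cfc g B) * cfc h A + cfc g B * (cfc h A - cfc h B)).rank : ℝ) ≤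
        ((cfc g A - cfc g B) * cfc h A).rank + (cfc g B * (cfc h A - cfc h B)).rank := by
          exact_mod_cast rank_add_le' _ _
      have k2 : (((cfc g A - cfc g B) * cfc h A).rank : ℝ) ≤ (cfc g A - cfc g B).rank := by
        exact_mod_cast Matrix.rank_mul_le_left _ _
      have k3 : ((cfc g B * (cfc h A - cfc h B)).rank : ℝ) ≤ (cfc h A - cfc h B).rank := by
        exact_mod_cast Matrix.rank_mul_le_right _ _
      have := mul_nonneg p1 h0
      have := mul_nonneg p2 h0
      nlinarith
    · have k1 := fro_add_le ((cfc g A - cfc g B) * cfc h A) (cfc g B * (cfc h A - cfc h B))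
      have k2 := fro_mul_cfc hh.cont hM' hA (cfc g A - cfc g B)
      have k3 := fro_cfc_mul hg.cont hM hB (cfc h A - cfc h B)
      have k4 := mul_le_mul_of_nonneg_left f1 (sq_nonneg M')
      have k5 := mul_le_mul_of_nonneg_left f2 (sq_nonneg M)
      have := mul_nonneg hC0 hf0
      have := mul_nonneg hC0' hf0
      nlinarith

def g1 (x : ℝ) : ℝ := (1 + x ^ 2)⁻¹
def g2 (x : ℝ) : ℝ := x * (1 + x ^ 2)⁻¹

lemma g1_cont : Continuous g1 := by
  unfold g1; exact Continuous.inv₀ (by fun_prop) (fun x => by positivity)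
lemma g2_cont : Continuous g2 := continuous_id.mul g1_cont
lemma g1_bdd (x : ℝ) : |g1 x| ≤ 1 := by
  unfold g1
  rw [abs_of_nonneg (by positivity)]
  exact inv_le_one_of_one_le₀ (by nlinarith [sq_nonneg x])
lemma g2_bdd (x : ℝ) : |g2 x| ≤ 1 := by
  unfold g2
  rw [abs_mul, abs_of_nonneg (a := (1 + x ^ 2)⁻¹) (by positivity), ← div_eq_mul_inv,
    div_le_one (by positivity)]
  nlinarith [sq_nonneg (|x| - 1), sq_abs x]

lemma cfc_g2 {N : ℕ} {A : Matrix (Fin N) (Fin N) ℝ} (hA : A.IsHermitian) :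
    cfc g2 A = A * cfc g1 A ∧ cfc g2 A = cfc g1 A * A ∧ cfc g1 A + cfc g1 A * A * A = 1
      ∧ cfc g1 A + A * A * cfc g1 A = 1 := by
  have hA' : IsSelfAdjoint A := hA
  have h1 : cfc g2 A = A * cfc g1 A := by
    have := cfc_mul (fun x => x) g1 A continuousOn_id g1_cont.continuousOn
    rw [cfc_id' ℝ A] at this
    exact this
  have h2 : cfc g2 A = cfc g1 A * A := by
    have := cfc_mul g1 (fun x => x) A g1_cont.continuousOn continuousOn_id
    rw [cfc_id' ℝ A] at this
    rw [← this]; congr 1; funext x; simp [g1, g2, mul_comm]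
  have h3 : cfc g1 A + cfc g1 A * A * A = 1 := by
    have := cfc_mul g2 (fun x => x) A g2_cont.continuousOn continuousOn_id
    rw [cfc_id' ℝ A] at this
    rw [← h2, ← this, ← cfc_add A g1 (fun x => g2 x * x) g1_cont.continuousOn
      (g2_cont.mul continuous_id).continuousOn]
    rw [← cfc_const_one ℝ A]
    congr 1; funext x; simp only [g1, g2]; field_simp
  refine ⟨h1, h2, h3, ?_⟩
  rw [mul_assoc, ← h1, h2, ← mul_assoc, ← h1, h2, h3]

lemma rank_aux {N : ℕ} (P Q P' Q' D : Matrix (Fin N) (Fin N) ℝ) :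
    ((P * D * Q + P' * D * Q').rank : ℝ) ≤ 8 * D.rank := by
  have h1 := rank_add_le' (P * D * Q) (P' * D * Q')
  have h2 : (P * D * Q).rank ≤ D.rank :=
    (Matrix.rank_mul_le_left _ _).trans (Matrix.rank_mul_le_right _ _)
  have h3 : (P' * D * Q').rank ≤ D.rank :=
    (Matrix.rank_mul_le_left _ _).trans (Matrix.rank_mul_le_right _ _)
  have : (P * D * Q + P' * D * Q').rank ≤ 8 * D.rank := by omega
  exact_mod_cast this

lemma fro_aux {N : ℕ} {a b c d : ℝ → ℝ} (ha : Continuous a) (hb : Continuous b)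
    (hc : Continuous c) (hd : Continuous d) (ha' : ∀ x, |a x| ≤ 1) (hb' : ∀ x, |b x| ≤ 1)
    (hc' : ∀ x, |c x| ≤ 1) (hd' : ∀ x, |d x| ≤ 1) {A B : Matrix (Fin N) (Fin N) ℝ}
    (hA : A.IsHermitian) (hB : B.IsHermitian) (D : Matrix (Fin N) (Fin N) ℝ) :
    fro (cfc a A * D * cfc b B + cfc c A * D * cfc d B) ≤ 8 * fro D := by
  have h1 := fro_add_le (cfc a A * D * cfc b B) (cfc c A * D * cfc d B)
  have h2 := fro_mul_cfc hb hb' hB (cfc a A * D)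
  have h3 := fro_mul_cfc hd hd' hB (cfc c A * D)
  have h4 := fro_cfc_mul ha ha' hA D
  have h5 := fro_cfc_mul hc hc' hA D
  have := fro_nonneg D
  linarith

lemma goodFun_g1 : GoodFun g1 where
  cont := g1_cont
  bdd := ⟨1, g1_bdd⟩
  good := by
    refine ⟨8, by norm_num, fun N A B hA hB => ?_⟩
    obtain ⟨a1, a2, a3, a4⟩ := cfc_g2 hA
    obtain ⟨b1, b2, b3, b4⟩ := cfc_g2 hB
    have e : cfc g1 A - cfc g1 B =
        cfc g2 A * (-(A - B)) * cfc g1 B + cfc g1 A * (-(A - B)) * cfc g2 B := by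
      calc cfc g1 A - cfc g1 B = cfc g1 A * (cfc g1 B + B * B * cfc g1 B)
          - (cfc g1 A + cfc g1 A * A * A) * cfc g1 B := by rw [b4, a3]; simp
        _ = _ := by rw [a2, b1]; noncomm_ring
    rw [e, ← rank_neg' (A - B), ← fro_neg (A - B)]
    exact ⟨rank_aux _ _ _ _ _, fro_aux g2_cont g1_cont g1_cont g2_cont g2_bdd g1_bdd g1_bdd g2_bdd
      hA hB _⟩

lemma goodFun_g2 : GoodFun g2 where
  cont := g2_cont
  bdd := ⟨1, g2_bdd⟩
  good := by
    refine ⟨8, by norm_num, fun N A B hA hB => ?_⟩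
    obtain ⟨a1, a2, a3, a4⟩ := cfc_g2 hA
    obtain ⟨b1, b2, b3, b4⟩ := cfc_g2 hB
    have hn : cfc (fun x => - g2 x) A = - cfc g2 A := cfc_neg g2 A
    have e : cfc g2 A - cfc g2 B =
        cfc g1 A * (A - B) * cfc g1 B + cfc (fun x => - g2 x) A * (A - B) * cfc g2 B := by
      calc cfc g2 A - cfc g2 B = cfc g1 A * A * (cfc g1 B + B * B * cfc g1 B)
          - (cfc g1 A + cfc g1 A * A * A) * (B * cfc g1 B) := by rw [b4, a3, a2, b1]; simp
        _ = _ := by rw [hn, a2, b1]; noncomm_ring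
    rw [e]
    exact ⟨rank_aux _ _ _ _ _, fro_aux (c := fun x => - g2 x) g1_cont g1_cont g2_cont.neg g2_cont g1_bdd g1_bdd
      (fun x => by rw [abs_neg]; exact g2_bdd x) g2_bdd
      hA hB _⟩

lemma esdEval_eq {N : ℕ} {A : Matrix (Fin N) (Fin N) ℝ} (hA : A.IsHermitian) (g : ℝ → ℝ) :
    esdEval A g = (N : ℝ)⁻¹ * (cfc g A).trace := by
  unfold esdEval
  rw [dif_pos hA, hA.cfc_eq, Matrix.IsHermitian.cfc, Unitary.conjStarAlgAut_apply,
    Matrix.trace_mul_comm, ← mul_assoc]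
  simp [Matrix.trace]

lemma esdEval_bdd {N : ℕ} (A : Matrix (Fin N) (Fin N) ℝ) {g : ℝ → ℝ} {M : ℝ}
    (hM : ∀ x, |g x| ≤ M) : |esdEval A g| ≤ M := by
  have hM0 : 0 ≤ M := (abs_nonneg _).trans (hM 0)
  unfold esdEval
  split_ifs with hA
  · rw [abs_mul, abs_of_nonneg (a := (N : ℝ)⁻¹) (by positivity)]
    have h : |∑ j, g (hA.eigenvalues j)| ≤ N * M := by
      refine (Finset.abs_sum_le_sum_abs _ _).trans ?_
      refine (Finset.sum_le_sum fun j _ => hM _).trans ?_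
      simp
    rcases Nat.eq_zero_or_pos N with h0 | h0
    · subst h0; simpa using hM0
    · rw [inv_mul_le_iff₀ (by exact_mod_cast h0)]; exact h
  · simpa using hM0

lemma trace_sq_le {N : ℕ} (D : Matrix (Fin N) (Fin N) ℝ) : D.trace ^ 2 ≤ N * fro D := by
  have h := sq_sum_le_card_mul_sum_sq (s := Finset.univ) (f := fun i : Fin N => D i i)
  simp only [Finset.card_univ, Fintype.card_fin] at h
  refine h.trans (mul_le_mul_of_nonneg_left ?_ (by positivity))
  unfold fro
  exact Finset.sum_le_sum fun i _ =>
    Finset.single_le_sum (f := fun j => D i j ^ 2) (fun j _ => sq_nonneg _) (Finset.mem_univ i)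

lemma cfc_quad_le {N : ℕ} {g : ℝ → ℝ} (hg : Continuous g) {M : ℝ} (hM : ∀ x, g x ≤ M)
    {A : Matrix (Fin N) (Fin N) ℝ} (hA : A.IsHermitian) (v : Fin N → ℝ) :
    v ⬝ᵥ (cfc g A).mulVec v ≤ M * (v ⬝ᵥ v) := by
  have hA' : IsSelfAdjoint A := hA
  set h : ℝ → ℝ := fun x => Real.sqrt (M - g x) with hh
  have hc : Continuous h := by fun_prop
  have e1 : cfc h A * cfc h A + cfc g A = M • (1 : Matrix (Fin N) (Fin N) ℝ) := by
    rw [← cfc_mul h h A hc.continuousOn hc.continuousOn,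
      ← cfc_add A (fun x => h x * h x) g (by fun_prop) (by fun_prop)]
    have : (fun x => h x * h x + g x) = fun _ => M := by
      funext x
      have h0 : 0 ≤ M - g x := by linarith [hM x]
      rw [hh]; simp only [Real.mul_self_sqrt h0]; ring
    rw [this, cfc_const _ A, Algebra.algebraMap_eq_smul_one]
  have e2 : v ⬝ᵥ ((cfc h A * cfc h A + cfc g A).mulVec v) = M * (v ⬝ᵥ v) := by
    rw [e1]; simp [Matrix.smul_mulVec]
  rw [Matrix.add_mulVec, dotProduct_add, ← Matrix.mulVec_mulVec, Matrix.dotProduct_mulVec,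
    ← Matrix.mulVec_transpose, cfc_symm] at e2
  have : 0 ≤ (cfc h A).mulVec v ⬝ᵥ (cfc h A).mulVec v := by
    unfold dotProduct
    exact Finset.sum_nonneg fun i _ => mul_self_nonneg _
  linarith

lemma cfc_quad_abs {N : ℕ} {g : ℝ → ℝ} (hg : Continuous g) {M : ℝ} (hM : ∀ x, |g x| ≤ M)
    {A : Matrix (Fin N) (Fin N) ℝ} (hA : A.IsHermitian) (v : Fin N → ℝ) :
    |v ⬝ᵥ (cfc g A).mulVec v| ≤ M * (v ⬝ᵥ v) := by
  have h1 := cfc_quad_le hg (fun x => (abs_le.1 (hM x)).2) hA v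
  have h2 := cfc_quad_le (g := fun x => - g x) hg.neg
    (fun x => by linarith [(abs_le.1 (hM x)).1] : ∀ x, - g x ≤ M) hA v
  have hn : cfc (fun x => - g x) A = - cfc g A := cfc_neg g A
  rw [hn, Matrix.neg_mulVec, dotProduct_neg] at h2
  exact abs_le.2 ⟨by linarith, h1⟩

lemma trace_rank_le {N : ℕ} {g : ℝ → ℝ} (hg : Continuous g) {M : ℝ} (hM : ∀ x, |g x| ≤ M)
    {A B : Matrix (Fin N) (Fin N) ℝ} (hA : A.IsHermitian) (hB : B.IsHermitian) :
    |(cfc g A - cfc g B).trace| ≤ 2 * M * (cfc g A - cfc g B).rank := by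
  have hD : (cfc g A - cfc g B).IsHermitian := by
    unfold Matrix.IsHermitian
    rw [Matrix.conjTranspose_eq_transpose_of_trivial, Matrix.transpose_sub, cfc_symm, cfc_symm]
  have hb : ∀ i, |hD.eigenvalues i| ≤ if hD.eigenvalues i ≠ 0 then 2 * M else 0 := by
    intro i
    split_ifs with h
    · rw [hD.eigenvalues_eq i]
      set v := (hD.eigenvectorBasis i).ofLp with hv
      have hvv : v ⬝ᵥ v = 1 := by
        have h1 := hD.eigenvectorBasis.orthonormal.1 i
        have h2 : inner ℝ (hD.eigenvectorBasis i) (hD.eigenvectorBasis i) = (1 : ℝ) := by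
          rw [real_inner_self_eq_norm_sq, h1]; norm_num
        simp only [PiLp.inner_apply, RCLike.inner_apply, conj_trivial] at h2
        exact h2
      have h1 := cfc_quad_abs hg hM hA v
      have h2 := cfc_quad_abs hg hM hB v
      rw [hvv] at h1 h2
      simp only [star_trivial, RCLike.re_to_real, Matrix.sub_mulVec, dotProduct_sub]
      exact (abs_sub _ _).trans (by linarith)
    · push Not at h
      simp [h]
  have ht : (cfc g A - cfc g B).trace = ∑ i, hD.eigenvalues i := by
    simpa using hD.trace_eq_sum_eigenvalues
  rw [ht, hD.rank_eq_card_non_zero_eigs]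
  refine (Finset.abs_sum_le_sum_abs _ _).trans ((Finset.sum_le_sum fun i _ => hb i).trans ?_)
  rw [← Finset.sum_filter, Finset.sum_const, nsmul_eq_mul, Fintype.card_subtype, mul_comm]

/-- the two comparison bounds -/
lemma GoodFun.esd {g : ℝ → ℝ} (hg : GoodFun g) : ∃ C : ℝ, 0 ≤ C ∧
    ∀ (N : ℕ) (A B : Matrix (Fin N) (Fin N) ℝ), A.IsHermitian → B.IsHermitian →
    |esdEval A g - esdEval B g| ≤ C * ((N : ℝ)⁻¹ * (A - B).rank) ∧
    (esdEval A g - esdEval B g) ^ 2 ≤ C * ((N : ℝ)⁻¹ * fro (A - B)) := by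
  obtain ⟨C, hC0, hC⟩ := hg.good
  obtain ⟨M, hM⟩ := hg.bdd
  have hM0 : 0 ≤ M := (abs_nonneg _).trans (hM 0)
  refine ⟨2 * M * C + C, by positivity, fun N A B hA hB => ?_⟩
  obtain ⟨h1, h2⟩ := hC N A B hA hB
  rw [esdEval_eq hA, esdEval_eq hB, ← mul_sub, ← Matrix.trace_sub]
  have hN : (0:ℝ) ≤ (N : ℝ)⁻¹ := by positivity
  constructor
  · rw [abs_mul, abs_of_nonneg hN, mul_left_comm]
    refine mul_le_mul_of_nonneg_left ?_ hN
    refine (trace_rank_le hg.cont hM hA hB).trans ?_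
    have h0 : (0:ℝ) ≤ (A - B).rank := by positivity
    have := mul_nonneg hC0 h0
    nlinarith [mul_le_mul_of_nonneg_left h1 (by positivity : 0 ≤ 2 * M)]
  · have h3 := trace_sq_le (cfc g A - cfc g B)
    rcases Nat.eq_zero_or_pos N with h0 | h0
    · subst h0; simp
    · have hN' : (0:ℝ) < N := by exact_mod_cast h0
      have h4 : (cfc g A - cfc g B).trace ^ 2 ≤ N * ((2 * M * C + C) * fro (A - B)) := by
        refine h3.trans (mul_le_mul_of_nonneg_left (h2.trans ?_) hN'.le)
        have := mul_nonneg (by positivity : 0 ≤ 2 * M * C) (fro_nonneg (A - B))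
        linarith
      calc ((N:ℝ)⁻¹ * (cfc g A - cfc g B).trace) ^ 2
          = (N:ℝ)⁻¹ ^ 2 * (cfc g A - cfc g B).trace ^ 2 := by ring
        _ ≤ (N:ℝ)⁻¹ ^ 2 * (N * ((2 * M * C + C) * fro (A - B))) :=
          mul_le_mul_of_nonneg_left h4 (by positivity)
        _ = _ := by field_simp

lemma ext_goodFun (μ μ' : Measure ℝ) [IsProbabilityMeasure μ] [IsProbabilityMeasure μ']
    (h : ∀ g, GoodFun g → ∫ x, g x ∂μ = ∫ x, g x ∂μ') : μ = μ' := by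
  let S : StarSubalgebra ℝ (BoundedContinuousFunction ℝ ℝ) :=
    { carrier := {g | GoodFun g}
      mul_mem' := fun {a b} ha hb => GoodFun.mul ha hb
      add_mem' := fun {a b} ha hb => GoodFun.add ha hb
      algebraMap_mem' := fun r => by
        have : ((algebraMap ℝ (BoundedContinuousFunction ℝ ℝ) r : BoundedContinuousFunction ℝ ℝ) :
          ℝ → ℝ) = fun _ => r := by
          funext x; simp [BoundedContinuousFunction.algebraMap_apply]
        simp only [Set.mem_ofPred_eq, this]
        exact GoodFun.const r
      star_mem' := fun {a} ha => by
        have : ((star a : BoundedContinuousFunction ℝ ℝ) : ℝ → ℝ) = a := by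
          funext x; simp
        simp only [Set.mem_ofPred_eq, this]
        exact ha }
  refine ext_of_forall_mem_subalgebra_integral_eq_of_polish (𝕜 := ℝ) (A := S) ?_ (fun g hg => h g hg)
  let G1 : BoundedContinuousFunction ℝ ℝ :=
    BoundedContinuousFunction.ofNormedAddCommGroup g1 g1_cont 1 g1_bdd
  let G2 : BoundedContinuousFunction ℝ ℝ :=
    BoundedContinuousFunction.ofNormedAddCommGroup g2 g2_cont 1 g2_bdd
  intro x y hxy
  by_cases h1 : g1 x = g1 y
  · refine ⟨g2, ⟨BoundedContinuousFunction.toContinuousMapStarₐ ℝ G2, ⟨G2, goodFun_g2, rfl⟩, rfl⟩, ?_⟩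
    intro h2
    unfold g2 at h2
    change x * g1 x = y * g1 y at h2
    rw [h1] at h2
    have : g1 y ≠ 0 := by unfold g1; positivity
    exact hxy (mul_right_cancel₀ this h2)
  · exact ⟨g1, ⟨BoundedContinuousFunction.toContinuousMapStarₐ ℝ G1, ⟨G1, goodFun_g1, rfl⟩, rfl⟩, h1⟩

abbrev EN (N : ℕ) := EuclideanSpace ℝ (Fin N × Fin N)

def phase {N : ℕ} (p : Fin N × Fin N) (θ : ℝ × ℝ) : ℝ :=
  (((p.1 : ℕ) : ℝ) + 1) * θ.1 + (((p.2 : ℕ) : ℝ) + 1) * θ.2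

lemma phase_cont {N : ℕ} (p : Fin N × Fin N) : Continuous (phase p) := by
  unfold phase; fun_prop

def Qf {N : ℕ} (c : EN N) (θ : ℝ × ℝ) : ℝ :=
  (∑ p, c p * Real.cos (phase p θ)) ^ 2 + (∑ p, c p * Real.sin (phase p θ)) ^ 2

lemma integrable_cos_phase {N : ℕ} (ρ : Measure (ℝ × ℝ)) [IsFiniteMeasure ρ]
    (p q : Fin N × Fin N) : Integrable (fun θ => Real.cos (phase q θ - phase p θ)) ρ := by
  refine Integrable.of_bound (C := 1) ?_ (Eventually.of_forall fun θ => ?_)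
  · exact (Real.continuous_cos.comp ((phase_cont q).sub (phase_cont p))).aestronglyMeasurable
  · exact Real.abs_cos_le_one _

lemma Qf_eq {N : ℕ} (c : EN N) (θ : ℝ × ℝ) :
    Qf c θ = ∑ p, ∑ q, c p * c q * Real.cos (phase q θ - phase p θ) := by
  unfold Qf
  rw [sq, sq, Finset.sum_mul_sum, Finset.sum_mul_sum, ← Finset.sum_add_distrib]
  refine Finset.sum_congr rfl fun p _ => ?_
  rw [← Finset.sum_add_distrib]
  refine Finset.sum_congr rfl fun q _ => ?_
  rw [Real.cos_sub]; ring

lemma integrable_Qf {N : ℕ} (c : EN N) (ρ : Measure (ℝ × ℝ)) [IsFiniteMeasure ρ] :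
    Integrable (Qf c) ρ := by
  have : Qf c = fun θ => ∑ p, ∑ q, c p * c q * Real.cos (phase q θ - phase p θ) :=
    funext (Qf_eq c)
  rw [this]
  exact integrable_finsetSum _ fun p _ => integrable_finsetSum _ fun q _ =>
    (integrable_cos_phase ρ p q).const_mul _

lemma integral_Qf {N : ℕ} (c : EN N) (ρ : Measure (ℝ × ℝ)) [IsFiniteMeasure ρ] :
    ∫ θ, Qf c θ ∂ρ = ∑ p, ∑ q, c p * c q * ∫ θ, Real.cos (phase q θ - phase p θ) ∂ρ := by
  simp_rw [Qf_eq]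
  rw [integral_finsetSum _ fun p _ => integrable_finsetSum _ fun q _ =>
    (integrable_cos_phase ρ p q).const_mul _]
  refine Finset.sum_congr rfl fun p _ => ?_
  rw [integral_finsetSum _ fun q _ => (integrable_cos_phase ρ p q).const_mul _]
  refine Finset.sum_congr rfl fun q _ => ?_
  rw [integral_const_mul]

def IsG {N : ℕ} (m : Measure (EN N)) (ρ : Measure (ℝ × ℝ)) : Prop :=
  ∀ c : EN N, charFun m c = ((Real.exp (-(∫ θ, Qf c θ ∂ρ) / 2) : ℝ) : ℂ)

lemma IsG.conv {N : ℕ} {m m' : Measure (EN N)} {ρ ρ' : Measure (ℝ × ℝ)} [IsProbabilityMeasure m]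
    [IsProbabilityMeasure m'] [IsFiniteMeasure ρ] [IsFiniteMeasure ρ'] (h : IsG m ρ)
    (h' : IsG m' ρ') : IsG (m.conv m') (ρ + ρ') := by
  intro c
  rw [charFun_conv, h c, h' c, integral_add_measure (integrable_Qf c ρ) (integrable_Qf c ρ'),
    ← Complex.ofReal_mul, ← Real.exp_add]
  congr 2; ring

lemma IsG.unique {N : ℕ} {m m' : Measure (EN N)} {ρ : Measure (ℝ × ℝ)} [IsProbabilityMeasure m]
    [IsProbabilityMeasure m'] (h : IsG m ρ) (h' : IsG m' ρ) : m = m' :=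
  Measure.ext_of_charFun (funext fun c => by rw [h c, h' c])

def covMat (N : ℕ) (ρ : Measure (ℝ × ℝ)) : Matrix (Fin N × Fin N) (Fin N × Fin N) ℝ :=
  fun p q => ∫ θ, Real.cos (phase q θ - phase p θ) ∂ρ

lemma covMat_quad {N : ℕ} (ρ : Measure (ℝ × ℝ)) [IsFiniteMeasure ρ] (c : EN N) :
    c.ofLp ⬝ᵥ (covMat N ρ).mulVec c.ofLp = ∫ θ, Qf c θ ∂ρ := by
  rw [integral_Qf]
  simp only [dotProduct, Matrix.mulVec, covMat, Finset.mul_sum]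
  refine Finset.sum_congr rfl fun p _ => Finset.sum_congr rfl fun q _ => ?_
  ring

lemma covMat_posSemidef {N : ℕ} (ρ : Measure (ℝ × ℝ)) [IsFiniteMeasure ρ] :
    (covMat N ρ).PosSemidef := by
  refine Matrix.PosSemidef.of_dotProduct_mulVec_nonneg ?_ fun x => ?_
  · ext p q
    simp only [covMat, Matrix.conjTranspose_apply, star_trivial]
    congr 1; funext θ; rw [← Real.cos_neg]; congr 1; ring
  · have := covMat_quad ρ (WithLp.toLp 2 x : EN N)
    simp only [star_trivial]
    rw [this]
    exact integral_nonneg fun θ => by unfold Qf; positivity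

lemma exists_IsG {N : ℕ} (ρ : Measure (ℝ × ℝ)) [IsFiniteMeasure ρ] :
    ∃ m : Measure (EN N), IsProbabilityMeasure m ∧ IsG m ρ ∧
      ∀ p, Integrable (fun x : EN N => x p ^ 2) m ∧ ∫ x, x p ^ 2 ∂m = ρ.real Set.univ := by
  refine ⟨multivariateGaussian 0 (covMat N ρ), inferInstance, ?_, fun p => ?_⟩
  · intro c
    rw [charFun_multivariateGaussian (covMat_posSemidef ρ), covMat_quad]
    push_cast
    congr 1
    simp
    ring
  · have hm : MemLp (fun x : EN N => x p) 2 (multivariateGaussian 0 (covMat N ρ)) := by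
      have := (IsGaussian.memLp_two_id (μ := multivariateGaussian (0 : EN N) (covMat N ρ)))
      exact (EuclideanSpace.proj (𝕜 := ℝ) p : EN N →L[ℝ] ℝ).comp_memLp' this
    refine ⟨hm.integrable_sq, ?_⟩
    have h1 := variance_eval_multivariateGaussian (μ := 0) (covMat_posSemidef (N := N) ρ) p
    have h0 : ∫ x : EN N, x p ∂(multivariateGaussian 0 (covMat N ρ)) = 0 := by
      have := (measurePreserving_eval_multivariateGaussian (μ := 0)
        (covMat_posSemidef (N := N) ρ) (i := p))
      have h2 := integral_map (μ := multivariateGaussian 0 (covMat N ρ)) (φ := fun x : EN N => x p)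
        this.measurable.aemeasurable (f := fun y : ℝ => y) (by fun_prop)
      rw [← h2, this.map_eq]
      simp
    rw [variance_eq_integral (by fun_prop), h0] at h1
    simp only [sub_zero] at h1
    rw [h1]
    simp [covMat]

lemma isG_law {Ω : Type} [MeasurableSpace Ω] (P : Measure Ω) [IsProbabilityMeasure P]
    (X : ℤ → ℤ → Ω → ℝ) (ν νd : Measure (ℝ × ℝ)) (f : ℝ × ℝ → ℝ)
    (hX : StatGauss P X) (hν : SpectralDecomp P X ν νd f) (N : ℕ) :
    IsG (P.map (fun ω => (WithLp.toLp 2 fun p : Fin N × Fin N =>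
      X ((p.1 : ℕ) + 1) ((p.2 : ℕ) + 1) ω : EN N))) ν := by
  haveI := hν.finite
  intro c
  set Y : Fin N × Fin N → Ω → ℝ := fun p => X ((p.1 : ℕ) + 1) ((p.2 : ℕ) + 1) with hY
  have hYm : ∀ p, Measurable (Y p) := fun p => hX.meas _ _
  have hΦ : Measurable (fun ω => (WithLp.toLp 2 fun p : Fin N × Fin N => Y p ω : EN N)) := by
    fun_prop
  -- square integrability
  have hsingle : ∀ j k, MemLp (X j k) 2 P := by
    intro j k
    obtain ⟨v, hv⟩ := hX.gauss (Finsupp.single (j, k) 1)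
    have e : (fun ω => ∑ p ∈ (Finsupp.single (j, k) (1:ℝ)).support,
        (Finsupp.single (j, k) (1:ℝ)) p * X p.1 p.2 ω) = X j k := by
      funext ω
      rw [Finsupp.support_single_ne_zero _ one_ne_zero]
      simp
    rw [e] at hv
    have h := memLp_id_gaussianReal (μ := 0) (v := v) 2
    rw [← hv] at h
    exact (memLp_map_measure_iff (by fun_prop) (hX.meas j k).aemeasurable).1 h
  have hY2 : ∀ p, MemLp (Y p) 2 P := fun p => hsingle _ _
  have hcov : ∀ p q, ∫ ω, Y p ω * Y q ω ∂P = ∫ θ, Real.cos (phase q θ - phase p θ) ∂ν := by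
    intro p q
    have h1 := hX.stat ((p.1 : ℕ) + 1) ((p.2 : ℕ) + 1)
      (((q.1 : ℕ) : ℤ) - ((p.1 : ℕ) : ℤ)) (((q.2 : ℕ) : ℤ) - ((p.2 : ℕ) : ℤ))
    have h2 := hν.herglotz (((q.1 : ℕ) : ℤ) - ((p.1 : ℕ) : ℤ)) (((q.2 : ℕ) : ℤ) - ((p.2 : ℕ) : ℤ))
    have h3 : ∫ ω, Y p ω * Y q ω ∂P = ∫ ω, X 0 0 ω * X (((q.1 : ℕ) : ℤ) - ((p.1 : ℕ) : ℤ))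
        (((q.2 : ℕ) : ℤ) - ((p.2 : ℕ) : ℤ)) ω ∂P := by
      rw [← h1]
      have e1 : ((p.1 : ℕ) : ℤ) + 1 + (((q.1 : ℕ) : ℤ) - ((p.1 : ℕ) : ℤ)) = ((q.1 : ℕ) : ℤ) + 1 := by
        ring
      have e2 : ((p.2 : ℕ) : ℤ) + 1 + (((q.2 : ℕ) : ℤ) - ((p.2 : ℕ) : ℤ)) = ((q.2 : ℕ) : ℤ) + 1 := by
        ring
      rw [e1, e2]
    rw [h3]
    have h4 := congrArg Complex.re h2
    rw [Complex.ofReal_re] at h4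
    rw [← h4]
    have hint : Integrable (fun θ : ℝ × ℝ => Complex.exp (Complex.I *
      (((((q.1 : ℕ) : ℤ) - ((p.1 : ℕ) : ℤ) : ℤ) * θ.1 +
        ((((q.2 : ℕ) : ℤ) - ((p.2 : ℕ) : ℤ) : ℤ) : ℝ) * θ.2 : ℝ) : ℂ))) ν := by
      refine Integrable.of_bound (C := 1) ?_ (Eventually.of_forall fun θ => ?_)
      · exact Continuous.aestronglyMeasurable (by fun_prop)
      · rw [mul_comm, Complex.norm_exp_ofReal_mul_I]
    have h5 := Complex.reCLM.integral_comp_comm hint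
    simp only [Complex.reCLM_apply] at h5
    rw [← h5]
    congr 1; funext θ
    rw [mul_comm Complex.I, Complex.exp_ofReal_mul_I_re]
    congr 1
    unfold phase; push_cast; ring
  -- Gaussian combination
  let e : Fin N × Fin N → ℤ × ℤ := fun p => (((p.1 : ℕ) : ℤ) + 1, ((p.2 : ℕ) : ℤ) + 1)
  obtain ⟨v, hv⟩ := hX.gauss (∑ p, Finsupp.single (e p) (c p))
  have hL : (fun ω => ∑ r ∈ (∑ p, Finsupp.single (e p) (c p)).support,
      (∑ p, Finsupp.single (e p) (c p)) r * X r.1 r.2 ω) = fun ω => ∑ p, c p * Y p ω := by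
    funext ω
    have := Finsupp.sum_finsetSum_index (s := Finset.univ)
      (g := fun p => Finsupp.single (e p) (c p)) (h := fun r t => t * X r.1 r.2 ω)
      (fun _ => by simp) (fun _ _ _ => by ring)
    have h2 : (∑ r ∈ (∑ p, Finsupp.single (e p) (c p)).support,
      (∑ p, Finsupp.single (e p) (c p)) r * X r.1 r.2 ω) =
      (∑ p, Finsupp.single (e p) (c p)).sum (fun r t => t * X r.1 r.2 ω) := rfl
    rw [h2, ← this]
    refine Finset.sum_congr rfl fun p _ => ?_
    rw [Finsupp.sum_single_index (by simp)]
  rw [hL] at hv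
  have hLm : Measurable (fun ω => ∑ p, c p * Y p ω) := by fun_prop
  have hvar : (v : ℝ) = ∫ θ, Qf c θ ∂ν := by
    have h1 : ∫ y, y ^ 2 ∂(gaussianReal 0 v) = v := by
      have := variance_id_gaussianReal (μ := 0) (v := v)
      rw [variance_eq_integral (by fun_prop)] at this
      simpa using this
    rw [← h1, ← hv, integral_map hLm.aemeasurable (by fun_prop), integral_Qf]
    have h2 : ∀ ω, (∑ p, c p * Y p ω) ^ 2 = ∑ p, ∑ q, c p * c q * (Y p ω * Y q ω) := by
      intro ω
      rw [sq, Finset.sum_mul_sum]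
      exact Finset.sum_congr rfl fun p _ => Finset.sum_congr rfl fun q _ => by ring
    simp_rw [h2]
    have hi : ∀ p q, Integrable (fun ω => c p * c q * (Y p ω * Y q ω)) P := fun p q =>
      ((hY2 p).integrable_mul (hY2 q)).const_mul _
    rw [integral_finsetSum _ fun p _ => integrable_finsetSum _ fun q _ => hi p q]
    refine Finset.sum_congr rfl fun p _ => ?_
    rw [integral_finsetSum _ fun q _ => hi p q]
    refine Finset.sum_congr rfl fun q _ => ?_
    rw [integral_const_mul, hcov]
  have hch : charFun (gaussianReal 0 v) 1 = ((Real.exp (-(∫ θ, Qf c θ ∂ν) / 2) : ℝ) : ℂ) := by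
    rw [charFun_gaussianReal, ← hvar]
    push_cast
    congr 1
    simp
    ring
  rw [← hch, ← hv, charFun_apply, charFun_apply, integral_map hΦ.aemeasurable
    (Continuous.aestronglyMeasurable (by fun_prop)), integral_map hLm.aemeasurable
    (Continuous.aestronglyMeasurable (by fun_prop))]
  congr 1; funext ω
  congr 3
  simp [PiLp.inner_apply]

def symW {N : ℕ} (x : EN N) : Matrix (Fin N) (Fin N) ℝ :=
  fun i j => (Real.sqrt N)⁻¹ * (x (i, j) + x (j, i))

lemma symW_herm {N : ℕ} (x : EN N) : (symW x).IsHermitian := by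
  ext i j; simp [symW, add_comm]

lemma symW_add {N : ℕ} (x y : EN N) : symW (x + y) = symW x + symW y := by
  ext i j; simp [symW]; ring

lemma symW_smul {N : ℕ} (t : ℝ) (y : EN N) : symW (t • y) = t • symW y := by
  ext i j; simp [symW]; ring

lemma fro_symW_le {N : ℕ} (x : EN N) : fro (symW x) ≤ (N : ℝ)⁻¹ * (4 * ∑ p, x p ^ 2) := by
  have h1 : fro (symW x) ≤ ∑ i, ∑ j, (N : ℝ)⁻¹ * (2 * x (i, j) ^ 2 + 2 * x (j, i) ^ 2) := by
    unfold fro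
    refine Finset.sum_le_sum fun i _ => Finset.sum_le_sum fun j _ => ?_
    simp only [symW]
    rw [mul_pow, inv_pow, Real.sq_sqrt (by positivity)]
    refine mul_le_mul_of_nonneg_left ?_ (by positivity)
    nlinarith [sq_nonneg (x (i, j) - x (j, i))]
  refine h1.trans (le_of_eq ?_)
  simp_rw [← Finset.mul_sum, Finset.sum_add_distrib, ← Finset.mul_sum]
  rw [Finset.sum_comm (f := fun i j => x (j, i) ^ 2), Fintype.sum_prod_type]
  ring

def FN (g : ℝ → ℝ) (N : ℕ) (x : EN N) : ℝ := esdEval (symW x) g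

lemma FN_cont {g : ℝ → ℝ} (hg : GoodFun g) (N : ℕ) : Continuous (FN g N) := by
  obtain ⟨C, hC0, hC⟩ := hg.esd
  rw [continuous_iff_continuousAt]
  intro x
  have h1 : Tendsto (fun y : EN N => C * ((N : ℝ)⁻¹ * fro (symW y - symW x))) (nhds x) (nhds 0) := by
    have hc : Continuous (fun y : EN N => C * ((N : ℝ)⁻¹ * fro (symW y - symW x))) := by
      unfold fro symW; simp only [Matrix.sub_apply]; fun_prop
    have := hc.tendsto x
    simpa [fro] using this
  have h2 : Tendsto (fun y : EN N => (FN g N y - FN g N x) ^ 2) (nhds x) (nhds 0) :=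
    squeeze_zero (fun _ => sq_nonneg _) (fun y => (hC N _ _ (symW_herm y) (symW_herm x)).2) h1
  have h3 : Tendsto (fun y : EN N => |FN g N y - FN g N x|) (nhds x) (nhds 0) := by
    have := (Real.continuous_sqrt.tendsto 0).comp h2
    simpa [Function.comp_def, Real.sqrt_sq_eq_abs] using this
  rw [ContinuousAt, tendsto_iff_dist_tendsto_zero]
  exact h3

lemma FN_bdd {g : ℝ → ℝ} {M : ℝ} (hM : ∀ x, |g x| ≤ M) {N : ℕ} (x : EN N) : |FN g N x| ≤ M :=
  esdEval_bdd _ hM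

lemma FN_int {g : ℝ → ℝ} (hg : GoodFun g) {N : ℕ} {α : Type*} [MeasurableSpace α] (m : Measure α)
    [IsFiniteMeasure m] {φ : α → EN N} (hφ : Measurable φ) :
    Integrable (fun a => FN g N (φ a)) m := by
  obtain ⟨M, hM⟩ := hg.bdd
  exact Integrable.of_bound (C := M)
    ((FN_cont hg N).measurable.comp hφ).aestronglyMeasurable
    (Eventually.of_forall fun a => FN_bdd hM _)

def Near (g : ℝ → ℝ) {N : ℕ} (γ : Measure (EN N)) (δ : ℝ) : Prop :=
  ∀ m : Measure (EN N), IsProbabilityMeasure m →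
    |∫ x, FN g N x ∂(m.conv γ) - ∫ x, FN g N x ∂m| ≤ δ

lemma Near.conv {g : ℝ → ℝ} {N : ℕ} {γ γ' : Measure (EN N)} {δ δ' : ℝ} [IsProbabilityMeasure γ]
    [IsProbabilityMeasure γ'] (h : Near g γ δ) (h' : Near g γ' δ') :
    Near g (γ.conv γ') (δ + δ') := by
  intro m hm
  rw [← Measure.conv_assoc]
  have h1 := h m hm
  have h2 := h' (m.conv γ) inferInstance
  calc _ = |(∫ x, FN g N x ∂((m.conv γ).conv γ') - ∫ x, FN g N x ∂(m.conv γ)) +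
      (∫ x, FN g N x ∂(m.conv γ) - ∫ x, FN g N x ∂m)| := by congr 1; ring
    _ ≤ _ := (abs_add_le _ _).trans (by linarith)

/-- a pointwise criterion -/
lemma near_of_bound {g : ℝ → ℝ} (hg : GoodFun g) {N : ℕ} {γ : Measure (EN N)}
    [IsProbabilityMeasure γ] {b : EN N → ℝ} (hb : Integrable b γ)
    (h : ∀ᵐ y ∂γ, ∀ x, |FN g N (x + y) - FN g N x| ≤ b y) : Near g γ (∫ y, b y ∂γ) := by
  intro m hm
  rw [integral_conv (by
    have := FN_int hg (m.conv γ) measurable_id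
    simpa using this)]
  have hA : ∀ x, |∫ y, FN g N (x + y) ∂γ - FN g N x| ≤ ∫ y, b y ∂γ := by
    intro x
    have h1 : ∫ y, FN g N (x + y) ∂γ - FN g N x = ∫ y, (FN g N (x + y) - FN g N x) ∂γ := by
      rw [integral_sub (FN_int hg γ (by fun_prop)) (integrable_const _)]
      simp
    rw [h1]
    refine (abs_integral_le_integral_abs).trans ?_
    refine integral_mono_ae ?_ hb ?_
    · exact ((FN_int hg γ (by fun_prop)).sub (integrable_const _)).abs
    · filter_upwards [h] with y hy using hy x
  have hi : Integrable (fun x => ∫ y, FN g N (x + y) ∂γ) m := by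
    have : Integrable (fun z : EN N × EN N => FN g N (z.1 + z.2)) (m.prod γ) :=
      FN_int hg _ (by fun_prop)
    exact this.integral_prod_left
  have hi2 : Integrable (fun x => FN g N x) m := FN_int hg m measurable_id
  rw [← integral_sub hi hi2]
  refine (abs_integral_le_integral_abs).trans ?_
  refine (integral_mono (hi.sub hi2).abs (integrable_const _) hA).trans ?_
  simp

/-- one dimensional Gaussian in direction `v` -/
lemma dir_gauss {g : ℝ → ℝ} (hg : GoodFun g) {C : ℝ} (hC : ∀ (N : ℕ) (A B : Matrix (Fin N) (Fin N) ℝ),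
      A.IsHermitian → B.IsHermitian → |esdEval A g - esdEval B g| ≤ C * ((N : ℝ)⁻¹ * (A - B).rank))
    (hC0 : 0 ≤ C) {N : ℕ} (v : EN N) (w : NNReal) (hr : (symW v).rank ≤ 4) :
    ∃ γ : Measure (EN N), IsProbabilityMeasure γ ∧ Near g γ (C * ((N : ℝ)⁻¹ * 4)) ∧
      ∀ c : EN N, charFun γ c = ((Real.exp (- (w * (inner ℝ v c) ^ 2) / 2) : ℝ) : ℂ) := by
  have hφ : Measurable (fun t : ℝ => t • v) := by fun_prop
  haveI : IsProbabilityMeasure ((gaussianReal 0 w).map (fun t : ℝ => t • v)) :=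
    Measure.isProbabilityMeasure_map hφ.aemeasurable
  refine ⟨(gaussianReal 0 w).map (fun t => t • v), inferInstance, ?_, ?_⟩
  · intro m hm
    have hb : ∀ t : ℝ, ∀ x, |FN g N (x + t • v) - FN g N x| ≤ C * ((N : ℝ)⁻¹ * 4) := by
      intro t x
      refine (hC N _ _ (symW_herm _) (symW_herm _)).trans ?_
      rw [symW_add, symW_smul, add_sub_cancel_left]
      have h1 : (t • symW v).rank ≤ 4 := by
        have : t • symW v = (t • (1 : Matrix (Fin N) (Fin N) ℝ)) * symW v := by simp
        rw [this]
        exact (Matrix.rank_mul_le_right _ _).trans hr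
      have h2 : ((t • symW v).rank : ℝ) ≤ 4 := by exact_mod_cast h1
      gcongr
    have := near_of_bound hg (γ := (gaussianReal 0 w).map (fun t => t • v))
      (b := fun _ => C * ((N : ℝ)⁻¹ * 4)) (integrable_const _) ?_ m hm
    · simpa using this
    · rw [ae_map_iff hφ.aemeasurable]
      · exact Eventually.of_forall hb
      · have : {y : EN N | ∀ x, |FN g N (x + y) - FN g N x| ≤ C * ((N : ℝ)⁻¹ * 4)} =
          ⋂ x, {y | |FN g N (x + y) - FN g N x| ≤ C * ((N : ℝ)⁻¹ * 4)} := by ext; simp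
        rw [this]
        refine IsClosed.measurableSet (isClosed_iInter fun x => ?_)
        have hc := FN_cont hg N
        exact isClosed_le (by fun_prop) continuous_const
  · intro c
    have h1 : charFun ((gaussianReal 0 w).map (fun t => t • v)) c =
        charFun (gaussianReal 0 w) (inner ℝ v c) := by
      rw [charFun_apply, charFun_apply, integral_map hφ.aemeasurable
        (Continuous.aestronglyMeasurable (by fun_prop))]
      congr 1; funext t
      congr 3
      rw [inner_smul_left]
      simp [mul_comm]
    rw [h1, charFun_gaussianReal]
    push_cast
    congr 1
    simp
    ring

lemma rank_symW_le {N : ℕ} (x : EN N) (a b c d : Fin N → ℝ)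
    (h : ∀ i j, x (i, j) = a i * b j + c i * d j) : (symW x).rank ≤ 4 := by
  set s := (Real.sqrt N)⁻¹
  have e : symW x = (Matrix.vecMulVec (s • a) b + Matrix.vecMulVec (s • c) d) +
      (Matrix.vecMulVec (s • b) a + Matrix.vecMulVec (s • d) c) := by
    ext i j
    simp only [symW, h, Matrix.add_apply, Matrix.vecMulVec_apply, Pi.smul_apply, smul_eq_mul]
    ring
  rw [e]
  have h1 := rank_add_le' (Matrix.vecMulVec (s • a) b + Matrix.vecMulVec (s • c) d)
      (Matrix.vecMulVec (s • b) a + Matrix.vecMulVec (s • d) c)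
  have h2 := rank_add_le' (Matrix.vecMulVec (s • a) b) (Matrix.vecMulVec (s • c) d)
  have h3 := rank_add_le' (Matrix.vecMulVec (s • b) a) (Matrix.vecMulVec (s • d) c)
  have h4 := Matrix.rank_vecMulVec_le (s • a) b
  have h5 := Matrix.rank_vecMulVec_le (s • c) d
  have h6 := Matrix.rank_vecMulVec_le (s • b) a
  have h7 := Matrix.rank_vecMulVec_le (s • d) c
  omega

lemma atom_gauss {g : ℝ → ℝ} (hg : GoodFun g) {C : ℝ} (hC : ∀ (N : ℕ) (A B : Matrix (Fin N) (Fin N) ℝ),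
      A.IsHermitian → B.IsHermitian → |esdEval A g - esdEval B g| ≤ C * ((N : ℝ)⁻¹ * (A - B).rank))
    (hC0 : 0 ≤ C) {N : ℕ} (a : ℝ × ℝ) (w : NNReal) :
    ∃ γ : Measure (EN N), IsProbabilityMeasure γ ∧ Near g γ (8 * C * (N : ℝ)⁻¹) ∧
      IsG γ (w • Measure.dirac a) := by
  obtain ⟨γ1, i1, n1, c1⟩ := dir_gauss hg hC hC0
    (WithLp.toLp 2 fun p : Fin N × Fin N => Real.cos (phase p a) : EN N) w
    (rank_symW_le _ (fun i => Real.cos (((i : ℕ) + 1) * a.1)) (fun i => Real.cos (((i : ℕ) + 1) * a.2))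
      (fun i => - Real.sin (((i : ℕ) + 1) * a.1)) (fun i => Real.sin (((i : ℕ) + 1) * a.2))
      (fun i j => by simp only [phase]; rw [Real.cos_add]; ring))
  obtain ⟨γ2, i2, n2, c2⟩ := dir_gauss hg hC hC0
    (WithLp.toLp 2 fun p : Fin N × Fin N => Real.sin (phase p a) : EN N) w
    (rank_symW_le _ (fun i => Real.sin (((i : ℕ) + 1) * a.1)) (fun i => Real.cos (((i : ℕ) + 1) * a.2))
      (fun i => Real.cos (((i : ℕ) + 1) * a.1)) (fun i => Real.sin (((i : ℕ) + 1) * a.2))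
      (fun i j => by simp only [phase]; rw [Real.sin_add]))
  refine ⟨γ1.conv γ2, inferInstance, ?_, ?_⟩
  · have := n1.conv n2
    convert this using 1; ring
  · intro c
    rw [charFun_conv, c1, c2, ← Complex.ofReal_mul, ← Real.exp_add]
    have h : ∫ θ, Qf c θ ∂(w • Measure.dirac a) = w * Qf c a := by
      rw [integral_smul_nnreal_measure, integral_dirac]; rfl
    rw [h]
    congr 2
    simp only [Qf, PiLp.inner_apply, RCLike.inner_apply, conj_trivial]
    ring

lemma finset_gauss {g : ℝ → ℝ} (hg : GoodFun g) {C : ℝ} (hC : ∀ (N : ℕ) (A B : Matrix (Fin N) (Fin N) ℝ),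
      A.IsHermitian → B.IsHermitian → |esdEval A g - esdEval B g| ≤ C * ((N : ℝ)⁻¹ * (A - B).rank))
    (hC0 : 0 ≤ C) (ρ : Measure (ℝ × ℝ)) [IsFiniteMeasure ρ] {N : ℕ} (t : Finset (ℝ × ℝ)) :
    ∃ γ : Measure (EN N), IsProbabilityMeasure γ ∧ Near g γ (t.card * (8 * C * (N : ℝ)⁻¹)) ∧
      IsG γ (ρ.restrict t) := by
  classical
  induction t using Finset.induction_on with
  | empty =>
    refine ⟨Measure.dirac 0, inferInstance, ?_, ?_⟩
    · intro m hm; simp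
    · intro c; simp
  | insert a t ha ih =>
    obtain ⟨γ1, i1, n1, c1⟩ := ih
    obtain ⟨γ2, i2, n2, c2⟩ := atom_gauss hg hC hC0 (N := N) a (ρ {a}).toNNReal
    refine ⟨γ2.conv γ1, inferInstance, ?_, ?_⟩
    · have := n2.conv n1
      convert this using 1
      rw [Finset.card_insert_of_notMem ha]; push_cast; ring
    · have h1 : (ρ {a}).toNNReal • Measure.dirac a = ρ.restrict {a} := by
        rw [Measure.restrict_singleton]
        conv_rhs => rw [← ENNReal.coe_toNNReal (measure_ne_top ρ {a})]
        rfl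
      rw [h1] at c2
      have h2 : ρ.restrict ((insert a t : Finset (ℝ × ℝ)) : Set (ℝ × ℝ)) =
          ρ.restrict {a} + ρ.restrict t := by
        rw [Finset.coe_insert, Set.insert_eq, Measure.restrict_union _ t.measurableSet]
        simpa using ha
      rw [h2]
      exact c2.conv c1

lemma tail_gauss {g : ℝ → ℝ} (hg : GoodFun g) {C : ℝ} (hC : ∀ (N : ℕ) (A B : Matrix (Fin N) (Fin N) ℝ),
      A.IsHermitian → B.IsHermitian → (esdEval A g - esdEval B g) ^ 2 ≤ C * ((N : ℝ)⁻¹ * fro (A - B)))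
    (hC0 : 0 ≤ C) (ρ : Measure (ℝ × ℝ)) [IsFiniteMeasure ρ] {N : ℕ} (hN : 0 < N) {η : ℝ} (hη : 0 < η) :
    ∃ γ : Measure (EN N), IsProbabilityMeasure γ ∧ Near g γ (η + 4 * C * ρ.real Set.univ / η) ∧
      IsG γ ρ := by
  obtain ⟨γ, i, hG, hp⟩ := exists_IsG (N := N) ρ
  refine ⟨γ, i, ?_, hG⟩
  have hN' : (0:ℝ) < N := by exact_mod_cast hN
  have hint : Integrable (fun y : EN N => ∑ p, y p ^ 2) γ := integrable_finsetSum _ fun p _ => (hp p).1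
  have hE : ∫ y : EN N, ∑ p, y p ^ 2 ∂γ = N * N * ρ.real Set.univ := by
    rw [integral_finsetSum _ fun p _ => (hp p).1]
    simp [hp]
  have hb : Integrable (fun y : EN N => η + (C * ((N : ℝ)⁻¹ * ((N : ℝ)⁻¹ * 4)) / η) * ∑ p, y p ^ 2) γ :=
    (integrable_const _).add (hint.const_mul _)
  have := near_of_bound hg hb (Eventually.of_forall fun y x => ?_)
  · convert this using 1
    rw [integral_add (integrable_const _) (hint.const_mul _), integral_const_mul, hE]
    simp
    field_simp
  · have h1 := hC N _ _ (symW_herm (x + y)) (symW_herm x)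
    rw [symW_add, add_sub_cancel_left, ← symW_add] at h1
    have h2 := fro_symW_le y
    have h3 : (FN g N (x + y) - FN g N x) ^ 2 ≤
        (C * ((N : ℝ)⁻¹ * ((N : ℝ)⁻¹ * 4))) * ∑ p, y p ^ 2 := by
      refine h1.trans ?_
      have := mul_le_mul_of_nonneg_left (mul_le_mul_of_nonneg_left h2 (inv_nonneg.2 hN'.le)) hC0
      refine this.trans (le_of_eq (by ring))
    set a := FN g N (x + y) - FN g N x
    set K := (C * ((N : ℝ)⁻¹ * ((N : ℝ)⁻¹ * 4)))
    have h4 : |a| ≤ η + a ^ 2 / η := by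
      have : |a| * η ≤ η * η + a ^ 2 := by
        nlinarith [sq_nonneg (|a| - η), sq_abs a, abs_nonneg a, sq_nonneg (|a| + η)]
      rw [← sub_le_iff_le_add', le_div_iff₀ hη]; linarith
    refine h4.trans ?_
    rw [div_mul_eq_mul_div]
    gcongr

lemma exhaust (ρ : Measure (ℝ × ℝ)) [IsFiniteMeasure ρ]
    (hs : ∃ s : Set (ℝ × ℝ), s.Countable ∧ ρ sᶜ = 0) {κ : ℝ} (hκ : 0 < κ) :
    ∃ t : Finset (ℝ × ℝ), ρ.real (t : Set (ℝ × ℝ))ᶜ ≤ κ := by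
  classical
  obtain ⟨s, hs, h0⟩ := hs
  obtain ⟨f, hf⟩ := (hs.insert (0, 0)).exists_eq_range (Set.insert_nonempty _ _)
  let T : ℕ → Finset (ℝ × ℝ) := fun n => (Finset.range n).image f
  have hanti : Antitone fun n => ((T n : Set (ℝ × ℝ)))ᶜ := by
    intro a b hab
    refine Set.compl_subset_compl.2 ?_
    exact_mod_cast Finset.image_subset_image (Finset.range_mono hab)
  have hlim := tendsto_measure_iInter_atTop (μ := ρ) (s := fun n => ((T n : Set (ℝ × ℝ)))ᶜ)
    (fun n => (T n).measurableSet.compl.nullMeasurableSet) hanti ⟨0, measure_ne_top _ _⟩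
  have hz : ρ (⋂ n, ((T n : Set (ℝ × ℝ)))ᶜ) = 0 := by
    refine measure_mono_null ?_ h0
    intro x hx hxs
    have : x ∈ Set.range f := hf ▸ Set.mem_insert_of_mem _ hxs
    obtain ⟨n, rfl⟩ := this
    have := Set.mem_iInter.1 hx (n + 1)
    apply this
    simp only [T, Finset.coe_image, Finset.coe_range]
    exact ⟨n, by simp, rfl⟩
  rw [hz] at hlim
  have hlim2 := (ENNReal.tendsto_toReal ENNReal.zero_ne_top).comp hlim
  have := hlim2.eventually (gt_mem_nhds (by simpa using hκ))
  obtain ⟨n, hn⟩ := this.exists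
  exact ⟨T n, le_of_lt hn⟩

lemma disc_gauss {g : ℝ → ℝ} (hg : GoodFun g) (ρ : Measure (ℝ × ℝ)) [IsFiniteMeasure ρ]
    (hs : ∃ s : Set (ℝ × ℝ), s.Countable ∧ ρ sᶜ = 0) {ε : ℝ} (hε : 0 < ε) :
    ∀ᶠ N : ℕ in atTop, ∃ γ : Measure (EN N), IsProbabilityMeasure γ ∧ Near g γ ε ∧ IsG γ ρ := by
  obtain ⟨C, hC0, hC⟩ := hg.esd
  have hκ : 0 < (ε / 3) ^ 2 / (4 * (C + 1)) := by positivity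
  obtain ⟨t, ht⟩ := exhaust ρ hs hκ
  have hlim : Tendsto (fun N : ℕ => t.card * (8 * C * (N : ℝ)⁻¹)) atTop (nhds 0) := by
    have := (tendsto_inv_atTop_nhds_zero_nat (𝕜 := ℝ)).const_mul (8 * C)
    have := this.const_mul (t.card : ℝ)
    simpa using this
  filter_upwards [hlim.eventually (gt_mem_nhds (by positivity : 0 < ε / 3)), eventually_gt_atTop 0]
    with N hN1 hN0
  obtain ⟨γ1, i1, n1, c1⟩ := finset_gauss hg (fun N A B hA hB => (hC N A B hA hB).1) hC0 ρ (N := N) t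
  obtain ⟨γ2, i2, n2, c2⟩ := tail_gauss hg (fun N A B hA hB => (hC N A B hA hB).2) hC0
    (ρ.restrict (t : Set (ℝ × ℝ))ᶜ) hN0 (by positivity : 0 < ε / 3)
  refine ⟨γ1.conv γ2, inferInstance, ?_, ?_⟩
  · intro m hm
    refine (n1.conv n2 m hm).trans ?_
    have h1 : (ρ.restrict (t : Set (ℝ × ℝ))ᶜ).real Set.univ ≤ (ε / 3) ^ 2 / (4 * (C + 1)) := by
      simpa [measureReal_restrict_apply] using ht
    have h2 : 4 * C * (ρ.restrict (t : Set (ℝ × ℝ))ᶜ).real Set.univ / (ε / 3) ≤ ε / 3 := by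
      rw [div_le_iff₀ (by positivity)]
      rw [le_div_iff₀ (by positivity)] at h1
      have h0 : 0 ≤ (ρ.restrict (t : Set (ℝ × ℝ))ᶜ).real Set.univ := measureReal_nonneg
      nlinarith
    linarith
  · have := c1.conv c2
    rwa [Measure.restrict_add_restrict_compl t.measurableSet] at this

lemma esd_mean_tendsto {Ω : Type} [MeasurableSpace Ω] (P : Measure Ω) [IsProbabilityMeasure P]
    (X : ℤ → ℤ → Ω → ℝ) (hXm : ∀ j k, Measurable (X j k)) (μ : Measure ℝ)
    (h1 : ESDTendstoInProb P (scaledW X) μ) {g : ℝ → ℝ} (hg : GoodFun g) :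
    Tendsto (fun N => ∫ x, FN g N x ∂(P.map (fun ω => (WithLp.toLp 2 fun p : Fin N × Fin N =>
      X ((p.1 : ℕ) + 1) ((p.2 : ℕ) + 1) ω : EN N)))) atTop (nhds (∫ x, g x ∂μ)) := by
  obtain ⟨M, hM⟩ := hg.bdd
  set L := ∫ x, g x ∂μ with hL
  have hΦ : ∀ N : ℕ, Measurable (fun ω => (WithLp.toLp 2 fun p : Fin N × Fin N =>
      X ((p.1 : ℕ) + 1) ((p.2 : ℕ) + 1) ω : EN N)) := by
    intro N
    have : ∀ p : Fin N × Fin N, Measurable (X ((p.1 : ℕ) + 1) ((p.2 : ℕ) + 1)) := fun p => hXm _ _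
    fun_prop
  have hcongr : ∀ N, ∫ x, FN g N x ∂(P.map (fun ω => (WithLp.toLp 2 fun p : Fin N × Fin N =>
      X ((p.1 : ℕ) + 1) ((p.2 : ℕ) + 1) ω : EN N))) = ∫ ω, esdEval (scaledW X N ω) g ∂P := by
    intro N
    rw [integral_map (hΦ N).aemeasurable (FN_cont hg N).aestronglyMeasurable]
    rfl
  simp_rw [hcongr]
  have hmeas : ∀ N, Measurable (fun ω => esdEval (scaledW X N ω) g) := fun N =>
    (FN_cont hg N).measurable.comp (hΦ N)
  have hint : ∀ N, Integrable (fun ω => esdEval (scaledW X N ω) g) P := fun N =>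
    FN_int hg P (hΦ N)
  have hM0 : 0 ≤ M := (abs_nonneg _).trans (hM 0)
  rw [Metric.tendsto_atTop]
  intro ε hε
  have hK : 0 < M + |L| + 1 := by positivity
  have h2 := (ENNReal.tendsto_toReal ENNReal.zero_ne_top).comp
    (h1 g hg.cont hg.bdd (ε / 2) (by positivity))
  have h3 := h2.eventually (gt_mem_nhds (by positivity :
    (ENNReal.toReal 0) < (ε / 2) / (M + |L| + 1)))
  obtain ⟨N0, hN0⟩ := eventually_atTop.1 h3
  refine ⟨N0, fun N hN => ?_⟩
  have h4 := hN0 N hN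
  simp only [Function.comp_apply] at h4
  set S := {ω | ε / 2 ≤ |esdEval (scaledW X N ω) g - L|} with hS
  have hSm : MeasurableSet S := measurableSet_le measurable_const ((hmeas N).sub_const _).abs
  have h5 : P.real S * (M + |L| + 1) < ε / 2 := by
    rwa [lt_div_iff₀ hK] at h4
  rw [Real.dist_eq]
  have h6 : ∫ ω, esdEval (scaledW X N ω) g ∂P - L = ∫ ω, (esdEval (scaledW X N ω) g - L) ∂P := by
    rw [integral_sub (hint N) (integrable_const _)]; simp
  rw [h6]
  refine lt_of_le_of_lt abs_integral_le_integral_abs ?_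
  have hbI : Integrable (fun ω => ε / 2 + S.indicator (fun _ => M + |L| + 1) ω) P :=
    (integrable_const _).add ((integrable_const _).indicator hSm)
  refine lt_of_le_of_lt (integral_mono ((hint N).sub (integrable_const _)).abs hbI ?_) ?_
  · intro ω
    by_cases hω : ω ∈ S
    · simp only [Set.indicator_of_mem hω]
      have := esdEval_bdd (scaledW X N ω) hM
      exact (abs_sub _ _).trans (by linarith)
    · simp only [Set.indicator_of_notMem hω, add_zero]
      have : ¬ (ε / 2 ≤ |esdEval (scaledW X N ω) g - L|) := hω
      exact (not_le.1 this).le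
  · rw [integral_add (integrable_const _) ((integrable_const _).indicator hSm),
      integral_indicator_const _ hSm]
    simp only [integral_const, probReal_univ, smul_eq_mul]
    linarith

/-- If two centered stationary Gaussian processes satisfying the standing
assumption have spectral measures with the same absolutely continuous density
`f`, then their limiting spectral distributions coincide. -/
theorem statement1 {Ω Ω' : Type} [MeasurableSpace Ω] [MeasurableSpace Ω']
    (P : Measure Ω) (P' : Measure Ω') [IsProbabilityMeasure P]
    [IsProbabilityMeasure P'] (X : ℤ → ℤ → Ω → ℝ) (X' : ℤ → ℤ → Ω' → ℝ)
    (ν νd ν' νd' : Measure (ℝ × ℝ)) (f : ℝ × ℝ → ℝ)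
    (hX : StatGauss P X) (hX' : StatGauss P' X')
    (hν : SpectralDecomp P X ν νd f) (hν' : SpectralDecomp P' X' ν' νd' f)
    (μ μ' : Measure ℝ) (hμ : IsProbabilityMeasure μ)
    (hμ' : IsProbabilityMeasure μ')
    (h1 : ESDTendstoInProb P (scaledW X) μ)
    (h2 : ESDTendstoInProb P' (scaledW X') μ') :
    μ = μ' := by
  have hf1 := hν.finite
  have hf2 := hν'.finite
  have hd1 : IsFiniteMeasure νd := by
    refine isFiniteMeasure_of_le ν ?_
    rw [hν.decomp]; exact Measure.le_add_left le_rfl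
  have hd2 : IsFiniteMeasure νd' := by
    refine isFiniteMeasure_of_le ν' ?_
    rw [hν'.decomp]; exact Measure.le_add_left le_rfl
  have hsum : ν + νd' = ν' + νd := by
    rw [hν.decomp, hν'.decomp]; abel
  refine ext_goodFun μ μ' fun g hg => ?_
  have t1 := esd_mean_tendsto P X hX.meas μ h1 hg
  have t2 := esd_mean_tendsto P' X' hX'.meas μ' h2 hg
  refine eq_of_sub_eq_zero (tendsto_nhds_unique (t1.sub t2) ?_)
  rw [Metric.tendsto_atTop]
  intro ε hε
  obtain ⟨N0, hN0⟩ := eventually_atTop.1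
    ((disc_gauss hg νd hν.discrete (by positivity : 0 < ε / 3)).and
      (disc_gauss hg νd' hν'.discrete (by positivity : 0 < ε / 3)))
  refine ⟨N0, fun N hN => ?_⟩
  obtain ⟨⟨γ, i1, n1, c1⟩, ⟨γ', i2, n2, c2⟩⟩ := hN0 N hN
  have G1 := isG_law P X ν νd f hX hν N
  have G2 := isG_law P' X' ν' νd' f hX' hν' N
  have m1 : Measurable (fun ω => (WithLp.toLp 2 fun p : Fin N × Fin N =>
      X ((p.1 : ℕ) + 1) ((p.2 : ℕ) + 1) ω : EN N)) := by
    have : ∀ p : Fin N × Fin N, Measurable (X ((p.1 : ℕ) + 1) ((p.2 : ℕ) + 1)) :=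
      fun p => hX.meas _ _
    fun_prop
  have m2 : Measurable (fun ω => (WithLp.toLp 2 fun p : Fin N × Fin N =>
      X' ((p.1 : ℕ) + 1) ((p.2 : ℕ) + 1) ω : EN N)) := by
    have : ∀ p : Fin N × Fin N, Measurable (X' ((p.1 : ℕ) + 1) ((p.2 : ℕ) + 1)) :=
      fun p => hX'.meas _ _
    fun_prop
  have p1 := Measure.isProbabilityMeasure_map (μ := P) m1.aemeasurable
  have p2 := Measure.isProbabilityMeasure_map (μ := P') m2.aemeasurable
  have e1 := G1.conv c2
  have e2 := G2.conv c1
  rw [hsum] at e1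
  have heq := e1.unique e2
  have b1 := n2 _ p1
  have b2 := n1 _ p2
  rw [heq] at b1
  rw [Real.dist_eq, sub_zero]
  rw [abs_le] at b1 b2
  rw [abs_lt]
  constructor <;> linarith [b1.1, b1.2, b2.1, b2.2]

end
end

section
/- The second moment of the limiting spectral distribution μ_f equals twice the total mass of the absolutely continuous component: ∫_ℝ x² μ_f(dx) = 2 ∫_{[−π,π]²} f(x,y) dx dy. -/
open MeasureTheory ProbabilityTheory Filter Real

noncomputable section

lemma aux_gauss_deriv (v : ℝ) (p p' : ℝ → ℝ) (hp : ∀ t, HasDerivAt p (p' t) t) :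
    deriv (fun t => p t * rexp (v * t ^ 2 / 2)) =
      fun t => (p' t + p t * (v * t)) * rexp (v * t ^ 2 / 2) := by
  funext t
  have h1 : HasDerivAt (fun t : ℝ => v * t ^ 2 / 2) (v * t) t := by
    have := ((hasDerivAt_pow 2 t).const_mul v).div_const 2
    convert! this using 1
    push_cast; ring
  have := (hp t).mul h1.exp
  change deriv (p * fun t => rexp (v * t ^ 2 / 2)) t = _
  rw [this.deriv]; ring

lemma gauss_mom2 (v : NNReal) : ∫ x, x ^ 2 ∂(gaussianReal 0 v) = v := by
  have := variance_id_gaussianReal (μ := 0) (v := v)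
  rw [variance_eq_integral (by fun_prop)] at this
  simpa using this

lemma gauss_mom4 (v : NNReal) : ∫ x, x ^ 4 ∂(gaussianReal 0 v) = 3 * (v : ℝ) ^ 2 := by
  have h := iteratedDeriv_mgf_zero (X := id) (μ := gaussianReal 0 v)
    (by rw [integrableExpSet_id_gaussianReal]; simp) 4
  rw [mgf_id_gaussianReal] at h
  have e0 : (fun t : ℝ => rexp (0 * t + v * t ^ 2 / 2))
      = fun t => (1 : ℝ) * rexp (v * t ^ 2 / 2) := by
    funext t; simp
  rw [e0] at h
  simp only [iteratedDeriv_succ, iteratedDeriv_zero] at h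
  rw [aux_gauss_deriv v (fun _ => 1) (fun _ => 0) (fun t => hasDerivAt_const t 1)] at h
  rw [aux_gauss_deriv v _ (fun t => v) (fun t => by
    simpa using (hasDerivAt_id t).const_mul (v : ℝ))] at h
  rw [aux_gauss_deriv v _ (fun t => 2 * (v : ℝ) ^ 2 * t) (fun t => by
    have : HasDerivAt (fun t : ℝ => v + (v : ℝ) ^ 2 * t ^ 2) (2 * (v : ℝ) ^ 2 * t) t := by
      convert! ((hasDerivAt_pow 2 t).const_mul ((v : ℝ) ^ 2)).const_add (v : ℝ) using 1
      push_cast; ring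
    convert! this using 1
    funext t; ring)] at h
  rw [aux_gauss_deriv v _ (fun t => 3 * (v : ℝ) ^ 2 + 3 * (v : ℝ) ^ 3 * t ^ 2) (fun t => by
    have : HasDerivAt (fun t : ℝ => 3 * (v : ℝ) ^ 2 * t + (v : ℝ) ^ 3 * t ^ 3)
        (3 * (v : ℝ) ^ 2 + 3 * (v : ℝ) ^ 3 * t ^ 2) t := by
      convert! ((hasDerivAt_id t).const_mul (3 * (v : ℝ) ^ 2)).add
        ((hasDerivAt_pow 3 t).const_mul ((v : ℝ) ^ 3)) using 1
      push_cast; ring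
    convert! this using 1
    funext t; ring)] at h
  simpa using h.symm

/-- centered Gaussian variable -/
def IsCG {Ω : Type*} [MeasurableSpace Ω] (P : Measure Ω) (Y : Ω → ℝ) : Prop :=
  Measurable Y ∧ ∃ v : NNReal, P.map Y = gaussianReal 0 v

lemma IsCG.memLp {Ω : Type*} [MeasurableSpace Ω] {P : Measure Ω} {Y : Ω → ℝ}
    (h : IsCG P Y) (p : ENNReal) (hp : p ≠ ⊤) : MemLp Y p P := by
  obtain ⟨hm, v, hv⟩ := h
  have := memLp_id_gaussianReal' (μ := 0) (v := v) p hp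
  rw [← hv, memLp_map_measure_iff (by fun_prop) hm.aemeasurable] at this
  exact this

lemma IsCG.mom4 {Ω : Type*} [MeasurableSpace Ω] {P : Measure Ω} {Y : Ω → ℝ}
    (h : IsCG P Y) : ∫ ω, Y ω ^ 4 ∂P = 3 * (∫ ω, Y ω ^ 2 ∂P) ^ 2 := by
  obtain ⟨hm, v, hv⟩ := h
  have h4 := gauss_mom4 v
  have h2 := gauss_mom2 v
  rw [← hv, integral_map hm.aemeasurable (by fun_prop)] at h4 h2
  rw [h4, h2]

lemma IsCG.int4 {Ω : Type*} [MeasurableSpace Ω] {P : Measure Ω} {Y : Ω → ℝ}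
    (h : IsCG P Y) : Integrable (fun ω => Y ω ^ 4) P := by
  have := (h.memLp 4 (by simp)).integrable_norm_pow (by norm_num)
  refine this.congr (Eventually.of_forall fun ω => ?_)
  simp only [Real.norm_eq_abs]
  exact Even.pow_abs (by decide) _

lemma IsCG.int_mul {Ω : Type*} [MeasurableSpace Ω] {P : Measure Ω} {Y Z : Ω → ℝ}
    (h : IsCG P Y) (h' : IsCG P Z) : Integrable (fun ω => Y ω * Z ω) P :=
  (h.memLp 2 (by simp)).integrable_mul (h'.memLp 2 (by simp))

lemma int_add_fun {Ω : Type*} [MeasurableSpace Ω] {P : Measure Ω} {f g : Ω → ℝ}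
    (hf : Integrable f P) (hg : Integrable g P) : Integrable (fun ω => f ω + g ω) P := hf.add hg

lemma int_sub_fun {Ω : Type*} [MeasurableSpace Ω] {P : Measure Ω} {f g : Ω → ℝ}
    (hf : Integrable f P) (hg : Integrable g P) : Integrable (fun ω => f ω - g ω) P := hf.sub hg

lemma wick {Ω : Type*} [MeasurableSpace Ω] {P : Measure Ω} {a b c d : Ω → ℝ}
    (h : ∀ s t u w : ℝ, IsCG P (fun ω => s * a ω + t * b ω + u * c ω + w * d ω)) :
    Integrable (fun ω => a ω * b ω * c ω * d ω) P ∧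
    ∫ ω, a ω * b ω * c ω * d ω ∂P =
      (∫ ω, a ω * b ω ∂P) * (∫ ω, c ω * d ω ∂P)
      + (∫ ω, a ω * c ω ∂P) * (∫ ω, b ω * d ω ∂P)
      + (∫ ω, a ω * d ω ∂P) * (∫ ω, b ω * c ω ∂P) := by
  have ha : IsCG P a := by simpa using h 1 0 0 0
  have hb : IsCG P b := by simpa using h 0 1 0 0
  have hc : IsCG P c := by simpa using h 0 0 1 0
  have hd : IsCG P d := by simpa using h 0 0 0 1
  have key : ∀ s t u w : ℝ, ∫ ω, (s * a ω + t * b ω + u * c ω + w * d ω) ^ 4 ∂P =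
      3 * (s ^ 2 * (∫ ω, a ω * a ω ∂P) + t ^ 2 * (∫ ω, b ω * b ω ∂P)
        + u ^ 2 * (∫ ω, c ω * c ω ∂P) + w ^ 2 * (∫ ω, d ω * d ω ∂P)
        + 2 * s * t * (∫ ω, a ω * b ω ∂P) + 2 * s * u * (∫ ω, a ω * c ω ∂P)
        + 2 * s * w * (∫ ω, a ω * d ω ∂P) + 2 * t * u * (∫ ω, b ω * c ω ∂P)
        + 2 * t * w * (∫ ω, b ω * d ω ∂P) + 2 * u * w * (∫ ω, c ω * d ω ∂P)) ^ 2 := by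
    intro s t u w
    rw [(h s t u w).mom4]
    congr 2
    have e : ∀ ω, (s * a ω + t * b ω + u * c ω + w * d ω) ^ 2 =
        s ^ 2 * (a ω * a ω) + t ^ 2 * (b ω * b ω) + u ^ 2 * (c ω * c ω) + w ^ 2 * (d ω * d ω)
        + 2 * s * t * (a ω * b ω) + 2 * s * u * (a ω * c ω) + 2 * s * w * (a ω * d ω)
        + 2 * t * u * (b ω * c ω) + 2 * t * w * (b ω * d ω) + 2 * u * w * (c ω * d ω) := by
      intro ω; ring
    simp only [e]
    have i1 := (ha.int_mul ha).const_mul (s ^ 2)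
    have i2 := (hb.int_mul hb).const_mul (t ^ 2)
    have i3 := (hc.int_mul hc).const_mul (u ^ 2)
    have i4 := (hd.int_mul hd).const_mul (w ^ 2)
    have i5 := (ha.int_mul hb).const_mul (2 * s * t)
    have i6 := (ha.int_mul hc).const_mul (2 * s * u)
    have i7 := (ha.int_mul hd).const_mul (2 * s * w)
    have i8 := (hb.int_mul hc).const_mul (2 * t * u)
    have i9 := (hb.int_mul hd).const_mul (2 * t * w)
    have i10 := (hc.int_mul hd).const_mul (2 * u * w)
    have j2 := int_add_fun i1 i2
    have j3 := int_add_fun j2 i3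
    have j4 := int_add_fun j3 i4
    have j5 := int_add_fun j4 i5
    have j6 := int_add_fun j5 i6
    have j7 := int_add_fun j6 i7
    have j8 := int_add_fun j7 i8
    have j9 := int_add_fun j8 i9
    rw [integral_add j9 i10, integral_add j8 i9, integral_add j7 i8, integral_add j6 i7,
      integral_add j5 i6, integral_add j4 i5, integral_add j3 i4, integral_add j2 i3,
      integral_add i1 i2]
    simp only [integral_const_mul]
  have e : ∀ ω, a ω * b ω * c ω * d ω =
      192⁻¹ * ((1 * a ω + 1 * b ω + 1 * c ω + 1 * d ω) ^ 4
        - (1 * a ω + 1 * b ω + 1 * c ω + (-1) * d ω) ^ 4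
        - (1 * a ω + 1 * b ω + (-1) * c ω + 1 * d ω) ^ 4
        + (1 * a ω + 1 * b ω + (-1) * c ω + (-1) * d ω) ^ 4
        - (1 * a ω + (-1) * b ω + 1 * c ω + 1 * d ω) ^ 4
        + (1 * a ω + (-1) * b ω + 1 * c ω + (-1) * d ω) ^ 4
        + (1 * a ω + (-1) * b ω + (-1) * c ω + 1 * d ω) ^ 4
        - (1 * a ω + (-1) * b ω + (-1) * c ω + (-1) * d ω) ^ 4) := by
    intro ω; ring
  simp only [e]
  have i1 := (h 1 1 1 1).int4
  have i2 := (h 1 1 1 (-1)).int4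
  have i3 := (h 1 1 (-1) 1).int4
  have i4 := (h 1 1 (-1) (-1)).int4
  have i5 := (h 1 (-1) 1 1).int4
  have i6 := (h 1 (-1) 1 (-1)).int4
  have i7 := (h 1 (-1) (-1) 1).int4
  have i8 := (h 1 (-1) (-1) (-1)).int4
  have j2 := int_sub_fun i1 i2
  have j3 := int_sub_fun j2 i3
  have j4 := int_add_fun j3 i4
  have j5 := int_sub_fun j4 i5
  have j6 := int_add_fun j5 i6
  have j7 := int_add_fun j6 i7
  have j8 := int_sub_fun j7 i8
  refine ⟨j8.const_mul _, ?_⟩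
  rw [integral_const_mul, integral_sub j7 i8, integral_add j6 i7, integral_add j5 i6,
    integral_sub j4 i5, integral_add j3 i4, integral_sub j2 i3, integral_sub i1 i2]
  simp only [key]
  ring

lemma eckart_low {N : ℕ} {A : Matrix (Fin N) (Fin N) ℝ} (hA : A.IsHermitian)
    {ι : Type*} [Fintype ι] (u : ι → EuclideanSpace ℝ (Fin N)) (hu : Orthonormal ℝ u)
    (K : ℝ) :
    ∑ j, min ((hA.eigenvalues j) ^ 2) K ≤
      ∑ l, ∑ i, (∑ j, A i j * u l j) ^ 2 + K * ((N : ℝ) - Fintype.card ι) := by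
  set v := hA.eigenvectorBasis with hv
  have h1 : ∀ l, ∑ i, (∑ j, A i j * u l j) ^ 2
      = ∑ j, (hA.eigenvalues j) ^ 2 * (inner ℝ (v j) (u l)) ^ 2 := by
    intro l
    have e1 : ∑ i, (∑ j, A i j * u l j) ^ 2
        = ‖(WithLp.toLp 2 (A.mulVec (u l).ofLp) : EuclideanSpace ℝ (Fin N))‖ ^ 2 := by
      rw [EuclideanSpace.norm_sq_eq]
      refine Finset.sum_congr rfl fun i _ => ?_
      simp [Matrix.mulVec, dotProduct]
    rw [e1, ← v.sum_sq_norm_inner_right]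
    refine Finset.sum_congr rfl fun j _ => ?_
    have e2 : inner ℝ (v j) (WithLp.toLp 2 (A.mulVec (u l).ofLp) : EuclideanSpace ℝ (Fin N))
        = hA.eigenvalues j * inner ℝ (v j) (u l) := by
      have h3 := hA.mulVec_eigenvectorBasis j
      rw [← hv] at h3
      simp only [EuclideanSpace.inner_eq_star_dotProduct, star_trivial]
      rw [dotProduct_comm, Matrix.dotProduct_mulVec, ← Matrix.mulVec_transpose]
      have : A.transpose = A := by
        have := hA.eq; rwa [Matrix.conjTranspose_eq_transpose_of_trivial] at this
      rw [this, h3, smul_dotProduct, smul_eq_mul, dotProduct_comm]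
    rw [e2, Real.norm_eq_abs, sq_abs, mul_pow]
  have h2 : ∀ j, ∑ l, (inner ℝ (v j) (u l)) ^ 2 ≤ 1 := by
    intro j
    have := hu.sum_inner_products_le (v j) (s := Finset.univ)
    rw [v.orthonormal.1 j] at this
    simpa [real_inner_comm] using this
  have h3 : ∀ l, ∑ j, (inner ℝ (v j) (u l)) ^ 2 = 1 := by
    intro l
    have := v.sum_sq_norm_inner_right (u l)
    rw [hu.1 l] at this
    simpa using this
  simp only [h1]
  rw [Finset.sum_comm]
  have h4 : ∑ j, ∑ l, (inner ℝ (v j) (u l)) ^ 2 = (Fintype.card ι : ℝ) := by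
    rw [Finset.sum_comm]; simp [h3]
  have h5 : ∑ j, (K * (1 - ∑ l, (inner ℝ (v j) (u l)) ^ 2))
      = K * ((N : ℝ) - Fintype.card ι) := by
    rw [← Finset.mul_sum, Finset.sum_sub_distrib, h4]; simp
  rw [← h5, ← Finset.sum_add_distrib]
  refine Finset.sum_le_sum fun j _ => ?_
  rw [← Finset.mul_sum]
  set q := ∑ l, (inner ℝ (v j) (u l)) ^ 2 with hq
  have hq0 : 0 ≤ q := Finset.sum_nonneg fun l _ => sq_nonneg _
  have hq1 := h2 j
  have m1 := min_le_left ((hA.eigenvalues j) ^ 2) K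
  have m2 := min_le_right ((hA.eigenvalues j) ^ 2) K
  nlinarith [mul_le_mul_of_nonneg_right m1 hq0,
    mul_le_mul_of_nonneg_right m2 (sub_nonneg.2 hq1)]

lemma ptwise_low (x b c η K : ℝ) (hc : 0 < c) (hη : 0 < η) (hK : 1 / (4 * c * η ^ 2) ≤ K) :
    2 * x * b - b ^ 2 - c * b ^ 4 - η * x ^ 2 ≤ min (x ^ 2) K := by
  refine le_min ?_ ?_
  · nlinarith [sq_nonneg (x - b), sq_nonneg x, mul_nonneg hη.le (sq_nonneg x),
      mul_nonneg hc.le (sq_nonneg (b ^ 2))]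
  · refine le_trans ?_ hK
    have h1 : 2 * x * b ≤ η * x ^ 2 + b ^ 2 / η := by
      have : 0 ≤ (η * x - b) ^ 2 / η := by positivity
      have e : (η * x - b) ^ 2 / η = η * x ^ 2 + b ^ 2 / η - 2 * x * b := by
        field_simp; ring
      linarith
    have h2 : b ^ 2 / η ≤ c * b ^ 4 + 1 / (4 * c * η ^ 2) := by
      have : 0 ≤ c * (b ^ 2 - 1 / (2 * c * η)) ^ 2 := by positivity
      have e : c * (b ^ 2 - 1 / (2 * c * η)) ^ 2
          = c * b ^ 4 + 1 / (4 * c * η ^ 2) - b ^ 2 / η := by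
        field_simp; ring
      linarith
    nlinarith [sq_nonneg b]

lemma trace_low {N : ℕ} {A B : Matrix (Fin N) (Fin N) ℝ} (hA : A.IsHermitian)
    (hB : B.IsHermitian) (c η K : ℝ) (hc : 0 < c) (hη : 0 < η)
    (hK : 1 / (4 * c * η ^ 2) ≤ K) :
    2 * (A * B).trace - (B * B).trace - c * (B * B * (B * B)).trace - η * (A * A).trace
      ≤ ∑ j, min ((hA.eigenvalues j) ^ 2) K := by
  set U : Matrix (Fin N) (Fin N) ℝ := (hA.eigenvectorUnitary : Matrix (Fin N) (Fin N) ℝ) with hU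
  have hUU : U * star U = 1 := Unitary.mul_star_self_of_mem hA.eigenvectorUnitary.2
  have hUU' : star U * U = 1 := Unitary.star_mul_self_of_mem hA.eigenvectorUnitary.2
  have hsp : A = U * Matrix.diagonal hA.eigenvalues * star U := by
    have := hA.spectral_theorem
    rw [Unitary.conjStarAlgAut_apply] at this
    simpa using this
  set D := Matrix.diagonal hA.eigenvalues with hD
  set C := star U * B * U with hC
  have hCB : B = U * C * star U := by
    rw [hC]
    calc B = (U * star U) * B * (U * star U) := by rw [hUU]; simp
      _ = _ := by simp only [mul_assoc]
  have hCs : C.transpose = C := by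
    have h := hB.eq
    rw [Matrix.conjTranspose_eq_transpose_of_trivial] at h
    rw [hC]
    simp only [Matrix.star_eq_conjTranspose, Matrix.conjTranspose_eq_transpose_of_trivial,
      Matrix.transpose_mul, Matrix.transpose_transpose, h, mul_assoc]
  have conj : ∀ Y Z : Matrix (Fin N) (Fin N) ℝ,
      (U * Y * star U) * (U * Z * star U) = U * (Y * Z) * star U := by
    intro Y Z
    calc _ = U * Y * (star U * U) * Z * star U := by simp only [mul_assoc]
      _ = _ := by rw [hUU']; simp only [mul_assoc, mul_one]
  have trc : ∀ Y : Matrix (Fin N) (Fin N) ℝ, (U * Y * star U).trace = Y.trace := by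
    intro Y
    rw [Matrix.trace_mul_comm, ← mul_assoc, hUU', one_mul]
  have t1 : (A * B).trace = ∑ j, hA.eigenvalues j * C j j := by
    conv_lhs => rw [hCB, hsp]
    rw [conj, trc]
    simp [Matrix.trace, hD, Matrix.diagonal_mul]
  have t2 : (B * B).trace = (C * C).trace := by rw [hCB, conj, trc]
  have t3 : (B * B * (B * B)).trace = (C * C * (C * C)).trace := by
    rw [hCB, conj, conj, trc]
  have t4 : (A * A).trace = ∑ j, (hA.eigenvalues j) ^ 2 := by
    conv_lhs => rw [hsp]
    rw [conj, trc]
    simp [Matrix.trace, hD, sq]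
  have sym : ∀ i j, C i j = C j i := fun i j => by
    conv_lhs => rw [← hCs]
    rfl
  have d2 : ∀ j, C j j ^ 2 ≤ (C * C) j j := by
    intro j
    rw [Matrix.mul_apply]
    have : ∀ k, C j k * C k j = C j k ^ 2 := fun k => by rw [sym k j]; ring
    simp only [this]
    exact Finset.single_le_sum (f := fun k => C j k ^ 2) (fun k _ => sq_nonneg _)
      (Finset.mem_univ j)
  have sym2 : ∀ i j, (C * C) i j = (C * C) j i := by
    intro i j
    simp only [Matrix.mul_apply]
    refine Finset.sum_congr rfl fun k _ => ?_
    rw [sym i k, sym k j]; ring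
  have d4 : ∀ j, C j j ^ 4 ≤ (C * C * (C * C)) j j := by
    intro j
    rw [Matrix.mul_apply]
    have : ∀ k, (C * C) j k * (C * C) k j = (C * C) j k ^ 2 := fun k => by rw [sym2 k j]; ring
    simp only [this]
    have h1 := Finset.single_le_sum (f := fun k => (C * C) j k ^ 2) (fun k _ => sq_nonneg _)
      (Finset.mem_univ j)
    have h2 := pow_le_pow_left₀ (sq_nonneg (C j j)) (d2 j) 2
    calc C j j ^ 4 = (C j j ^ 2) ^ 2 := by ring
      _ ≤ _ := h2.trans h1
  have s2 : ∑ j, C j j ^ 2 ≤ (B * B).trace := by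
    rw [t2]; exact Finset.sum_le_sum fun j _ => d2 j
  have s4 : ∑ j, C j j ^ 4 ≤ (B * B * (B * B)).trace := by
    rw [t3]; exact Finset.sum_le_sum fun j _ => d4 j
  calc _ ≤ 2 * (∑ j, hA.eigenvalues j * C j j) - (∑ j, C j j ^ 2) - c * (∑ j, C j j ^ 4)
        - η * ∑ j, (hA.eigenvalues j) ^ 2 := by
        rw [t1, t4]; nlinarith
    _ = ∑ j, (2 * hA.eigenvalues j * C j j - C j j ^ 2 - c * C j j ^ 4
        - η * (hA.eigenvalues j) ^ 2) := by
        simp only [Finset.mul_sum, ← Finset.sum_sub_distrib]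
        refine Finset.sum_congr rfl fun j _ => by ring
    _ ≤ _ := Finset.sum_le_sum fun j _ => ptwise_low _ _ _ _ _ hc hη hK

/-- If `S ≤ T` are psd then `S = L T` with `L T Lᵀ ≤ S`. -/
lemma factor_psd {I : Type*} [Fintype I] [DecidableEq I] (S T : Matrix I I ℝ)
    (hS : S.PosSemidef)
    (hST : ∀ v : I → ℝ, v ⬝ᵥ S.mulVec v ≤ v ⬝ᵥ T.mulVec v) :
    ∃ L : Matrix I I ℝ, L * T = S ∧
      ∀ v : I → ℝ, v ⬝ᵥ (L * T * L.transpose).mulVec v ≤ v ⬝ᵥ S.mulVec v := by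
  have hker : LinearMap.ker T.mulVecLin ≤ LinearMap.ker S.mulVecLin := by
    intro v hv
    simp only [LinearMap.mem_ker, Matrix.mulVecLin_apply] at hv ⊢
    rw [← hS.dotProduct_mulVec_zero_iff]
    simp only [star_trivial]
    refine le_antisymm ?_ ?_
    · have := hST v; rw [hv] at this; simpa using this
    · have := hS.dotProduct_mulVec_nonneg v; simpa using this
  obtain ⟨l, hl⟩ : ∃ l : (I → ℝ) →ₗ[ℝ] (I → ℝ), l ∘ₗ T.mulVecLin = S.mulVecLin := by
    obtain ⟨l, hl⟩ := LinearMap.exists_extend ((LinearMap.ker T.mulVecLin).liftQ S.mulVecLin hker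
      ∘ₗ T.mulVecLin.quotKerEquivRange.symm.toLinearMap)
    refine ⟨l, LinearMap.ext fun x => ?_⟩
    have := LinearMap.congr_fun hl ⟨T.mulVecLin x, LinearMap.mem_range_self _ x⟩
    simp only [LinearMap.comp_apply, LinearEquiv.coe_coe, Submodule.subtype_apply] at this ⊢
    rw [this, LinearMap.quotKerEquivRange_symm_apply_image]
    simp
  have hLT : LinearMap.toMatrix' l * T = S := by
    have := congrArg LinearMap.toMatrix' hl
    rw [LinearMap.toMatrix'_comp, ← Matrix.toLin'_apply', ← Matrix.toLin'_apply',
      LinearMap.toMatrix'_toLin', LinearMap.toMatrix'_toLin'] at this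
    exact this
  refine ⟨LinearMap.toMatrix' l, hLT, ?_⟩
  set L := LinearMap.toMatrix' l
  intro v
  have hSt : S.transpose = S := by
    have := hS.1.eq; rwa [Matrix.conjTranspose_eq_transpose_of_trivial] at this
  set u := L.transpose.mulVec v with hu
  have a1 : v ⬝ᵥ (L * T * L.transpose).mulVec v = u ⬝ᵥ T.mulVec u := by
    rw [hu, ← Matrix.mulVec_mulVec, ← Matrix.mulVec_mulVec, Matrix.dotProduct_mulVec,
      Matrix.mulVec_transpose]
  have a2 : v ⬝ᵥ (L * T * L.transpose).mulVec v = v ⬝ᵥ S.mulVec u := by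
    rw [hLT, hu, Matrix.mulVec_mulVec]
  have a3 : u ⬝ᵥ S.mulVec v = v ⬝ᵥ S.mulVec u := by
    rw [Matrix.dotProduct_mulVec, ← Matrix.mulVec_transpose, hSt, dotProduct_comm]
  have a4 := hS.dotProduct_mulVec_nonneg (v - u)
  simp only [star_trivial, Matrix.mulVec_sub, dotProduct_sub, sub_dotProduct] at a4
  have a5 := hST u
  linarith

lemma young_int {Ω : Type*} [MeasurableSpace Ω] {P : Measure Ω} {Y S : Ω → ℝ}
    (hY : IsCG P Y) (hS : IsCG P S) (t : ℝ) (ht : 0 < t) :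
    2 * ∫ ω, Y ω * S ω ∂P ≤ t * (∫ ω, Y ω ^ 2 ∂P) + (∫ ω, S ω ^ 2 ∂P) / t := by
  have i1 : Integrable (fun ω => t * Y ω ^ 2) P := by
    simpa [sq] using (hY.int_mul hY).const_mul t
  have i2 : Integrable (fun ω => S ω ^ 2 / t) P := by
    simpa [sq] using (hS.int_mul hS).div_const t
  rw [← integral_const_mul, ← integral_const_mul, ← integral_div, ← integral_add i1 i2]
  refine integral_mono ((hY.int_mul hS).const_mul 2) (int_add_fun i1 i2) fun ω => ?_
  have : 0 ≤ (t * Y ω - S ω) ^ 2 / t := by positivity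
  have e : (t * Y ω - S ω) ^ 2 / t = t * Y ω ^ 2 + S ω ^ 2 / t - 2 * (Y ω * S ω) := by
    field_simp; ring
  simp only
  linarith

section four
variable {Ω : Type*} [MeasurableSpace Ω] {P : Measure Ω} {N : ℕ}
  {C : Fin N → Fin N → Ω → ℝ} {κ : ℝ}

lemma four_row (hκ : 0 < κ)
    (hG : ∀ v : Fin N × Fin N → ℝ, IsCG P (fun ω => ∑ p, v p * C p.1 p.2 ω))
    (hV : ∀ v : Fin N × Fin N → ℝ, ∫ ω, (∑ p, v p * C p.1 p.2 ω) ^ 2 ∂P ≤ κ * ∑ p, v p ^ 2)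
    (p : Fin N × Fin N) :
    ∑ q : Fin N × Fin N, (∫ ω, C p.1 p.2 ω * C q.1 q.2 ω ∂P) ^ 2 ≤ κ ^ 2 := by
  have hC : ∀ p : Fin N × Fin N, IsCG P (C p.1 p.2) := fun p => by
    have := hG (Pi.single p 1)
    simpa [Pi.single_apply, ite_mul] using this
  have hC2 : ∫ ω, C p.1 p.2 ω ^ 2 ∂P ≤ κ := by
    have := hV (Pi.single p 1)
    simpa [Pi.single_apply, ite_mul, ite_pow] using this
  set k : Fin N × Fin N → ℝ := fun q => ∫ ω, C p.1 p.2 ω * C q.1 q.2 ω ∂P with hk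
  have h1 := young_int (hC p) (hG k) κ hκ
  have h2 : ∫ ω, C p.1 p.2 ω * (∑ q, k q * C q.1 q.2 ω) ∂P = ∑ q, k q ^ 2 := by
    simp only [Finset.mul_sum]
    rw [integral_finsetSum]
    · refine Finset.sum_congr rfl fun q _ => ?_
      rw [sq]
      change _ = k q * ∫ ω, C p.1 p.2 ω * C q.1 q.2 ω ∂P
      rw [← integral_const_mul]
      congr 1; ext ω; ring
    · intro q _
      refine ((hC p).int_mul (hC q)).const_mul (k q) |>.congr (Eventually.of_forall fun ω => ?_)
      simp only; ring
  have h3 := hV k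
  have h4 : (∫ ω, (∑ q, k q * C q.1 q.2 ω) ^ 2 ∂P) / κ ≤ ∑ q, k q ^ 2 := by
    rw [div_le_iff₀ hκ]; linarith
  rw [h2] at h1
  nlinarith

lemma four_b (hκ : 0 < κ) (hN : 0 < N)
    (hG : ∀ v : Fin N × Fin N → ℝ, IsCG P (fun ω => ∑ p, v p * C p.1 p.2 ω))
    (hV : ∀ v : Fin N × Fin N → ℝ, ∫ ω, (∑ p, v p * C p.1 p.2 ω) ^ 2 ∂P ≤ κ * ∑ p, v p ^ 2)
    (i : Fin N) :
    ∑ k, (∑ j, ∫ ω, C i j ω * C j k ω ∂P) ^ 2 ≤ (N : ℝ) ^ 2 * κ ^ 2 := by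
  have hC : ∀ a b, IsCG P (C a b) := fun a b => by
    have := hG (Pi.single (a, b) 1)
    simpa [Pi.single_apply, ite_mul] using this
  have hC2 : ∀ a b, ∫ ω, C a b ω ^ 2 ∂P ≤ κ := fun a b => by
    have := hV (Pi.single (a, b) 1)
    simpa [Pi.single_apply, ite_mul, ite_pow] using this
  have hN' : (0 : ℝ) < N := by exact_mod_cast hN
  set b : Fin N → ℝ := fun k => ∑ j, ∫ ω, C i j ω * C j k ω ∂P with hb
  change ∑ k, b k ^ 2 ≤ _
  set β := ∑ k, b k ^ 2 with hβ
  have es : ∀ j ω, ∑ p : Fin N × Fin N, (if p.1 = j then b p.2 else 0) * C p.1 p.2 ω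
      = ∑ k, b k * C j k ω := by
    intro j ω
    rw [Fintype.sum_prod_type, Finset.sum_eq_single j]
    · simp
    · intro a _ ha; simp [ha]
    · simp
  have es2 : ∀ j, ∑ p : Fin N × Fin N, (if p.1 = j then b p.2 else 0) ^ 2 = β := by
    intro j
    rw [Fintype.sum_prod_type, Finset.sum_eq_single j]
    · simp [hβ]
    · intro a _ ha; simp [ha]
    · simp
  have hS : ∀ j, IsCG P (fun ω => ∑ k, b k * C j k ω) := by
    intro j
    have := hG (fun p => if p.1 = j then b p.2 else 0)
    simpa only [es] using this
  have hS2 : ∀ j, ∫ ω, (∑ k, b k * C j k ω) ^ 2 ∂P ≤ κ * β := by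
    intro j
    have := hV (fun p => if p.1 = j then b p.2 else 0)
    simpa only [es, es2] using this
  have h1 : ∀ j, 2 * ∫ ω, C i j ω * (∑ k, b k * C j k ω) ∂P ≤ N * κ ^ 2 + β / N := by
    intro j
    have h := young_int (hC i j) (hS j) (N * κ) (by positivity)
    have h' : (∫ ω, (∑ k, b k * C j k ω) ^ 2 ∂P) / (N * κ) ≤ β / N := by
      rw [div_le_div_iff₀ (by positivity) hN']
      nlinarith [hS2 j]
    have h'' : N * κ * ∫ ω, C i j ω ^ 2 ∂P ≤ N * κ * κ :=
      mul_le_mul_of_nonneg_left (hC2 i j) (by positivity)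
    nlinarith
  have h2 : ∀ j, ∫ ω, C i j ω * (∑ k, b k * C j k ω) ∂P
      = ∑ k, b k * ∫ ω, C i j ω * C j k ω ∂P := by
    intro j
    simp only [Finset.mul_sum]
    rw [integral_finsetSum]
    · refine Finset.sum_congr rfl fun k _ => ?_
      rw [← integral_const_mul]
      congr 1; ext ω; ring
    · intro k _
      refine ((hC i j).int_mul (hC j k)).const_mul (b k) |>.congr (Eventually.of_forall fun ω => ?_)
      simp only; ring
  have h3 : ∑ j, ∑ k, b k * ∫ ω, C i j ω * C j k ω ∂P = β := by
    rw [Finset.sum_comm, hβ]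
    refine Finset.sum_congr rfl fun k _ => ?_
    rw [← Finset.mul_sum, sq]
  have h4 : 2 * β ≤ N ^ 2 * κ ^ 2 + β := by
    rw [← h3, Finset.mul_sum]
    have : ∑ j : Fin N, 2 * ∑ k, b k * ∫ ω, C i j ω * C j k ω ∂P
        ≤ ∑ j : Fin N, (N * κ ^ 2 + β / N) :=
      Finset.sum_le_sum fun j _ => by rw [← h2]; exact h1 j
    refine this.trans (le_of_eq ?_)
    rw [h3]
    simp only [Finset.sum_const, Finset.card_univ, Fintype.card_fin, nsmul_eq_mul]
    field_simp
  linarith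

lemma four_moment (hκ : 0 < κ) (hN : 0 < N) (hsym : ∀ i j, C i j = C j i)
    (hG : ∀ v : Fin N × Fin N → ℝ, IsCG P (fun ω => ∑ p, v p * C p.1 p.2 ω))
    (hV : ∀ v : Fin N × Fin N → ℝ, ∫ ω, (∑ p, v p * C p.1 p.2 ω) ^ 2 ∂P ≤ κ * ∑ p, v p ^ 2) :
    Integrable (fun ω => ∑ i, ∑ k, ∑ j, ∑ l, C i j ω * C j k ω * C k l ω * C l i ω) P ∧
    ∫ ω, ∑ i, ∑ k, ∑ j, ∑ l, C i j ω * C j k ω * C k l ω * C l i ω ∂P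
      ≤ 3 * (N : ℝ) ^ 3 * κ ^ 2 := by
  have hw : ∀ i j k l, _ := fun i j k l => wick (P := P) (a := C i j) (b := C j k) (c := C k l)
    (d := C l i) (fun s t u w => by
      have := hG (Pi.single (i, j) s + Pi.single (j, k) t + Pi.single (k, l) u
        + Pi.single (l, i) w)
      simpa [Pi.single_apply, ite_mul, add_mul, Finset.sum_add_distrib] using this)
  have hint : ∀ i k j l, Integrable (fun ω => C i j ω * C j k ω * C k l ω * C l i ω) P :=
    fun i k j l => (hw i j k l).1
  refine ⟨integrable_finsetSum _ fun i _ => integrable_finsetSum _ fun k _ =>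
    integrable_finsetSum _ fun j _ => integrable_finsetSum _ fun l _ => hint i k j l, ?_⟩
  rw [integral_finsetSum _ (fun i _ => integrable_finsetSum _ fun k _ =>
    integrable_finsetSum _ fun j _ => integrable_finsetSum _ fun l _ => hint i k j l)]
  have e1 : ∀ i, ∫ ω, ∑ k, ∑ j, ∑ l, C i j ω * C j k ω * C k l ω * C l i ω ∂P
      = ∑ k, ∑ j, ∑ l, ∫ ω, C i j ω * C j k ω * C k l ω * C l i ω ∂P := by
    intro i
    rw [integral_finsetSum _ (fun k _ =>
      integrable_finsetSum _ fun j _ => integrable_finsetSum _ fun l _ => hint i k j l)]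
    refine Finset.sum_congr rfl fun k _ => ?_
    rw [integral_finsetSum _ (fun j _ => integrable_finsetSum _ fun l _ => hint i k j l)]
    refine Finset.sum_congr rfl fun j _ => ?_
    rw [integral_finsetSum _ (fun l _ => hint i k j l)]
  simp only [e1]
  simp only [fun i j k l => (hw i j k l).2]
  set m : Fin N → Fin N → Fin N → Fin N → ℝ := fun a b c d => ∫ ω, C a b ω * C c d ω ∂P with hm
  change ∑ i, ∑ k, ∑ j, ∑ l, (m i j j k * m k l l i + m i j k l * m j k l i
    + m i j l i * m j k k l) ≤ _
  have hN' : (1 : ℝ) ≤ N := by exact_mod_cast hN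
  set b : Fin N → Fin N → ℝ := fun i k => ∑ j, m i j j k with hb
  have hbs : ∑ i, ∑ k, b i k ^ 2 ≤ (N : ℝ) ^ 3 * κ ^ 2 := by
    have : ∑ i, ∑ k, b i k ^ 2 ≤ ∑ i : Fin N, (N : ℝ) ^ 2 * κ ^ 2 :=
      Finset.sum_le_sum fun i _ => four_b hκ hN hG hV i
    refine this.trans (le_of_eq ?_)
    simp; ring
  have hms : ∑ i, ∑ j, ∑ k, ∑ l, m i j k l ^ 2 ≤ (N : ℝ) ^ 2 * κ ^ 2 := by
    have : ∑ i, ∑ j, ∑ k, ∑ l, m i j k l ^ 2 ≤ ∑ i : Fin N, ∑ j : Fin N, κ ^ 2 :=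
      Finset.sum_le_sum fun i _ => Finset.sum_le_sum fun j _ => by
        have := four_row hκ hG hV (i, j)
        rw [Fintype.sum_prod_type] at this
        exact this
    refine this.trans (le_of_eq ?_)
    simp; ring
  simp only [Finset.sum_add_distrib]
  have t1 : ∑ i, ∑ k, ∑ j, ∑ l, m i j j k * m k l l i ≤ (N : ℝ) ^ 3 * κ ^ 2 := by
    have e : ∀ i k, ∑ j, ∑ l, m i j j k * m k l l i = b i k * b k i := by
      intro i k; rw [hb, Finset.sum_mul_sum]
    simp only [e]
    have : ∑ i, ∑ k, b i k * b k i ≤ ∑ i, ∑ k, (b i k ^ 2 + b k i ^ 2) / 2 :=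
      Finset.sum_le_sum fun i _ => Finset.sum_le_sum fun k _ => by
        nlinarith [sq_nonneg (b i k - b k i)]
    simp only [← Finset.sum_div, Finset.sum_add_distrib] at this
    rw [Finset.sum_comm (f := fun i k => b k i ^ 2)] at this
    linarith
  have t3 : ∑ i, ∑ k, ∑ j, ∑ l, m i j l i * m j k k l ≤ (N : ℝ) ^ 3 * κ ^ 2 := by
    refine le_trans (le_of_eq ?_) hbs
    have e : ∀ j l, b j l ^ 2 = ∑ i, ∑ k, m i j l i * m j k k l := by
      intro j l
      have : ∀ i, m i j l i = m j i i l := fun i => by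
        simp only [hm]; rw [hsym i j, hsym l i]
      simp only [this]
      rw [hb, sq, Finset.sum_mul_sum]
    simp only [e]
    calc ∑ i, ∑ k, ∑ j, ∑ l, m i j l i * m j k k l
        = ∑ i, ∑ j, ∑ k, ∑ l, m i j l i * m j k k l :=
          Finset.sum_congr rfl fun i _ => Finset.sum_comm
      _ = ∑ j, ∑ i, ∑ k, ∑ l, m i j l i * m j k k l := Finset.sum_comm
      _ = ∑ j, ∑ i, ∑ l, ∑ k, m i j l i * m j k k l :=
          Finset.sum_congr rfl fun j _ => Finset.sum_congr rfl fun i _ => Finset.sum_comm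
      _ = ∑ j, ∑ l, ∑ i, ∑ k, m i j l i * m j k k l :=
          Finset.sum_congr rfl fun j _ => Finset.sum_comm
  have t2 : ∑ i, ∑ k, ∑ j, ∑ l, m i j k l * m j k l i ≤ (N : ℝ) ^ 2 * κ ^ 2 := by
    have h1 : ∑ i, ∑ k, ∑ j, ∑ l, m i j k l * m j k l i
        ≤ ∑ i, ∑ k, ∑ j, ∑ l, (m i j k l ^ 2 + m j k l i ^ 2) / 2 :=
      Finset.sum_le_sum fun i _ => Finset.sum_le_sum fun k _ => Finset.sum_le_sum fun j _ =>
        Finset.sum_le_sum fun l _ => by nlinarith [sq_nonneg (m i j k l - m j k l i)]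
    simp only [← Finset.sum_div, Finset.sum_add_distrib] at h1
    have h2 : ∑ i, ∑ k, ∑ j, ∑ l, m i j k l ^ 2 = ∑ i, ∑ j, ∑ k, ∑ l, m i j k l ^ 2 :=
      Finset.sum_congr rfl fun i _ => Finset.sum_comm
    have h3 : ∑ i, ∑ k, ∑ j, ∑ l, m j k l i ^ 2 = ∑ i, ∑ j, ∑ k, ∑ l, m i j k l ^ 2 := by
      calc ∑ i, ∑ k, ∑ j, ∑ l, m j k l i ^ 2
          = ∑ i, ∑ j, ∑ k, ∑ l, m j k l i ^ 2 :=
            Finset.sum_congr rfl fun i _ => Finset.sum_comm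
        _ = ∑ j, ∑ i, ∑ k, ∑ l, m j k l i ^ 2 := Finset.sum_comm
        _ = ∑ j, ∑ k, ∑ i, ∑ l, m j k l i ^ 2 :=
            Finset.sum_congr rfl fun j _ => Finset.sum_comm
        _ = ∑ j, ∑ k, ∑ l, ∑ i, m j k l i ^ 2 :=
            Finset.sum_congr rfl fun j _ => Finset.sum_congr rfl fun k _ => Finset.sum_comm
    linarith
  have : (N : ℝ) ^ 2 * κ ^ 2 ≤ (N : ℝ) ^ 3 * κ ^ 2 := by
    have : (N : ℝ) ^ 2 ≤ N ^ 3 := pow_le_pow_right₀ hN' (by norm_num)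
    nlinarith [sq_nonneg κ]
  linarith
end four

def ee {N : ℕ} (i : Fin N) (x : ℝ) : ℂ := Complex.exp (Complex.I * ((((i : ℕ) + 1 : ℝ) * x : ℝ) : ℂ))

def ph {N : ℕ} (p : Fin N × Fin N) (q : ℝ × ℝ) : ℂ := ee p.1 q.1 * ee p.2 q.2

lemma ee_norm {N : ℕ} (i : Fin N) (x : ℝ) : ‖ee i x‖ = 1 := by
  rw [ee, mul_comm, Complex.norm_exp_ofReal_mul_I]

lemma ee_cont {N : ℕ} (i : Fin N) : Continuous (ee i) := by
  unfold ee; fun_prop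

lemma ph_cont {N : ℕ} (p : Fin N × Fin N) : Continuous (ph p) := by
  unfold ph
  exact ((ee_cont _).comp continuous_fst).mul ((ee_cont _).comp continuous_snd)

lemma ph_norm {N : ℕ} (p : Fin N × Fin N) (q) : ‖ph p q‖ = 1 := by
  rw [ph, norm_mul, ee_norm, ee_norm, one_mul]

def SM {N : ℕ} (m : Measure (ℝ × ℝ)) : Matrix (Fin N × Fin N) (Fin N × Fin N) ℝ :=
  fun p p' => ∫ q, (ph p q * (starRingEnd ℂ) (ph p' q)).re ∂m

lemma ph_int {N : ℕ} (m : Measure (ℝ × ℝ)) [IsFiniteMeasure m] (p p' : Fin N × Fin N) :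
    Integrable (fun q => (ph p q * (starRingEnd ℂ) (ph p' q)).re) m := by
  refine Integrable.of_bound (C := 1) ?_ (Eventually.of_forall fun q => ?_)
  · exact (Complex.continuous_re.comp ((ph_cont p).mul
      (Complex.continuous_conj.comp (ph_cont p')))).aestronglyMeasurable
  · refine (Complex.abs_re_le_norm _).trans ?_
    rw [norm_mul, RCLike.norm_conj, ph_norm, ph_norm, one_mul]

lemma normSq_sum {I : Type*} [Fintype I] (c : I → ℝ) (z : I → ℂ) :
    Complex.normSq (∑ p, (c p : ℂ) * z p)
      = ∑ p, ∑ p', c p * (z p * (starRingEnd ℂ) (z p')).re * c p' := by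
  have : (Complex.normSq (∑ p, (c p : ℂ) * z p) : ℂ)
      = ∑ p, ∑ p', (c p : ℂ) * (z p * (starRingEnd ℂ) (z p')) * c p' := by
    rw [← Complex.mul_conj, map_sum, Finset.sum_mul_sum]
    refine Finset.sum_congr rfl fun p _ => Finset.sum_congr rfl fun p' _ => ?_
    rw [map_mul, Complex.conj_ofReal]; ring
  have h := congrArg Complex.re this
  rw [Complex.ofReal_re] at h
  rw [h, Complex.re_sum]
  refine Finset.sum_congr rfl fun p _ => ?_
  rw [Complex.re_sum]
  refine Finset.sum_congr rfl fun p' _ => ?_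
  rw [mul_comm, ← mul_assoc, ← Complex.ofReal_mul, Complex.re_ofReal_mul]; ring

lemma quad_expand {I : Type*} [Fintype I] (T : Matrix I I ℝ) (v : I → ℝ) :
    v ⬝ᵥ T.mulVec v = ∑ p, ∑ p', v p * T p p' * v p' := by
  simp only [dotProduct, Matrix.mulVec, Finset.mul_sum]
  refine Finset.sum_congr rfl fun p _ => Finset.sum_congr rfl fun p' _ => by ring

lemma SM_quad {N : ℕ} (m : Measure (ℝ × ℝ)) [IsFiniteMeasure m] (c : Fin N × Fin N → ℝ) :
    Integrable (fun q => Complex.normSq (∑ p, (c p : ℂ) * ph p q)) m ∧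
    c ⬝ᵥ (SM m).mulVec c = ∫ q, Complex.normSq (∑ p, (c p : ℂ) * ph p q) ∂m := by
  simp only [normSq_sum]
  have h : ∀ p p', Integrable (fun q => c p * (ph p q * (starRingEnd ℂ) (ph p' q)).re * c p') m :=
    fun p p' => ((ph_int m p p').const_mul _).mul_const _
  refine ⟨integrable_finsetSum _ fun p _ => integrable_finsetSum _ fun p' _ => h p p', ?_⟩
  rw [quad_expand, integral_finsetSum _ fun p _ => integrable_finsetSum _ fun p' _ => h p p']
  refine Finset.sum_congr rfl fun p _ => ?_
  rw [integral_finsetSum _ fun p' _ => h p p']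
  refine Finset.sum_congr rfl fun p' _ => ?_
  rw [integral_mul_const, integral_const_mul, SM]

lemma SM_symm {N : ℕ} (m : Measure (ℝ × ℝ)) (p p' : Fin N × Fin N) : SM m p p' = SM m p' p := by
  unfold SM
  congr 1; ext q
  rw [← Complex.conj_re, map_mul, Complex.conj_conj, mul_comm]

lemma SM_psd {N : ℕ} (m : Measure (ℝ × ℝ)) [IsFiniteMeasure m] :
    (SM m : Matrix (Fin N × Fin N) (Fin N × Fin N) ℝ).PosSemidef := by
  refine Matrix.PosSemidef.of_dotProduct_mulVec_nonneg ?_ fun c => ?_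
  · ext p p'
    simp [Matrix.conjTranspose_apply, SM_symm m p p']
  · simp only [star_trivial]
    rw [(SM_quad m c).2]
    exact integral_nonneg fun q => Complex.normSq_nonneg _

lemma SM_diag {N : ℕ} (m : Measure (ℝ × ℝ)) (p : Fin N × Fin N) : SM m p p = m.real Set.univ := by
  have : ∀ q, (ph p q * (starRingEnd ℂ) (ph p q)).re = 1 := fun q => by
    rw [Complex.mul_conj, Complex.ofReal_re, Complex.normSq_eq_norm_sq, ph_norm]; norm_num
  simp only [SM, this]
  simp

lemma SM_swap {N : ℕ} (m : Measure (ℝ × ℝ)) [IsFiniteMeasure m] :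
    0 ≤ ∑ i : Fin N, ∑ j : Fin N, SM m (i, j) (j, i) := by
  simp only [SM]
  have h : ∑ i : Fin N, ∑ j : Fin N, ∫ q, (ph (i, j) q * (starRingEnd ℂ) (ph (j, i) q)).re ∂m
      = ∫ q, ∑ i : Fin N, ∑ j : Fin N, (ph (i, j) q * (starRingEnd ℂ) (ph (j, i) q)).re ∂m := by
    rw [integral_finsetSum _ fun i _ => integrable_finsetSum _ fun j _ => ph_int m _ _]
    refine Finset.sum_congr rfl fun p _ => ?_
    rw [integral_finsetSum _ fun j _ => ph_int m _ _]
  rw [h]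
  refine integral_nonneg fun q => ?_
  have : ∑ i : Fin N, ∑ j : Fin N, (ph (i, j) q * (starRingEnd ℂ) (ph (j, i) q)).re
      = Complex.normSq (∑ i : Fin N, ee i q.1 * (starRingEnd ℂ) (ee i q.2)) := by
    have : (Complex.normSq (∑ i : Fin N, ee i q.1 * (starRingEnd ℂ) (ee i q.2)) : ℂ)
        = ∑ i : Fin N, ∑ j : Fin N, (ph (i, j) q * (starRingEnd ℂ) (ph (j, i) q)) := by
      rw [← Complex.mul_conj, map_sum, Finset.sum_mul_sum]
      refine Finset.sum_congr rfl fun p _ => Finset.sum_congr rfl fun p' _ => ?_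
      simp only [ph, map_mul, Complex.conj_conj]; ring
    have h := congrArg Complex.re this
    rw [Complex.ofReal_re] at h
    rw [h, Complex.re_sum]
    refine Finset.sum_congr rfl fun p _ => ?_
    rw [Complex.re_sum]
  simp only [this]
  exact Complex.normSq_nonneg _

section proc
variable {Ω : Type} [MeasurableSpace Ω] {P : Measure Ω}
  {X : ℤ → ℤ → Ω → ℝ} {ν νd : Measure (ℝ × ℝ)} {f : ℝ × ℝ → ℝ}

def Xp {N : ℕ} (X : ℤ → ℤ → Ω → ℝ) (p : Fin N × Fin N) (ω : Ω) : ℝ :=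
  X ((p.1 : ℕ) + 1) ((p.2 : ℕ) + 1) ω

lemma Xp_gauss (hX : StatGauss P X) {N : ℕ} (c : Fin N × Fin N → ℝ) :
    IsCG P (fun ω => ∑ p, c p * Xp X p ω) := by
  constructor
  · refine Finset.measurable_fun_sum _ fun p _ => ?_
    exact (hX.meas _ _).const_mul _
  · let e : Fin N × Fin N ↪ ℤ × ℤ := ⟨fun p => ((p.1 : ℕ) + 1, (p.2 : ℕ) + 1), by
      rintro ⟨a, b⟩ ⟨a', b'⟩ h
      simp only [Prod.mk.injEq] at h
      ext
      · have := h.1; simp only; omega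
      · have := h.2; simp only; omega⟩
    obtain ⟨v, hv⟩ := hX.gauss ((Finsupp.equivFunOnFinite.symm c).embDomain e)
    refine ⟨v, ?_⟩
    rw [← hv]
    congr 1; ext ω
    change _ = ((Finsupp.equivFunOnFinite.symm c).embDomain e).sum (fun p a => a * X p.1 p.2 ω)
    rw [Finsupp.sum_embDomain, Finsupp.sum_fintype _ _ (by simp)]
    rfl

lemma Xp_cov (hX : StatGauss P X) (hν : SpectralDecomp P X ν νd f) {N : ℕ}
    (p p' : Fin N × Fin N) : ∫ ω, Xp X p ω * Xp X p' ω ∂P = SM ν p p' := by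
  have := hν.finite
  set u : ℤ := (p'.1 : ℕ) - (p.1 : ℕ) with hu
  set v : ℤ := (p'.2 : ℕ) - (p.2 : ℕ) with hv
  have h1 := hX.stat ((p.1 : ℕ) + 1) ((p.2 : ℕ) + 1) u v
  have h2 := hν.herglotz u v
  rw [← h1] at h2
  have e1 : ((p.1 : ℕ) + 1 + u : ℤ) = (p'.1 : ℕ) + 1 := by omega
  have e2 : ((p.2 : ℕ) + 1 + v : ℤ) = (p'.2 : ℕ) + 1 := by omega
  rw [e1, e2] at h2
  have e3 : ∀ q : ℝ × ℝ, Complex.exp (Complex.I * ((u * q.1 + v * q.2 : ℝ) : ℂ))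
      = ph p' q * (starRingEnd ℂ) (ph p q) := by
    intro q
    simp only [ph, ee, map_mul, ← Complex.exp_conj, Complex.conj_I, Complex.conj_ofReal]
    simp only [← Complex.exp_add]
    congr 1
    rw [hu, hv]; push_cast; ring
  simp only [e3] at h2
  rw [SM_symm]
  have h3 := congrArg Complex.re h2
  rw [Complex.ofReal_re] at h3
  rw [SM]
  change ∫ ω, X _ _ ω * X _ _ ω ∂P = _
  rw [← h3]
  have := integral_re (𝕜 := ℂ) (μ := ν) (f := fun q => ph p' q * (starRingEnd ℂ) (ph p q)) ?_
  · simpa using this.symm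
  · refine Integrable.of_bound (C := 1) ?_ (Eventually.of_forall fun q => ?_)
    · exact ((ph_cont p').mul (Complex.continuous_conj.comp (ph_cont p))).aestronglyMeasurable
    · rw [norm_mul, RCLike.norm_conj, ph_norm, ph_norm, one_mul]
end proc

lemma ee_orth {N : ℕ} (i i' : Fin N) :
    ∫ x in Set.Ioc (-π) π, ee i x * (starRingEnd ℂ) (ee i' x)
      = if i = i' then ((2 * π : ℝ) : ℂ) else 0 := by
  rw [← intervalIntegral.integral_of_le (by linarith [pi_pos])]
  split_ifs with h
  · subst h
    have : ∀ x, ee i x * (starRingEnd ℂ) (ee i x) = 1 := fun x => by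
      rw [Complex.mul_conj, Complex.normSq_eq_norm_sq, ee_norm]; norm_num
    simp only [this]
    simp; ring
  · set n : ℤ := (i : ℕ) - (i' : ℕ) with hn
    have hn0 : n ≠ 0 := by
      intro h0; apply h; ext; omega
    have e : ∀ x : ℝ, ee i x * (starRingEnd ℂ) (ee i' x) = Complex.exp ((n * Complex.I) * x) := by
      intro x
      simp only [ee, map_mul, ← Complex.exp_conj, Complex.conj_I, Complex.conj_ofReal]
      simp only [← Complex.exp_add]
      congr 1
      rw [hn]; push_cast; ring
    simp only [e]
    rw [integral_exp_mul_complex (by simp [hn0])]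
    have : Complex.exp (n * Complex.I * (π : ℝ)) = Complex.exp (n * Complex.I * ((-π : ℝ) : ℂ)) := by
      have h1 : (n * Complex.I * (π : ℝ) : ℂ)
          = n * Complex.I * ((-π : ℝ) : ℂ) + n * (2 * π * Complex.I) := by
        push_cast; ring
      rw [h1, Complex.exp_add, Complex.exp_int_mul_two_pi_mul_I, mul_one]
    rw [this, sub_self, zero_div]

lemma SM_vol {N : ℕ} (p p' : Fin N × Fin N) :
    SM (volume.restrict specBox) p p' = if p = p' then 4 * π ^ 2 else 0 := by
  have hbox : (volume.restrict specBox : Measure (ℝ × ℝ))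
      = (volume.restrict (Set.Ioc (-π) π)).prod (volume.restrict (Set.Ioc (-π) π)) := by
    rw [Measure.prod_restrict]; rfl
  have : IsFiniteMeasure (volume.restrict specBox : Measure (ℝ × ℝ)) := by
    rw [hbox]; infer_instance
  have h1 := integral_re (𝕜 := ℂ) (μ := volume.restrict specBox)
    (f := fun q => ph p q * (starRingEnd ℂ) (ph p' q)) (by
      refine Integrable.of_bound (C := 1) ?_ (Eventually.of_forall fun q => ?_)
      · exact ((ph_cont p).mul (Complex.continuous_conj.comp (ph_cont p'))).aestronglyMeasurable
      · rw [norm_mul, RCLike.norm_conj, ph_norm, ph_norm, one_mul])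
  have h2 : ∫ q in specBox, ph p q * (starRingEnd ℂ) (ph p' q)
      = (∫ x in Set.Ioc (-π) π, ee p.1 x * (starRingEnd ℂ) (ee p'.1 x))
        * (∫ x in Set.Ioc (-π) π, ee p.2 x * (starRingEnd ℂ) (ee p'.2 x)) := by
    rw [hbox, ← integral_prod_mul]
    congr 1; ext q
    simp only [ph, map_mul]; ring
  rw [h2, ee_orth, ee_orth] at h1
  simp only [SM]
  refine Eq.trans (by simpa using h1) ?_
  by_cases h : p = p'
  · subst h
    have hc : (2 * (π : ℂ) * (2 * π)) = ((4 * π ^ 2 : ℝ) : ℂ) := by push_cast; ring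
    have hc2 := congrArg Complex.re hc
    rw [Complex.ofReal_re] at hc2
    simpa using hc2
  · rw [if_neg h]
    by_cases h' : p.1 = p'.1
    · have : p.2 ≠ p'.2 := fun h'' => h (Prod.ext h' h'')
      simp [this]
    · simp [h']

def mM (f : ℝ × ℝ → ℝ) (M : ℝ) : Measure (ℝ × ℝ) :=
  (volume.restrict specBox).withDensity (fun q => ENNReal.ofReal (min (f q) M))

lemma SM_mono {N : ℕ} (m m' : Measure (ℝ × ℝ)) [IsFiniteMeasure m] [IsFiniteMeasure m']
    (h : m ≤ m') (c : Fin N × Fin N → ℝ) :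
    c ⬝ᵥ (SM m).mulVec c ≤ c ⬝ᵥ (SM m').mulVec c := by
  rw [(SM_quad m c).2, (SM_quad m' c).2]
  exact integral_mono_measure h (Eventually.of_forall fun q => Complex.normSq_nonneg _)
    (SM_quad m' c).1

lemma SM_bound {N : ℕ} (f : ℝ × ℝ → ℝ) (M : ℝ) (hM : 0 ≤ M) [IsFiniteMeasure (mM f M)]
    (c : Fin N × Fin N → ℝ) :
    c ⬝ᵥ (SM (mM f M)).mulVec c ≤ 4 * π ^ 2 * M * ∑ p, c p ^ 2 := by
  have : IsFiniteMeasure (volume.restrict specBox : Measure (ℝ × ℝ)) := by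
    have : (volume.restrict specBox : Measure (ℝ × ℝ))
      = (volume.restrict (Set.Ioc (-π) π)).prod (volume.restrict (Set.Ioc (-π) π)) := by
      rw [Measure.prod_restrict]; rfl
    rw [this]; infer_instance
  have hle : mM f M ≤ ENNReal.ofReal M • volume.restrict specBox := by
    rw [← withDensity_const]
    exact withDensity_mono (Eventually.of_forall fun q => ENNReal.ofReal_le_ofReal (min_le_right _ _))
  have hfin : IsFiniteMeasure (ENNReal.ofReal M • volume.restrict specBox : Measure (ℝ × ℝ)) :=
    Measure.smul_finite _ ENNReal.ofReal_ne_top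
  refine (SM_mono _ _ hle c).trans (le_of_eq ?_)
  rw [(SM_quad _ c).2, integral_smul_measure, ← (SM_quad _ c).2, quad_expand]
  simp only [SM_vol]
  simp only [mul_ite, ite_mul, mul_zero, zero_mul, Finset.sum_ite_eq, Finset.mem_univ, if_true,
    ENNReal.toReal_ofReal hM, smul_eq_mul, Finset.mul_sum]
  refine Finset.sum_congr rfl fun p _ => by ring

section proc2
variable {Ω : Type} [MeasurableSpace Ω] {P : Measure Ω}
  {X : ℤ → ℤ → Ω → ℝ} {ν νd : Measure (ℝ × ℝ)} {f : ℝ × ℝ → ℝ}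

lemma mM_le (hν : SpectralDecomp P X ν νd f) (M : ℝ) : mM f M ≤ ν := by
  conv_rhs => rw [hν.decomp]
  refine le_trans ?_ (Measure.le_add_right le_rfl)
  exact withDensity_mono (Eventually.of_forall fun q => ENNReal.ofReal_le_ofReal (min_le_left _ _))

lemma scaledW_apply {N : ℕ} (ω : Ω) (i j : Fin N) :
    scaledW X N ω i j = (Real.sqrt N)⁻¹ * (Xp X (i, j) ω + Xp X (j, i) ω) := rfl

lemma scaledW_herm (N : ℕ) (ω : Ω) : (scaledW X N ω).IsHermitian := by
  ext i j
  simp only [Matrix.conjTranspose_apply, star_trivial, scaledW_apply]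
  ring

lemma int_quad {I : Type*} [Fintype I] {b : I → Ω → ℝ}
    (hb : ∀ p, IsCG P (b p)) (v : I → ℝ) :
    ∫ ω, (∑ p, v p * b p ω) ^ 2 ∂P = ∑ p, ∑ p', v p * (∫ ω, b p ω * b p' ω ∂P) * v p' := by
  have e : ∀ ω, (∑ p, v p * b p ω) ^ 2 = ∑ p, ∑ p', v p * (b p ω * b p' ω) * v p' := by
    intro ω
    rw [sq, Finset.sum_mul_sum]
    refine Finset.sum_congr rfl fun p _ => Finset.sum_congr rfl fun p' _ => by ring
  have hi : ∀ p p', Integrable (fun ω => v p * (b p ω * b p' ω) * v p') P := fun p p' =>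
    (((hb p).int_mul (hb p')).const_mul _).mul_const _
  simp only [e]
  rw [integral_finsetSum _ fun p _ => integrable_finsetSum _ fun p' _ => hi p p']
  refine Finset.sum_congr rfl fun p _ => ?_
  rw [integral_finsetSum _ fun p' _ => hi p p']
  refine Finset.sum_congr rfl fun p' _ => ?_
  rw [integral_mul_const, integral_const_mul]

lemma lower_N (hX : StatGauss P X) (hν : SpectralDecomp P X ν νd f) {N : ℕ} (hN : 0 < N)
    (M : ℝ) (hM : 0 < M) :
    ∃ B : Ω → Matrix (Fin N) (Fin N) ℝ, (∀ ω, (B ω).IsHermitian) ∧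
      Integrable (fun ω => (scaledW X N ω * B ω).trace) P ∧
      Integrable (fun ω => (B ω * B ω).trace) P ∧
      Integrable (fun ω => (B ω * B ω * (B ω * B ω)).trace) P ∧
      Integrable (fun ω => (scaledW X N ω * scaledW X N ω).trace) P ∧
      N * (2 * (mM f M).real Set.univ) ≤ 2 * (∫ ω, (scaledW X N ω * B ω).trace ∂P)
        - ∫ ω, (B ω * B ω).trace ∂P ∧
      ∫ ω, (B ω * B ω * (B ω * B ω)).trace ∂P ≤ N * (3 * (16 * π ^ 2 * M) ^ 2) ∧
      ∫ ω, (scaledW X N ω * scaledW X N ω).trace ∂P ≤ N * (4 * ν.real Set.univ) := by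
  have := hν.finite
  have hmf : IsFiniteMeasure (mM f M) := isFiniteMeasure_of_le ν (mM_le hν M)
  have hN' : (0 : ℝ) < N := by exact_mod_cast hN
  have hsq : (Real.sqrt N)⁻¹ * (Real.sqrt N)⁻¹ = (N : ℝ)⁻¹ := by
    rw [← mul_inv, Real.mul_self_sqrt hN'.le]
  obtain ⟨L, hL, hLS⟩ := factor_psd (I := Fin N × Fin N) (SM (mM f M)) (SM ν) (SM_psd _)
    (SM_mono _ _ (mM_le hν M))
  set S : Matrix (Fin N × Fin N) (Fin N × Fin N) ℝ := SM (mM f M) with hS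
  set T : Matrix (Fin N × Fin N) (Fin N × Fin N) ℝ := SM ν with hT
  have hXG : ∀ p : Fin N × Fin N, IsCG P (Xp X p) := fun p => by
    have := Xp_gauss hX (Pi.single p 1)
    simpa [Pi.single_apply, ite_mul] using this
  set b : Fin N × Fin N → Ω → ℝ := fun p ω => ∑ r, L p r * Xp X r ω with hb
  have hbG : ∀ p, IsCG P (b p) := fun p => Xp_gauss hX (L p)
  -- linear combos
  have hbL : ∀ v : Fin N × Fin N → ℝ, IsCG P (fun ω => ∑ p, v p * b p ω) := by
    intro v
    have := Xp_gauss hX (fun r => ∑ p, v p * L p r)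
    convert! this using 2 with ω
    simp only [hb, Finset.mul_sum, Finset.sum_mul]
    rw [Finset.sum_comm]
    refine Finset.sum_congr rfl fun p _ => Finset.sum_congr rfl fun p' _ => by ring
  have hXb : ∀ p p', ∫ ω, Xp X p ω * b p' ω ∂P = S p' p := by
    intro p p'
    rw [← hL, Matrix.mul_apply]
    simp only [hb, Finset.mul_sum]
    rw [integral_finsetSum]
    · refine Finset.sum_congr rfl fun r _ => ?_
      rw [hT, SM_symm, ← Xp_cov hX hν, ← integral_const_mul]
      congr 1; ext ω; ring
    · intro r _
      refine (((hXG p).int_mul (hXG r)).const_mul (L p' r)).congr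
        (Eventually.of_forall fun ω => ?_)
      simp only; ring
  have hbb : ∀ p p', ∫ ω, b p ω * b p' ω ∂P = (L * T * L.transpose) p p' := by
    intro p p'
    rw [hL, Matrix.mul_apply]
    have : ∀ ω, b p ω * b p' ω = ∑ r, L p' r * (Xp X r ω * b p ω) := by
      intro ω
      conv_lhs => rw [hb]
      simp only
      rw [mul_comm, Finset.sum_mul]
      refine Finset.sum_congr rfl fun r _ => ?_
      simp only [hb]; ring
    simp only [this]
    rw [integral_finsetSum _ fun r _ => ((hXG r).int_mul (hbG p)).const_mul _]
    refine Finset.sum_congr rfl fun r _ => ?_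
    rw [integral_const_mul, hXb, Matrix.transpose_apply]; ring
  have hbq : ∀ v : Fin N × Fin N → ℝ, ∫ ω, (∑ p, v p * b p ω) ^ 2 ∂P ≤ v ⬝ᵥ S.mulVec v := by
    intro v
    rw [int_quad hbG]
    simp only [hbb]
    rw [← quad_expand]
    exact hLS v
  set C : Fin N → Fin N → Ω → ℝ := fun i j ω => b (i, j) ω + b (j, i) ω with hC
  have hCsym : ∀ i j, C i j = C j i := fun i j => by
    funext ω; simp only [hC]; ring
  have hCv : ∀ (v : Fin N × Fin N → ℝ) ω, ∑ p, v p * C p.1 p.2 ω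
      = ∑ p, (v p + v p.swap) * b p ω := by
    intro v ω
    simp only [hC, mul_add, add_mul, Finset.sum_add_distrib]
    congr 1
    refine Fintype.sum_equiv (Equiv.prodComm _ _) _ _ fun p => ?_
    rcases p with ⟨p1, p2⟩
    simp
  have hCG : ∀ v : Fin N × Fin N → ℝ, IsCG P (fun ω => ∑ p, v p * C p.1 p.2 ω) := by
    intro v; simp only [hCv]; exact hbL _
  have hCV : ∀ v : Fin N × Fin N → ℝ, ∫ ω, (∑ p, v p * C p.1 p.2 ω) ^ 2 ∂P
      ≤ (16 * π ^ 2 * M) * ∑ p, v p ^ 2 := by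
    intro v
    simp only [hCv]
    refine (hbq _).trans ((SM_bound f M hM.le _).trans ?_)
    have h1 : ∑ p : Fin N × Fin N, (v p + v p.swap) ^ 2
        ≤ ∑ p : Fin N × Fin N, (2 * v p ^ 2 + 2 * v p.swap ^ 2) :=
      Finset.sum_le_sum fun p _ => by nlinarith [sq_nonneg (v p - v p.swap)]
    have h2 : ∑ p : Fin N × Fin N, v p.swap ^ 2 = ∑ p, v p ^ 2 :=
      Fintype.sum_equiv (Equiv.prodComm _ _) _ _ fun p => by simp
    rw [Finset.sum_add_distrib, ← Finset.mul_sum, ← Finset.mul_sum, h2] at h1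
    have h3 : 0 ≤ 4 * π ^ 2 * M := by positivity
    nlinarith [mul_le_mul_of_nonneg_left h1 h3]
  have hC1 : ∀ i j, IsCG P (C i j) := fun i j => by
    have := hCG (Pi.single (i, j) 1)
    simpa [Pi.single_apply, ite_mul] using this
  have hW1 : ∀ i j : Fin N, IsCG P (fun ω => Xp X (i, j) ω + Xp X (j, i) ω) := fun i j => by
    have := Xp_gauss hX (Pi.single (i, j) 1 + Pi.single (j, i) 1)
    simpa [Pi.single_apply, ite_mul, add_mul, Finset.sum_add_distrib] using this
  -- trace formulas
  set B : Ω → Matrix (Fin N) (Fin N) ℝ := fun ω => Matrix.of fun i j => (Real.sqrt N)⁻¹ * C i j ω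
    with hB
  have hBa : ∀ ω i j, B ω i j = (Real.sqrt N)⁻¹ * C i j ω := fun ω i j => rfl
  have tAB : ∀ ω, (scaledW X N ω * B ω).trace
      = ∑ i, ∑ j, (N : ℝ)⁻¹ * ((Xp X (i, j) ω + Xp X (j, i) ω) * C i j ω) := by
    intro ω
    simp only [Matrix.trace, Matrix.diag, Matrix.mul_apply, scaledW_apply, hBa]
    refine Finset.sum_congr rfl fun i _ => Finset.sum_congr rfl fun j _ => ?_
    rw [hCsym j i, ← hsq]; ring
  have tBB : ∀ ω, (B ω * B ω).trace = ∑ i, ∑ j, (N : ℝ)⁻¹ * (C i j ω * C i j ω) := by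
    intro ω
    simp only [Matrix.trace, Matrix.diag, Matrix.mul_apply, hBa]
    refine Finset.sum_congr rfl fun i _ => Finset.sum_congr rfl fun j _ => ?_
    rw [hCsym j i, ← hsq]; ring
  have tAA : ∀ ω, (scaledW X N ω * scaledW X N ω).trace = ∑ i : Fin N, ∑ j : Fin N, (N : ℝ)⁻¹ *
      ((Xp X (i, j) ω + Xp X (j, i) ω) * (Xp X (i, j) ω + Xp X (j, i) ω)) := by
    intro ω
    simp only [Matrix.trace, Matrix.diag, Matrix.mul_apply, scaledW_apply]
    refine Finset.sum_congr rfl fun i _ => Finset.sum_congr rfl fun j _ => ?_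
    rw [← hsq]; ring
  have tB4 : ∀ ω, (B ω * B ω * (B ω * B ω)).trace
      = (N : ℝ)⁻¹ ^ 2 * ∑ i, ∑ k, ∑ j, ∑ l, C i j ω * C j k ω * C k l ω * C l i ω := by
    intro ω
    simp only [Matrix.trace, Matrix.diag, Matrix.mul_apply, hBa, Finset.sum_mul_sum]
    rw [Finset.mul_sum]
    refine Finset.sum_congr rfl fun i _ => ?_
    rw [Finset.mul_sum]
    refine Finset.sum_congr rfl fun k _ => ?_
    rw [Finset.mul_sum]
    refine Finset.sum_congr rfl fun j _ => ?_
    rw [Finset.mul_sum]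
    refine Finset.sum_congr rfl fun l _ => ?_
    rw [← hsq]; ring
  have iAB : ∀ i j, Integrable (fun ω =>
      (N : ℝ)⁻¹ * ((Xp X (i, j) ω + Xp X (j, i) ω) * C i j ω)) P :=
    fun i j => ((hW1 i j).int_mul (hC1 i j)).const_mul _
  have iBB : ∀ i j, Integrable (fun ω => (N : ℝ)⁻¹ * (C i j ω * C i j ω)) P :=
    fun i j => ((hC1 i j).int_mul (hC1 i j)).const_mul _
  have iAA : ∀ i j : Fin N, Integrable (fun ω => (N : ℝ)⁻¹ *
      ((Xp X (i, j) ω + Xp X (j, i) ω) * (Xp X (i, j) ω + Xp X (j, i) ω))) P :=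
    fun i j => ((hW1 i j).int_mul (hW1 i j)).const_mul _
  have hκ : 0 < 16 * π ^ 2 * M := by positivity
  have h4 := four_moment hκ hN hCsym hCG hCV
  have dsum : ∀ g : Fin N → Fin N → Ω → ℝ, (∀ i j, Integrable (g i j) P) →
      ∫ ω, ∑ i, ∑ j, g i j ω ∂P = ∑ i, ∑ j, ∫ ω, g i j ω ∂P := by
    intro g hg
    rw [integral_finsetSum _ fun i _ => integrable_finsetSum _ fun j _ => hg i j]
    refine Finset.sum_congr rfl fun i _ => ?_
    rw [integral_finsetSum _ fun j _ => hg i j]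
  refine ⟨B, ?_, ?_, ?_, ?_, ?_, ?_, ?_, ?_⟩
  · intro ω
    ext i j
    simp only [Matrix.conjTranspose_apply, star_trivial, hBa, hCsym i j]
  · simp only [tAB]
    exact integrable_finsetSum _ fun i _ => integrable_finsetSum _ fun j _ => iAB i j
  · simp only [tBB]
    exact integrable_finsetSum _ fun i _ => integrable_finsetSum _ fun j _ => iBB i j
  · simp only [tB4]
    exact h4.1.const_mul _
  · simp only [tAA]
    exact integrable_finsetSum _ fun i _ => integrable_finsetSum _ fun j _ => iAA i j
  · simp only [tAB, tBB]
    rw [dsum _ iAB, dsum _ iBB]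
    have e1 : ∀ i j, ∫ ω, (N : ℝ)⁻¹ * ((Xp X (i, j) ω + Xp X (j, i) ω) * C i j ω) ∂P
        = (N : ℝ)⁻¹ * (2 * (mM f M).real Set.univ + 2 * S (i, j) (j, i)) := by
      intro i j
      rw [integral_const_mul]
      congr 1
      have : ∀ ω, (Xp X (i, j) ω + Xp X (j, i) ω) * C i j ω
          = (Xp X (i, j) ω * b (i, j) ω + Xp X (i, j) ω * b (j, i) ω)
            + (Xp X (j, i) ω * b (i, j) ω + Xp X (j, i) ω * b (j, i) ω) := by
        intro ω; simp only [hC]; ring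
      simp only [this]
      rw [integral_add (int_add_fun ((hXG _).int_mul (hbG _)) ((hXG _).int_mul (hbG _)))
        (int_add_fun ((hXG _).int_mul (hbG _)) ((hXG _).int_mul (hbG _))),
        integral_add ((hXG _).int_mul (hbG _)) ((hXG _).int_mul (hbG _)),
        integral_add ((hXG _).int_mul (hbG _)) ((hXG _).int_mul (hbG _)),
        hXb, hXb, hXb, hXb, hS, SM_diag, SM_diag, SM_symm _ (j, i) (i, j)]
      ring
    have e2 : ∀ i j, ∫ ω, (N : ℝ)⁻¹ * (C i j ω * C i j ω) ∂P
        ≤ (N : ℝ)⁻¹ * (2 * (mM f M).real Set.univ + 2 * S (i, j) (j, i)) := by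
      intro i j
      rw [integral_const_mul]
      refine mul_le_mul_of_nonneg_left ?_ (by positivity)
      have h := hbq (Pi.single (i, j) 1 + Pi.single (j, i) 1)
      have h' : ∀ ω, (∑ p, (Pi.single (i, j) 1 + Pi.single (j, i) 1 : Fin N × Fin N → ℝ) p * b p ω)
          = C i j ω := by
        intro ω
        simp [Pi.single_apply, ite_mul, add_mul, Finset.sum_add_distrib, hC]
      simp only [h', sq] at h
      refine h.trans (le_of_eq ?_)
      simp only [add_dotProduct, Matrix.mulVec_add, dotProduct_add,
        Matrix.mulVec_single_one, single_one_dotProduct, Matrix.col_apply]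
      rw [hS, SM_diag, SM_diag, SM_symm _ (j, i) (i, j)]
      ring
    simp only [e1]
    have e3 : ∑ i, ∑ j, ∫ ω, (N : ℝ)⁻¹ * (C i j ω * C i j ω) ∂P
        ≤ ∑ i, ∑ j, (N : ℝ)⁻¹ * (2 * (mM f M).real Set.univ + 2 * S (i, j) (j, i)) :=
      Finset.sum_le_sum fun i _ => Finset.sum_le_sum fun j _ => e2 i j
    have e4 : ∑ i, ∑ j, (N : ℝ)⁻¹ * (2 * (mM f M).real Set.univ + 2 * S (i, j) (j, i))
        = N * (2 * (mM f M).real Set.univ) + (N : ℝ)⁻¹ * 2 * ∑ i, ∑ j, S (i, j) (j, i) := by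
      simp only [← Finset.mul_sum, Finset.sum_add_distrib, Finset.sum_const, Finset.card_univ,
        Fintype.card_fin, nsmul_eq_mul]
      field_simp
    have e5 : 0 ≤ (N : ℝ)⁻¹ * 2 * ∑ i, ∑ j, S (i, j) (j, i) :=
      mul_nonneg (by positivity) (SM_swap _)
    linarith
  · simp only [tB4]
    rw [integral_const_mul]
    have := mul_le_mul_of_nonneg_left h4.2 (by positivity : 0 ≤ (N : ℝ)⁻¹ ^ 2)
    refine this.trans (le_of_eq ?_)
    field_simp
  · simp only [tAA]
    rw [dsum _ iAA]
    have e2 : ∀ i j : Fin N, ∫ ω, (N : ℝ)⁻¹ *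
        ((Xp X (i, j) ω + Xp X (j, i) ω) * (Xp X (i, j) ω + Xp X (j, i) ω)) ∂P
        ≤ (N : ℝ)⁻¹ * (4 * ν.real Set.univ) := by
      intro i j
      rw [integral_const_mul]
      refine mul_le_mul_of_nonneg_left ?_ (by positivity)
      have h : ∫ ω, (2 * (Xp X (i, j) ω * Xp X (i, j) ω) + 2 * (Xp X (j, i) ω * Xp X (j, i) ω)) ∂P
          = 4 * ν.real Set.univ := by
        rw [integral_add (((hXG _).int_mul (hXG _)).const_mul _)
          (((hXG _).int_mul (hXG _)).const_mul _), integral_const_mul, integral_const_mul,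
          Xp_cov hX hν, Xp_cov hX hν, SM_diag, SM_diag]
        ring
      rw [← h]
      refine integral_mono ((hW1 i j).int_mul (hW1 i j))
        (int_add_fun (((hXG _).int_mul (hXG _)).const_mul _)
          (((hXG _).int_mul (hXG _)).const_mul _)) fun ω => ?_
      simp only
      nlinarith [sq_nonneg (Xp X (i, j) ω - Xp X (j, i) ω)]
    have := Finset.sum_le_sum fun i (_ : i ∈ Finset.univ) =>
      Finset.sum_le_sum fun j (_ : j ∈ Finset.univ) => e2 i j
    refine this.trans (le_of_eq ?_)
    simp only [Finset.sum_const, Finset.card_univ, Fintype.card_fin, nsmul_eq_mul]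
    field_simp
end proc2

def uh {N : ℕ} (u : EuclideanSpace ℝ (Fin N)) (y : ℝ) : ℂ := ∑ j, (u j : ℂ) * ee j y

def cv (N : ℕ) (y : ℝ) : EuclideanSpace ℝ (Fin N) :=
  WithLp.toLp 2 fun j => Real.cos (((j : ℕ) + 1 : ℝ) * y)

def sv (N : ℕ) (y : ℝ) : EuclideanSpace ℝ (Fin N) :=
  WithLp.toLp 2 fun j => Real.sin (((j : ℕ) + 1 : ℝ) * y)

lemma ee_eq {N : ℕ} (j : Fin N) (y : ℝ) : ee j y
    = ((Real.cos (((j : ℕ) + 1 : ℝ) * y) : ℝ) : ℂ)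
      + ((Real.sin (((j : ℕ) + 1 : ℝ) * y) : ℝ) : ℂ) * Complex.I := by
  rw [ee, mul_comm, Complex.exp_mul_I, Complex.ofReal_cos, Complex.ofReal_sin]

lemma uh_eq {N : ℕ} (u : EuclideanSpace ℝ (Fin N)) (y : ℝ) :
    uh u y = ((inner ℝ u (cv N y) : ℝ) : ℂ) + ((inner ℝ u (sv N y) : ℝ) : ℂ) * Complex.I := by
  simp only [uh, ee_eq, PiLp.inner_apply, cv, sv, RCLike.inner_apply, conj_trivial,
    Complex.ofReal_sum, Finset.sum_mul]
  rw [← Finset.sum_add_distrib]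
  refine Finset.sum_congr rfl fun j _ => ?_
  push_cast; ring

lemma uh_normSq {N : ℕ} (u : EuclideanSpace ℝ (Fin N)) (y : ℝ) :
    Complex.normSq (uh u y) = (inner ℝ u (cv N y)) ^ 2 + (inner ℝ u (sv N y)) ^ 2 := by
  rw [uh_eq, Complex.normSq_add_mul_I]

lemma uh_bessel {N : ℕ} {ι : Type*} [Fintype ι] (u : ι → EuclideanSpace ℝ (Fin N))
    (hu : Orthonormal ℝ u) (y : ℝ) : ∑ l, Complex.normSq (uh (u l) y) ≤ N := by
  simp only [uh_normSq, Finset.sum_add_distrib]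
  have h1 := hu.sum_inner_products_le (cv N y) (s := Finset.univ)
  have h2 := hu.sum_inner_products_le (sv N y) (s := Finset.univ)
  simp only [Real.norm_eq_abs, sq_abs] at h1 h2
  have h3 : ‖cv N y‖ ^ 2 + ‖sv N y‖ ^ 2 = N := by
    rw [EuclideanSpace.norm_sq_eq, EuclideanSpace.norm_sq_eq, ← Finset.sum_add_distrib]
    simp [cv, sv]
  linarith

lemma row_bound {N : ℕ} (x y : ℝ) (a b : ℂ) :
    ∑ i : Fin N, Complex.normSq (ee i x * b + ee i y * a)
      ≤ (N + ‖∑ i : Fin N, ee i x * (starRingEnd ℂ) (ee i y)‖)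
        * (Complex.normSq a + Complex.normSq b) := by
  have h0 : ∀ (i : Fin N) (z : ℝ), Complex.normSq (ee i z) = 1 := fun i z => by
    rw [Complex.normSq_eq_norm_sq, ee_norm]; norm_num
  have h1 : ∀ i : Fin N, Complex.normSq (ee i x * b + ee i y * a)
      = Complex.normSq b + Complex.normSq a
        + 2 * ((ee i x * (starRingEnd ℂ) (ee i y)) * (b * (starRingEnd ℂ) a)).re := by
    intro i
    rw [Complex.normSq_add, Complex.normSq_mul, Complex.normSq_mul, h0, h0, map_mul]
    rw [show ee i x * b * ((starRingEnd ℂ) (ee i y) * (starRingEnd ℂ) a)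
      = (ee i x * (starRingEnd ℂ) (ee i y)) * (b * (starRingEnd ℂ) a) by ring]
    ring
  simp only [h1, Finset.sum_add_distrib, ← Finset.mul_sum, ← Complex.re_sum, ← Finset.sum_mul]
  set D := ∑ i : Fin N, ee i x * (starRingEnd ℂ) (ee i y)
  have h2 : (D * (b * (starRingEnd ℂ) a)).re ≤ ‖D‖ * (‖b‖ * ‖a‖) := by
    refine (Complex.re_le_norm _).trans (le_of_eq ?_)
    rw [norm_mul, norm_mul, RCLike.norm_conj]
  simp only [Finset.sum_const, Finset.card_univ, Fintype.card_fin, nsmul_eq_mul,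
    Complex.normSq_eq_norm_sq]
  nlinarith [mul_nonneg (norm_nonneg D) (sq_nonneg (‖a‖ - ‖b‖))]

lemma sum_c {N : ℕ} {R : Type*} [CommSemiring R] (i : Fin N) (u : Fin N → R) (z : Fin N × Fin N → R) :
    ∑ p : Fin N × Fin N, ((if p.1 = i then u p.2 else 0) + (if p.2 = i then u p.1 else 0)) * z p
      = ∑ j, (z (i, j) + z (j, i)) * u j := by
  simp only [add_mul, Finset.sum_add_distrib, Fintype.sum_prod_type, ite_mul, zero_mul]
  congr 1
  · rw [Finset.sum_comm]
    simp [mul_comm]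
  · simp [mul_comm]

def DN (N : ℕ) (q : ℝ × ℝ) : ℝ :=
  ‖∑ i : Fin N, ee i q.1 * (starRingEnd ℂ) (ee i q.2)‖ / N

lemma DN_cont (N : ℕ) : Continuous (DN N) := by
  unfold DN
  refine Continuous.div_const (continuous_norm.comp (continuous_finsetSum _ fun i _ => ?_)) _
  exact ((ee_cont i).comp continuous_fst).mul
    (Complex.continuous_conj.comp ((ee_cont i).comp continuous_snd))

lemma DN_nonneg (N : ℕ) (q) : 0 ≤ DN N q := by unfold DN; positivity

lemma DN_le_one (N : ℕ) (q) : DN N q ≤ 1 := by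
  unfold DN
  rcases Nat.eq_zero_or_pos N with h | h
  · subst h; simp
  rw [div_le_one (by exact_mod_cast h)]
  refine (norm_sum_le _ _).trans ?_
  simp [norm_mul, RCLike.norm_conj, ee_norm]

lemma DN_tendsto (q : ℝ × ℝ) (hq : q ∈ specBox) (hne : q.1 ≠ q.2) :
    Tendsto (fun N => DN N q) atTop (nhds 0) := by
  set w : ℂ := Complex.exp (Complex.I * ((q.1 - q.2 : ℝ) : ℂ)) with hw
  have hw1 : w ≠ 1 := by
    intro h
    rw [hw, Complex.exp_eq_one_iff] at h
    obtain ⟨n, hn⟩ := h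
    have h1 : ((q.1 - q.2 : ℝ) : ℂ) = ((n * (2 * π) : ℝ) : ℂ) := by
      have : Complex.I * ((q.1 - q.2 : ℝ) : ℂ) = Complex.I * ((n * (2 * π) : ℝ) : ℂ) := by
        rw [hn]; push_cast; ring
      exact mul_left_cancel₀ Complex.I_ne_zero this
    have h2 : q.1 - q.2 = n * (2 * π) := by exact_mod_cast h1
    obtain ⟨⟨a1, a2⟩, ⟨b1, b2⟩⟩ := hq
    have hn0 : n ≠ 0 := by
      rintro rfl
      apply hne
      simp at h2; linarith
    have hp := pi_pos
    rcases lt_or_gt_of_ne hn0 with h3 | h3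
    · have : (n : ℝ) ≤ -1 := by exact_mod_cast Int.le_sub_one_of_lt h3
      nlinarith
    · have : (1 : ℝ) ≤ n := by exact_mod_cast h3
      nlinarith
  have hwn : ‖w‖ = 1 := by rw [hw, mul_comm, Complex.norm_exp_ofReal_mul_I]
  have hpos : 0 < ‖w - 1‖ := norm_pos_iff.2 (sub_ne_zero.2 hw1)
  have hb : ∀ N : ℕ, ‖∑ i : Fin N, ee i q.1 * (starRingEnd ℂ) (ee i q.2)‖ ≤ 2 / ‖w - 1‖ := by
    intro N
    have e : ∀ i : Fin N, ee i q.1 * (starRingEnd ℂ) (ee i q.2) = w * w ^ (i : ℕ) := by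
      intro i
      rw [← pow_succ', hw, ← Complex.exp_nat_mul]
      simp only [ee, map_mul, ← Complex.exp_conj, Complex.conj_I, Complex.conj_ofReal]
      rw [← Complex.exp_add]
      congr 1
      push_cast; ring
    simp only [e]
    rw [← Finset.mul_sum, Fin.sum_univ_eq_sum_range (fun i => w ^ i), norm_mul, hwn, one_mul,
      le_div_iff₀ hpos, ← norm_mul, geom_sum_mul]
    refine (norm_sub_le _ _).trans ?_
    rw [norm_pow, hwn]; norm_num
  refine squeeze_zero (fun N => DN_nonneg N q)
    (fun N => div_le_div_of_nonneg_right (hb N) (Nat.cast_nonneg N)) ?_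
  exact tendsto_const_nhds.div_atTop tendsto_natCast_atTop_atTop

section proc3
variable {Ω : Type} [MeasurableSpace Ω] {P : Measure Ω}
  {X : ℤ → ℤ → Ω → ℝ} {ν νd : Measure (ℝ × ℝ)} {f : ℝ × ℝ → ℝ}

lemma upper_N (hX : StatGauss P X) (hν : SpectralDecomp P X ν νd f) {N : ℕ} (hN : 0 < N)
    (S : Finset ℝ) (K : ℝ) (hK : 0 ≤ K) :
    ∃ U : Ω → ℝ, Integrable U P ∧
      (∀ ω, ∑ j, min (((scaledW_herm (X := X) N ω).eigenvalues j) ^ 2) K ≤ U ω + K * (2 * S.card)) ∧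
      ∫ ω, U ω ∂P ≤ N * ∫ q in ((S : Set ℝ) ×ˢ (S : Set ℝ))ᶜ, (2 + 2 * DN N q) ∂ν := by
  have := hν.finite
  have hN' : (0 : ℝ) < N := by exact_mod_cast hN
  classical
  set V : Submodule ℝ (EuclideanSpace ℝ (Fin N)) :=
    Submodule.span ℝ (↑(S.image (cv N) ∪ S.image (sv N)) : Set _) with hV
  set u : Fin (Module.finrank ℝ Vᗮ) → EuclideanSpace ℝ (Fin N) :=
    fun l => (stdOrthonormalBasis ℝ Vᗮ l : EuclideanSpace ℝ (Fin N)) with hudef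
  have hu : Orthonormal ℝ u :=
    (stdOrthonormalBasis ℝ Vᗮ).orthonormal.comp_linearIsometry Vᗮ.subtypeₗᵢ
  have hcard : (N : ℝ) - Fintype.card (Fin (Module.finrank ℝ Vᗮ)) ≤ 2 * S.card := by
    have h1 := Submodule.finrank_add_finrank_orthogonal V
    rw [finrank_euclideanSpace_fin] at h1
    have h2 : Module.finrank ℝ V ≤ 2 * S.card := by
      refine (finrank_span_finset_le_card _).trans ((Finset.card_union_le _ _).trans ?_)
      have := Finset.card_image_le (s := S) (f := cv N)
      have := Finset.card_image_le (s := S) (f := sv N)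
      omega
    rw [Fintype.card_fin]
    have h3 : (N : ℝ) ≤ 2 * S.card + Module.finrank ℝ Vᗮ := by
      have : N ≤ 2 * S.card + Module.finrank ℝ Vᗮ := by omega
      exact_mod_cast this
    linarith
  have hzero : ∀ l, ∀ a ∈ S, uh (u l) a = 0 := by
    intro l a ha
    have hc : inner ℝ (u l) (cv N a) = 0 := by
      refine Submodule.inner_left_of_mem_orthogonal (K := V) ?_ (stdOrthonormalBasis ℝ Vᗮ l).2
      exact Submodule.subset_span (by simp; exact Or.inl ⟨a, ha, rfl⟩)
    have hs : inner ℝ (u l) (sv N a) = 0 := by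
      refine Submodule.inner_left_of_mem_orthogonal (K := V) ?_ (stdOrthonormalBasis ℝ Vᗮ l).2
      exact Submodule.subset_span (by simp; exact Or.inr ⟨a, ha, rfl⟩)
    rw [uh_eq, hc, hs]; simp
  set c : Fin (Module.finrank ℝ Vᗮ) → Fin N → Fin N × Fin N → ℝ := fun l i p =>
    (if p.1 = i then u l p.2 else 0) + (if p.2 = i then u l p.1 else 0) with hc
  have hA : ∀ ω l i, (∑ j, scaledW X N ω i j * u l j) ^ 2
      = (N : ℝ)⁻¹ * (∑ p, c l i p * Xp X p ω) ^ 2 := by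
    intro ω l i
    rw [hc, sum_c i (fun j => u l j) (fun p => Xp X p ω)]
    simp only [scaledW_apply]
    simp only [mul_assoc]
    rw [← Finset.mul_sum, mul_pow, inv_pow, Real.sq_sqrt hN'.le]
  have hcG : ∀ l i, IsCG P (fun ω => ∑ p, c l i p * Xp X p ω) := fun l i => Xp_gauss hX _
  have hXG : ∀ p : Fin N × Fin N, IsCG P (Xp X p) := fun p => by
    have := Xp_gauss hX (Pi.single p 1)
    simpa [Pi.single_apply, ite_mul] using this
  have hcI : ∀ l i, Integrable (fun ω => (N : ℝ)⁻¹ * (∑ p, c l i p * Xp X p ω) ^ 2) P := by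
    intro l i
    simp only [sq]
    exact ((hcG l i).int_mul (hcG l i)).const_mul _
  have hph : ∀ l i q, ∑ p, (c l i p : ℂ) * ph p q
      = ee i q.1 * uh (u l) q.2 + ee i q.2 * uh (u l) q.1 := by
    intro l i q
    have := sum_c i (fun j => (u l j : ℂ)) (fun p => ph p q)
    have e : ∀ p, (c l i p : ℂ) = (if p.1 = i then (u l p.2 : ℂ) else 0)
        + (if p.2 = i then (u l p.1 : ℂ) else 0) := by
      intro p; simp only [hc]; split_ifs <;> simp
    simp only [e]
    rw [this]
    simp only [uh, ph, Finset.mul_sum, ← Finset.sum_add_distrib]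
    refine Finset.sum_congr rfl fun j _ => by ring
  have hcE : ∀ l i, ∫ ω, (N : ℝ)⁻¹ * (∑ p, c l i p * Xp X p ω) ^ 2 ∂P
      = (N : ℝ)⁻¹ * ∫ q, Complex.normSq (ee i q.1 * uh (u l) q.2 + ee i q.2 * uh (u l) q.1) ∂ν := by
    intro l i
    rw [integral_const_mul, int_quad hXG]
    simp only [Xp_cov hX hν]
    rw [← quad_expand, (SM_quad ν _).2]
    simp only [hph]
  have hqI : ∀ l, ∀ i : Fin N, Integrable (fun q : ℝ × ℝ =>
      Complex.normSq (ee i q.1 * uh (u l) q.2 + ee i q.2 * uh (u l) q.1)) ν := by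
    intro l i
    have := (SM_quad ν (c l i)).1
    simpa only [hph] using this
  refine ⟨fun ω => ∑ l, ∑ i, (N : ℝ)⁻¹ * (∑ p, c l i p * Xp X p ω) ^ 2, ?_, ?_, ?_⟩
  · exact integrable_finsetSum _ fun l _ => integrable_finsetSum _ fun i _ => hcI l i
  · intro ω
    have h := eckart_low (scaledW_herm (X := X) N ω) u hu K
    simp only [hA] at h
    nlinarith [mul_le_mul_of_nonneg_left hcard hK]
  · rw [integral_finsetSum _ fun l _ => integrable_finsetSum _ fun i _ => hcI l i]
    have e1 : ∀ l, ∫ ω, ∑ i, (N : ℝ)⁻¹ * (∑ p, c l i p * Xp X p ω) ^ 2 ∂P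
        = (N : ℝ)⁻¹ * ∫ q, ∑ i : Fin N, Complex.normSq (ee i q.1 * uh (u l) q.2 + ee i q.2 * uh (u l) q.1) ∂ν := by
      intro l
      rw [integral_finsetSum _ fun i _ => hcI l i, integral_finsetSum _ fun i _ => hqI l i,
        Finset.mul_sum]
      exact Finset.sum_congr rfl fun i _ => hcE l i
    simp only [e1]
    rw [← Finset.mul_sum, ← integral_finsetSum _ fun l _ => integrable_finsetSum _ fun i _ => hqI l i]
    set T : Set (ℝ × ℝ) := (S : Set ℝ) ×ˢ (S : Set ℝ) with hT
    have hTm : MeasurableSet T := S.finite_toSet.measurableSet.prod S.finite_toSet.measurableSet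
    rw [← setIntegral_eq_integral_of_forall_compl_eq_zero (s := Tᶜ)]
    swap
    · intro q hq
      rw [Set.mem_compl_iff, not_not] at hq
      refine Finset.sum_eq_zero fun l _ => Finset.sum_eq_zero fun i _ => ?_
      rw [hzero l _ hq.1, hzero l _ hq.2]; simp
    have hI : Integrable (fun q => 2 + 2 * DN N q) ν := by
      refine Integrable.of_bound (C := 4) ?_ (Eventually.of_forall fun q => ?_)
      · exact (continuous_const.add (continuous_const.mul (DN_cont N))).aestronglyMeasurable
      · rw [Real.norm_eq_abs, abs_of_nonneg (by linarith [DN_nonneg N q])]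
        linarith [DN_le_one N q]
    have key : ∫ q in Tᶜ, ∑ l, ∑ i : Fin N, Complex.normSq
          (ee i q.1 * uh (u l) q.2 + ee i q.2 * uh (u l) q.1) ∂ν
        ≤ ∫ q in Tᶜ, (N : ℝ) ^ 2 * (2 + 2 * DN N q) ∂ν := by
      refine integral_mono (integrable_finsetSum _ fun l _ => integrable_finsetSum _ fun i _ =>
        hqI l i).integrableOn (hI.const_mul _).integrableOn fun q => ?_
      simp only
      refine (Finset.sum_le_sum fun l _ => row_bound q.1 q.2 (uh (u l) q.1) (uh (u l) q.2)).trans ?_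
      rw [← Finset.mul_sum, Finset.sum_add_distrib]
      have h1 := uh_bessel u hu q.1
      have h2 := uh_bessel u hu q.2
      have h3 : ‖∑ i : Fin N, ee i q.1 * (starRingEnd ℂ) (ee i q.2)‖ = N * DN N q := by
        unfold DN; field_simp
      rw [h3]
      have h4 := DN_nonneg N q
      calc _ ≤ ((N : ℝ) + N * DN N q) * (N + N) :=
            mul_le_mul_of_nonneg_left (add_le_add h1 h2) (by positivity)
        _ = _ := by ring
    rw [integral_const_mul] at key
    refine (mul_le_mul_of_nonneg_left key (by positivity : 0 ≤ (N : ℝ)⁻¹)).trans (le_of_eq ?_)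
    field_simp

end proc3

section proc4
variable {Ω : Type} [MeasurableSpace Ω] {P : Measure Ω}
  {X : ℤ → ℤ → Ω → ℝ} {ν νd : Measure (ℝ × ℝ)} {f : ℝ × ℝ → ℝ}

lemma prob_low [IsProbabilityMeasure P] {e Y : Ω → ℝ} {G ε K : ℝ} (he : ∀ ω, e ω ≤ K)
    (hG : 0 ≤ G) (hε : 0 ≤ ε) (hK : 0 ≤ K) (hYi : Integrable Y P) (hY : ∀ ω, Y ω ≤ e ω) :
    ∫ ω, Y ω ∂P ≤ G + ε + K * (P {ω | ε ≤ |e ω - G|}).toReal := by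
  set E := toMeasurable P {ω | ε ≤ |e ω - G|} with hE
  have hEm : MeasurableSet E := measurableSet_toMeasurable _ _
  have hsub : {ω | ε ≤ |e ω - G|} ⊆ E := subset_toMeasurable _ _
  have h1 : ∀ ω, Y ω ≤ (G + ε) + E.indicator (fun _ => K) ω := by
    intro ω
    by_cases h : ω ∈ E
    · rw [Set.indicator_of_mem h]; linarith [hY ω, he ω]
    · rw [Set.indicator_of_notMem h]
      have : ¬ ε ≤ |e ω - G| := fun h' => h (hsub h')
      have := (abs_lt.1 (not_le.1 this)).2
      linarith [hY ω]
  have hi : Integrable (E.indicator (fun _ => K)) P := (integrable_const K).indicator hEm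
  have h2 := integral_mono hYi (int_add_fun (integrable_const (G + ε)) hi) h1
  rw [integral_add (integrable_const _) hi, integral_indicator_const _ hEm, integral_const] at h2
  simp only [Measure.real, measure_univ, ENNReal.toReal_one, smul_eq_mul, one_mul] at h2
  rw [hE, measure_toMeasurable] at h2
  linarith

lemma prob_up [IsProbabilityMeasure P] {e Y : Ω → ℝ} {G ε K : ℝ} (he : ∀ ω, 0 ≤ e ω)
    (hG : G ≤ K) (hε : 0 ≤ ε) (hK : 0 ≤ K) (hYi : Integrable Y P) (hY : ∀ ω, e ω ≤ Y ω) :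
    G ≤ ∫ ω, Y ω ∂P + ε + K * (P {ω | ε ≤ |e ω - G|}).toReal := by
  have := prob_low (P := P) (e := fun ω => K - e ω) (Y := fun ω => K - Y ω) (G := K - G) (ε := ε)
    (K := K) (fun ω => by linarith [he ω]) (by linarith) hε hK
    (int_sub_fun (integrable_const K) hYi) (fun ω => by linarith [hY ω])
  rw [integral_sub (integrable_const K) hYi, integral_const] at this
  have e : ∀ ω, |K - e ω - (K - G)| = |e ω - G| := fun ω => by
    rw [abs_sub_comm (e ω)]; congr 1; ring
  simp only [e] at this
  simp only [Measure.real, measure_univ, ENNReal.toReal_one, smul_eq_mul, one_mul] at this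
  linarith

lemma gK_cont (K : ℝ) : Continuous (fun x : ℝ => min (x ^ 2) K) := by fun_prop

lemma gK_bdd {K : ℝ} (hK : 0 ≤ K) : ∃ C, ∀ x : ℝ, |min (x ^ 2) K| ≤ C :=
  ⟨K, fun x => by
    rw [abs_of_nonneg (le_min (sq_nonneg x) hK)]; exact min_le_right _ _⟩

lemma gK_int (μ : Measure ℝ) [IsProbabilityMeasure μ] {K : ℝ} (hK : 0 ≤ K) :
    Integrable (fun x : ℝ => min (x ^ 2) K) μ := by
  refine Integrable.of_bound (C := K) (gK_cont K).aestronglyMeasurable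
    (Eventually.of_forall fun x => ?_)
  rw [Real.norm_eq_abs, abs_of_nonneg (le_min (sq_nonneg x) hK)]; exact min_le_right _ _

lemma gK_nonneg (μ : Measure ℝ) {K : ℝ} (hK : 0 ≤ K) :
    0 ≤ ∫ x : ℝ, min (x ^ 2) K ∂μ :=
  integral_nonneg fun x => le_min (sq_nonneg x) hK

lemma gK_le (μ : Measure ℝ) [IsProbabilityMeasure μ] {K : ℝ} (hK : 0 ≤ K) :
    ∫ x : ℝ, min (x ^ 2) K ∂μ ≤ K := by
  have := integral_mono (gK_int μ hK) (integrable_const K) (fun x => min_le_right _ _)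
  simpa using this

lemma esd_eq (N : ℕ) (ω : Ω) (K : ℝ) : esdEval (scaledW X N ω) (fun x => min (x ^ 2) K)
    = (N : ℝ)⁻¹ * ∑ j, min (((scaledW_herm (X := X) N ω).eigenvalues j) ^ 2) K := by
  rw [esdEval, dif_pos (scaledW_herm (X := X) N ω)]

lemma esd_nonneg (N : ℕ) (ω : Ω) {K : ℝ} (hK : 0 ≤ K) :
    0 ≤ esdEval (scaledW X N ω) (fun x => min (x ^ 2) K) := by
  rw [esd_eq]
  exact mul_nonneg (by positivity) (Finset.sum_nonneg fun j _ => le_min (sq_nonneg _) hK)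

lemma esd_le (N : ℕ) (ω : Ω) {K : ℝ} (hK : 0 ≤ K) :
    esdEval (scaledW X N ω) (fun x => min (x ^ 2) K) ≤ K := by
  rw [esd_eq]
  rcases Nat.eq_zero_or_pos N with h | h
  · subst h; simpa using hK
  have hN : (0 : ℝ) < N := by exact_mod_cast h
  rw [inv_mul_le_iff₀ hN]
  refine (Finset.sum_le_sum fun j _ => min_le_right _ _).trans ?_
  simp

lemma bad_tendsto {μ : Measure ℝ} (hconv : ESDTendstoInProb P (scaledW X) μ) {K ε : ℝ}
    (hK : 0 ≤ K) (hε : 0 < ε) :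
    Tendsto (fun N => (P {ω | ε ≤ |esdEval (scaledW X N ω) (fun x => min (x ^ 2) K)
      - ∫ x : ℝ, min (x ^ 2) K ∂μ|}).toReal) atTop (nhds 0) := by
  have h := hconv _ (gK_cont K) (gK_bdd hK) ε hε
  have := (ENNReal.tendsto_toReal ENNReal.zero_ne_top).comp h
  simpa [Function.comp_def] using this

lemma lower_lim [IsProbabilityMeasure P] (hX : StatGauss P X) (hν : SpectralDecomp P X ν νd f)
    {μ : Measure ℝ} [IsProbabilityMeasure μ] (hconv : ESDTendstoInProb P (scaledW X) μ)
    {M c η K : ℝ} (hM : 0 < M) (hc : 0 < c) (hη : 0 < η) (hK : 1 / (4 * c * η ^ 2) ≤ K) :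
    2 * (mM f M).real Set.univ - c * (3 * (16 * π ^ 2 * M) ^ 2) - η * (4 * ν.real Set.univ)
      ≤ ∫ x : ℝ, min (x ^ 2) K ∂μ := by
  have hK0 : 0 ≤ K := le_trans (by positivity) hK
  refine le_of_forall_pos_le_add fun ε hε => ?_
  have hb := (bad_tendsto hconv hK0 hε).const_mul K |>.const_add (∫ x : ℝ, min (x ^ 2) K ∂μ + ε)
  rw [mul_zero, add_zero] at hb
  refine ge_of_tendsto hb ?_
  filter_upwards [eventually_gt_atTop 0] with N hN
  have hN' : (0 : ℝ) < N := by exact_mod_cast hN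
  obtain ⟨B, hB, i1, i2, i3, i4, b1, b2, b3⟩ := lower_N hX hν hN M hM
  have j1 := (i1.const_mul 2)
  have j2 := int_sub_fun j1 i2
  have j3 := int_sub_fun j2 (i3.const_mul c)
  have j4 := int_sub_fun j3 (i4.const_mul η)
  have hlow := prob_low (P := P) (e := fun ω => esdEval (scaledW X N ω) (fun x => min (x ^ 2) K))
    (Y := fun ω => (N : ℝ)⁻¹ * (2 * (scaledW X N ω * B ω).trace - (B ω * B ω).trace
      - c * (B ω * B ω * (B ω * B ω)).trace - η * (scaledW X N ω * scaledW X N ω).trace))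
    (G := ∫ x : ℝ, min (x ^ 2) K ∂μ) (ε := ε) (K := K) (fun ω => esd_le N ω hK0)
    (gK_nonneg μ hK0) hε.le hK0 (j4.const_mul _) (fun ω => by
      rw [esd_eq]
      exact mul_le_mul_of_nonneg_left (trace_low (scaledW_herm N ω) (hB ω) c η K hc hη hK)
        (by positivity))
  rw [integral_const_mul, integral_sub j3 (i4.const_mul η), integral_sub j2 (i3.const_mul c),
    integral_sub j1 i2, integral_const_mul, integral_const_mul, integral_const_mul] at hlow
  refine le_trans ?_ hlow
  rw [le_inv_mul_iff₀ hN']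
  nlinarith [mul_le_mul_of_nonneg_left b2 hc.le, mul_le_mul_of_nonneg_left b3 hη.le]

def mac (f : ℝ × ℝ → ℝ) : Measure (ℝ × ℝ) :=
  (volume.restrict specBox).withDensity (fun q => ENNReal.ofReal (f q))

lemma mac_ae (f : ℝ × ℝ → ℝ) : ∀ᵐ q ∂(mac f), q ∈ specBox ∧ q.1 ≠ q.2 := by
  have h0 : MeasurableSet specBox := measurableSet_Ioc.prod measurableSet_Ioc
  have h1 : ∀ᵐ q ∂(volume.restrict specBox), q ∈ specBox := ae_restrict_mem h0
  have h2 : ∀ᵐ q ∂(volume : Measure (ℝ × ℝ)), q.1 ≠ q.2 := by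
    have hm : MeasurableSet {q : ℝ × ℝ | q.1 ≠ q.2} :=
      (measurableSet_eq_fun measurable_fst measurable_snd).compl
    rw [Measure.volume_eq_prod, Measure.ae_prod_iff_ae_ae hm]
    refine Eventually.of_forall fun x => ?_
    have : ({x}ᶜ : Set ℝ) ∈ ae volume := compl_mem_ae_iff.2 (by simp)
    filter_upwards [this] with y hy
    exact fun h => hy h.symm
  refine (withDensity_absolutelyContinuous _ _).ae_le ?_
  filter_upwards [h1, ae_restrict_of_ae h2] with q a b using ⟨a, b⟩

lemma disc_small (νd : Measure (ℝ × ℝ)) [IsFiniteMeasure νd] (s : Set (ℝ × ℝ)) (hs : s.Countable)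
    (h0 : νd sᶜ = 0) {δ : ℝ} (hδ : 0 < δ) :
    ∃ S : Finset ℝ, νd.real ((S : Set ℝ) ×ˢ (S : Set ℝ))ᶜ ≤ δ := by
  rcases s.eq_empty_or_nonempty with he | hne
  · refine ⟨∅, ?_⟩
    subst he
    simp only [Set.compl_empty] at h0
    simp [Measure.real, h0, hδ.le]
  obtain ⟨g, hg⟩ := hs.exists_eq_range hne
  let S : ℕ → Finset ℝ := fun n =>
    (Finset.range n).image (fun k => (g k).1) ∪ (Finset.range n).image (fun k => (g k).2)
  have hmono : Monotone S := fun a b hab =>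
    Finset.union_subset_union (Finset.image_subset_image (Finset.range_mono hab))
      (Finset.image_subset_image (Finset.range_mono hab))
  let T : ℕ → Set (ℝ × ℝ) := fun n => ((S n : Set ℝ) ×ˢ (S n : Set ℝ))ᶜ
  have hT : ∀ n, MeasurableSet (T n) := fun n =>
    ((S n).finite_toSet.measurableSet.prod (S n).finite_toSet.measurableSet).compl
  have hanti : Antitone T := fun a b hab =>
    Set.compl_subset_compl.2 (Set.prod_mono (Finset.coe_subset.2 (hmono hab))
      (Finset.coe_subset.2 (hmono hab)))
  have hlim := tendsto_measure_iInter_atTop (μ := νd) (fun n => (hT n).nullMeasurableSet) hanti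
    ⟨0, measure_ne_top _ _⟩
  have hz : νd (⋂ n, T n) = 0 := by
    refine measure_mono_null ?_ h0
    intro q hq hqs
    rw [hg] at hqs
    obtain ⟨k, rfl⟩ := hqs
    have := Set.mem_iInter.1 hq (k + 1)
    apply this
    constructor
    · simp only [S, Finset.coe_union, Finset.coe_image]
      exact Or.inl ⟨k, by simp, rfl⟩
    · simp only [S, Finset.coe_union, Finset.coe_image]
      exact Or.inr ⟨k, by simp, rfl⟩
  rw [hz] at hlim
  have hlim' := (ENNReal.tendsto_toReal ENNReal.zero_ne_top).comp hlim
  obtain ⟨n, hn⟩ := (hlim'.eventually (ge_mem_nhds (by simpa using hδ))).exists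
  exact ⟨S n, hn⟩

lemma upper_lim [IsProbabilityMeasure P] (hX : StatGauss P X) (hν : SpectralDecomp P X ν νd f)
    {μ : Measure ℝ} [IsProbabilityMeasure μ] (hconv : ESDTendstoInProb P (scaledW X) μ)
    {K : ℝ} (hK : 0 ≤ K) :
    ∫ x : ℝ, min (x ^ 2) K ∂μ ≤ 2 * (mac f).real Set.univ := by
  have := hν.finite
  have hdec : ν = mac f + νd := hν.decomp
  have f1 : IsFiniteMeasure (mac f) :=
    isFiniteMeasure_of_le ν (by rw [hdec]; exact Measure.le_add_right le_rfl)
  have f2 : IsFiniteMeasure νd :=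
    isFiniteMeasure_of_le ν (by rw [hdec]; exact Measure.le_add_left le_rfl)
  refine le_of_forall_pos_le_add fun ε hε => ?_
  obtain ⟨s, hs, hs0⟩ := hν.discrete
  obtain ⟨S, hS⟩ := disc_small νd s hs hs0 (δ := ε / 8) (by positivity)
  set T : Set (ℝ × ℝ) := (S : Set ℝ) ×ˢ (S : Set ℝ) with hT
  have hTm : MeasurableSet T := S.finite_toSet.measurableSet.prod S.finite_toSet.measurableSet
  have hI : ∀ (N : ℕ) (m : Measure (ℝ × ℝ)) [IsFiniteMeasure m],
      Integrable (fun q => 2 + 2 * DN N q) m := by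
    intro N m _
    refine Integrable.of_bound (C := 4) ?_ (Eventually.of_forall fun q => ?_)
    · exact (continuous_const.add (continuous_const.mul (DN_cont N))).aestronglyMeasurable
    · rw [Real.norm_eq_abs, abs_of_nonneg (by linarith [DN_nonneg N q])]
      linarith [DN_le_one N q]
  have hbnd : ∀ N : ℕ, ∫ q in Tᶜ, (2 + 2 * DN N q) ∂ν
      ≤ ∫ q, (2 + 2 * DN N q) ∂(mac f) + ε / 2 := by
    intro N
    conv_lhs => rw [hdec, Measure.restrict_add]
    rw [integral_add_measure (hI N _) (hI N _)]
    refine add_le_add ?_ ?_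
    · exact setIntegral_le_integral (hI N _)
        (Eventually.of_forall fun q => by
          have := DN_nonneg N q
          simp only [Pi.zero_apply]; linarith)
    · have : ∫ q in Tᶜ, (2 + 2 * DN N q) ∂νd ≤ ∫ q in Tᶜ, (4 : ℝ) ∂νd :=
        integral_mono (hI N _) (integrable_const _) fun q => by
          simp only; linarith [DN_le_one N q]
      refine this.trans ?_
      rw [setIntegral_const, smul_eq_mul]
      linarith
  have hD : Tendsto (fun N => ∫ q, (2 + 2 * DN N q) ∂(mac f)) atTop
      (nhds (∫ _, (2 : ℝ) ∂(mac f))) := by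
    refine tendsto_integral_of_dominated_convergence (fun _ => 4) (fun N => (hI N _).1)
      (integrable_const _) (fun N => Eventually.of_forall fun q => ?_) ?_
    · rw [Real.norm_eq_abs, abs_of_nonneg (by linarith [DN_nonneg N q])]
      linarith [DN_le_one N q]
    · filter_upwards [mac_ae f] with q hq
      have := ((DN_tendsto q hq.1 hq.2).const_mul 2).const_add 2
      simpa using this
  rw [integral_const, smul_eq_mul] at hD
  have hSN : Tendsto (fun N : ℕ => K * (2 * S.card) / (N : ℝ)) atTop (nhds 0) :=
    tendsto_const_nhds.div_atTop tendsto_natCast_atTop_atTop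
  have hb := (bad_tendsto hconv hK (half_pos hε)).const_mul K
  have hall := (((hD.add_const (ε / 2)).add hSN).add_const (ε / 2)).add hb
  refine (ge_of_tendsto hall ?_).trans (le_of_eq (by ring))
  filter_upwards [eventually_gt_atTop 0] with N hN
  have hN' : (0 : ℝ) < N := by exact_mod_cast hN
  obtain ⟨U, hU, hUb, hUi⟩ := upper_N hX hν hN S K hK
  have hup := prob_up (P := P) (e := fun ω => esdEval (scaledW X N ω) (fun x => min (x ^ 2) K))
    (Y := fun ω => (N : ℝ)⁻¹ * (U ω + K * (2 * S.card)))
    (G := ∫ x : ℝ, min (x ^ 2) K ∂μ) (ε := ε / 2) (K := K) (fun ω => esd_nonneg N ω hK)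
    (gK_le μ hK) (by positivity) hK ((int_add_fun hU (integrable_const _)).const_mul _)
    (fun ω => by
      rw [esd_eq]
      exact mul_le_mul_of_nonneg_left (hUb ω) (by positivity))
  rw [integral_const_mul, integral_add hU (integrable_const _), integral_const] at hup
  simp only [Measure.real, measure_univ, ENNReal.toReal_one, smul_eq_mul, one_mul] at hup
  have h1 : (N : ℝ)⁻¹ * (∫ ω, U ω ∂P + K * (2 * S.card))
      ≤ (∫ q, (2 + 2 * DN N q) ∂(mac f) + ε / 2) + K * (2 * S.card) / N := by
    rw [inv_mul_le_iff₀ hN']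
    have h2 := hUi.trans (mul_le_mul_of_nonneg_left (hbnd N) hN'.le)
    have h3 : (N : ℝ) * (K * (2 * S.card) / N) = K * (2 * S.card) := by field_simp
    rw [mul_add, h3]
    linarith
  linarith

end proc4
/-- **Theorem 2.** The second moment of `μ_f` equals
`2 ∫_{[-π,π]²} f(x,y) dx dy`. -/
theorem statement2 {Ω : Type} [MeasurableSpace Ω] (P : Measure Ω)
    [IsProbabilityMeasure P] (X : ℤ → ℤ → Ω → ℝ) (ν νd : Measure (ℝ × ℝ))
    (f : ℝ × ℝ → ℝ) (hX : StatGauss P X) (hν : SpectralDecomp P X ν νd f)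
    (μf : Measure ℝ) (hμf : IsProbabilityMeasure μf)
    (hconv : ESDTendstoInProb P (scaledW X) μf) :
    ∫⁻ x, ENNReal.ofReal (x ^ 2) ∂μf
      = 2 * ∫⁻ q in specBox, ENNReal.ofReal (f q) := by
  have := hν.finite
  have hdec : ν = mac f + νd := hν.decomp
  have f1 : IsFiniteMeasure (mac f) :=
    isFiniteMeasure_of_le ν (by rw [hdec]; exact Measure.le_add_right le_rfl)
  have hmac : mac f Set.univ = ∫⁻ q in specBox, ENNReal.ofReal (f q) := by
    rw [mac, withDensity_apply _ MeasurableSet.univ, Measure.restrict_univ]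
  have hof : ∀ K : ℝ, 0 ≤ K → ∫⁻ x, ENNReal.ofReal (min (x ^ 2) K) ∂μf
      = ENNReal.ofReal (∫ x : ℝ, min (x ^ 2) K ∂μf) := fun K hK =>
    (ofReal_integral_eq_lintegral_ofReal (gK_int μf hK)
      (Eventually.of_forall fun x => le_min (sq_nonneg x) hK)).symm
  apply le_antisymm
  · have hs : ∀ x : ℝ, ENNReal.ofReal (x ^ 2) = ⨆ n : ℕ, ENNReal.ofReal (min (x ^ 2) n) := by
      intro x
      apply le_antisymm
      · obtain ⟨n, hn⟩ := exists_nat_ge (x ^ 2)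
        refine le_iSup_of_le n ?_
        rw [min_eq_left hn]
      · exact iSup_le fun n => ENNReal.ofReal_le_ofReal (min_le_left _ _)
    simp only [hs]
    rw [lintegral_iSup (fun n => (gK_cont n).measurable.ennreal_ofReal)]
    · refine iSup_le fun n => ?_
      rw [hof n (Nat.cast_nonneg n), ← hmac]
      refine (ENNReal.ofReal_le_ofReal (upper_lim hX hν hconv (Nat.cast_nonneg n))).trans
        (le_of_eq ?_)
      rw [ENNReal.ofReal_mul (by norm_num), Measure.real, ENNReal.ofReal_toReal (measure_ne_top _ _)]
      simp
    · intro a b hab x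
      exact ENNReal.ofReal_le_ofReal (min_le_min_left _ (by exact_mod_cast hab))
  · have hs : ∀ q, ENNReal.ofReal (f q) = ⨆ n : ℕ, ENNReal.ofReal (min (f q) (n + 1)) := by
      intro q
      apply le_antisymm
      · obtain ⟨n, hn⟩ := exists_nat_ge (f q)
        refine le_iSup_of_le n ?_
        rw [min_eq_left (by linarith)]
      · exact iSup_le fun n => ENNReal.ofReal_le_ofReal (min_le_left _ _)
    simp only [hs]
    rw [lintegral_iSup (fun n => (hν.f_meas.min measurable_const).ennreal_ofReal)]
    swap
    · intro a b hab q
      refine ENNReal.ofReal_le_ofReal (min_le_min_left _ ?_)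
      have : (a : ℝ) ≤ b := by exact_mod_cast hab
      linarith
    rw [ENNReal.mul_iSup]
    refine iSup_le fun n => ?_
    set M : ℝ := n + 1 with hM
    have hM0 : 0 < M := by positivity
    have hmf : IsFiniteMeasure (mM f M) := isFiniteMeasure_of_le ν (mM_le hν M)
    have hmM : mM f M Set.univ = ∫⁻ q in specBox, ENNReal.ofReal (min (f q) M) := by
      rw [mM, withDensity_apply _ MeasurableSet.univ, Measure.restrict_univ]
    rw [← hmM]
    by_cases htop : ∫⁻ x, ENNReal.ofReal (x ^ 2) ∂μf = ⊤
    · rw [htop]; exact le_top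
    set I := (∫⁻ x, ENNReal.ofReal (x ^ 2) ∂μf).toReal with hI
    have hKI : ∀ K : ℝ, 0 ≤ K → ∫ x : ℝ, min (x ^ 2) K ∂μf ≤ I := by
      intro K hK
      rw [hI, ← ENNReal.ofReal_le_iff_le_toReal htop, ← hof K hK]
      exact lintegral_mono fun x => ENNReal.ofReal_le_ofReal (min_le_left _ _)
    have key : 2 * (mM f M).real Set.univ ≤ I := by
      refine le_of_forall_pos_le_add fun δ hδ => ?_
      set a : ℝ := 3 * (16 * π ^ 2 * M) ^ 2 with ha
      set b : ℝ := 4 * ν.real Set.univ with hb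
      have ha0 : 0 ≤ a := by positivity
      have hb0 : 0 ≤ b := by positivity
      set t : ℝ := δ / (a + b + 1) with ht
      have ht0 : 0 < t := by positivity
      have h1 := lower_lim hX hν hconv hM0 ht0 ht0 (le_refl (1 / (4 * t * t ^ 2)))
      have h2 := hKI (1 / (4 * t * t ^ 2)) (by positivity)
      have h3 : t * (a + b + 1) = δ := by rw [ht]; field_simp
      nlinarith
    have h4 := ENNReal.ofReal_le_ofReal key
    rw [ENNReal.ofReal_mul (by norm_num), Measure.real, ENNReal.ofReal_toReal (measure_ne_top _ _),
      hI, ENNReal.ofReal_toReal htop] at h4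
    simpa using h4

end
end
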